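/- There exists a constant c_ρ > 0 depending only on ρ (and an absolute constant c for the case ρ = 1) such that the following Berry–Esseen bound under the conjugate measure holds. For each n, let the martingale differences (X_i)_{1≤i≤n} satisfy conditions (A1) and (A4). Set ξ_i = X_i/B_n, ζ_i(λ) = λ ξ_i − λ² ξ_i²/2, Z_n(λ) = ∏_{i=1}^n e^{ζ_i(λ)} / E[e^{ζ_i(λ)} | 𝓕_{i-1}], and let P_λ be the probability measure on (Ω, 𝓕) with density Z_n(λ) with respect to P. Set b_i(λ) = E[ζ_i(λ) e^{ζ_i(λ)} | 𝓕_{i-1}] / E[e^{ζ_i(λ)} | 𝓕_{i-1}], η_i(λ) = ζ_i(λ) − b_i(λ), and Y_n(λ) = Σ_{i=1}^n η_i(λ), with the convention Y_n(0)/0 = Σ_{i=1}^n ξ_i. Then for any sequence (λ_n) with λ_n ≥ 0 and λ_n γ_n → 0 (i.e. λ_n = o(γ_n^{-1})): [i] if ρ ∈ (0, 1), for all sufficiently large n, sup_{x ∈ ℝ} | P_{λ_n}( Y_n(λ_n)/λ_n ≤ x ) − Φ(x) | ≤ c_ρ ( λ_n^ρ γ_n^ρ + γ_n^ρ + δ_n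 ); [ii] if ρ = 1, for all sufficiently large n, sup_{x ∈ ℝ} | P_{λ_n}( Y_n(λ_n)/λ_n ≤ x ) − Φ(x) | ≤ c ( λ_n γ_n + γ_n |ln γ_n| + δ_n ). -/

import Mathlib

open MeasureTheory Filter
open scoped Topology ENNReal

noncomputable def stdNormalCDF (x : ℝ) : ℝ :=
  (Real.sqrt (2 * Real.pi))⁻¹ * ∫ t in Set.Iic x, Real.exp (-(t ^ 2) / 2)

/-- A finite sequence of square-integrable martingale differences
`X 1, ..., X n` adapted to a filtration `F 0 ⊆ F 1 ⊆ ... ⊆ F n`, with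
`F 0` trivial, `E[X i | F (i-1)] = 0` and `0 < E[(X i)^2] < ∞`. -/
structure MDS (Ω : Type) [mΩ : MeasurableSpace Ω] (P : Measure Ω) where
  n : ℕ
  npos : 0 < n
  F : ℕ → MeasurableSpace Ω
  F_mono : Monotone F
  F_le : ∀ i, F i ≤ mΩ
  F_zero : F 0 = ⊥
  X : ℕ → Ω → ℝ
  meas : ∀ i, 1 ≤ i → i ≤ n → StronglyMeasurable[F i] (X i)
  sq_int : ∀ i, 1 ≤ i → i ≤ n → Integrable (fun ω => (X i ω) ^ 2) P
  mean_zero : ∀ i, 1 ≤ i → i ≤ n → P[X i|F (i - 1)] =ᵐ[P] 0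
  var_pos : ∀ i, 1 ≤ i → i ≤ n → 0 < ∫ ω, (X i ω) ^ 2 ∂P

namespace MDS

variable {Ω : Type} [mΩ : MeasurableSpace Ω] {P : Measure Ω}

/-- `S_n = ∑_{i=1}^n X_i`. -/
noncomputable def S (A : MDS Ω P) : Ω → ℝ := fun ω => ∑ i ∈ Finset.Icc 1 A.n, A.X i ω

/-- `B_n² = ∑_{i=1}^n E[X_i²]`. -/
noncomputable def Bsq (A : MDS Ω P) : ℝ := ∑ i ∈ Finset.Icc 1 A.n, ∫ ω, (A.X i ω) ^ 2 ∂P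

/-- `[S]_n = ∑_{i=1}^n X_i²`. -/
noncomputable def QV (A : MDS Ω P) : Ω → ℝ := fun ω => ∑ i ∈ Finset.Icc 1 A.n, (A.X i ω) ^ 2

/-- `⟨S⟩_n = ∑_{i=1}^n E[X_i² | F_{i-1}]`. -/
noncomputable def CV (A : MDS Ω P) : Ω → ℝ :=
  fun ω => ∑ i ∈ Finset.Icc 1 A.n, (P[fun ω' => (A.X i ω') ^ 2|A.F (i - 1)]) ω

/-- `W_n = S_n / √[S]_n`. -/
noncomputable def W (A : MDS Ω P) : Ω → ℝ := fun ω => A.S ω / Real.sqrt (A.QV ω)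

/-- Condition (A1): `|⟨S⟩_n − B_n²| ≤ δ² B_n²` a.s., with `δ ∈ [0, 1/4]`. -/
def CondA1 (A : MDS Ω P) (δ : ℝ) : Prop :=
  0 ≤ δ ∧ δ ≤ 1 / 4 ∧ ∀ᵐ ω ∂P, |A.CV ω - A.Bsq| ≤ δ ^ 2 * A.Bsq

/-- Condition (A2): `∑_{i=1}^n E[|X_i|^{2+ρ} | F_{i-1}] ≤ ε^ρ B_n^{2+ρ}` a.s.,
with `ε ∈ (0, 1/4]`. -/
def CondA2 (A : MDS Ω P) (ρ ε : ℝ) : Prop :=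
  0 < ε ∧ ε ≤ 1 / 4 ∧
    (∀ i, 1 ≤ i → i ≤ A.n → Integrable (fun ω => |A.X i ω| ^ (2 + ρ)) P) ∧
    ∀ᵐ ω ∂P,
      ∑ i ∈ Finset.Icc 1 A.n, (P[fun ω' => |A.X i ω'| ^ (2 + ρ)|A.F (i - 1)]) ω ≤
        ε ^ ρ * A.Bsq ^ ((2 + ρ) / 2)

/-- Condition (A3): `E[X_i² | F_{i-1}] ≤ κ² B_n²` a.s. for each `i`, with `κ ∈ (0, 1/4]`. -/
def CondA3 (A : MDS Ω P) (κ : ℝ) : Prop :=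
  0 < κ ∧ κ ≤ 1 / 4 ∧
    ∀ i, 1 ≤ i → i ≤ A.n →
      ∀ᵐ ω ∂P, (P[fun ω' => (A.X i ω') ^ 2|A.F (i - 1)]) ω ≤ κ ^ 2 * A.Bsq

/-- Condition (A4): `E[|X_i|^{2+ρ} | F_{i-1}] ≤ (γ B_n)^ρ E[X_i² | F_{i-1}]` a.s.
for each `i`, with `γ ∈ (0, 1/4]`. -/
def CondA4 (A : MDS Ω P) (ρ γ : ℝ) : Prop :=
  0 < γ ∧ γ ≤ 1 / 4 ∧
    (∀ i, 1 ≤ i → i ≤ A.n → Integrable (fun ω => |A.X i ω| ^ (2 + ρ)) P) ∧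
    ∀ i, 1 ≤ i → i ≤ A.n →
      ∀ᵐ ω ∂P,
        (P[fun ω' => |A.X i ω'| ^ (2 + ρ)|A.F (i - 1)]) ω ≤
          (γ * Real.sqrt A.Bsq) ^ ρ * (P[fun ω' => (A.X i ω') ^ 2|A.F (i - 1)]) ω

end MDS


namespace MDS

variable {Ω : Type} [mΩ : MeasurableSpace Ω] {P : Measure Ω}

/-- `ξ_i = X_i / B_n`. -/
noncomputable def xi (A : MDS Ω P) (i : ℕ) : Ω → ℝ := fun ω => A.X i ω / Real.sqrt A.Bsq

/-- `ζ_i(λ) = λ ξ_i − λ² ξ_i² / 2`. -/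
noncomputable def zetaFn (A : MDS Ω P) (lam : ℝ) (i : ℕ) : Ω → ℝ :=
  fun ω => lam * A.xi i ω - lam ^ 2 * (A.xi i ω) ^ 2 / 2

/-- `b_i(λ) = E[ζ_i(λ) e^{ζ_i(λ)} | F_{i-1}] / E[e^{ζ_i(λ)} | F_{i-1}]`. -/
noncomputable def bCoef (A : MDS Ω P) (lam : ℝ) (i : ℕ) : Ω → ℝ := fun ω =>
  (P[fun ω' => A.zetaFn lam i ω' * Real.exp (A.zetaFn lam i ω')|A.F (i - 1)]) ω /
    (P[fun ω' => Real.exp (A.zetaFn lam i ω')|A.F (i - 1)]) ω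

/-- The drift process `B_n(λ) = ∑_{i=1}^n b_i(λ)`. -/
noncomputable def drift (A : MDS Ω P) (lam : ℝ) : Ω → ℝ :=
  fun ω => ∑ i ∈ Finset.Icc 1 A.n, A.bCoef lam i ω

/-- `⟨M⟩_n = ∑_{i=1}^n E[ξ_i² | F_{i-1}]`. -/
noncomputable def McondVar (A : MDS Ω P) : Ω → ℝ :=
  fun ω => ∑ i ∈ Finset.Icc 1 A.n, (P[fun ω' => (A.xi i ω') ^ 2|A.F (i - 1)]) ω

end MDS

namespace MDS

variable {Ω : Type} [mΩ : MeasurableSpace Ω] {P : Measure Ω}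

/-- The exponential multiplicative martingale
`Z_n(λ) = ∏_{i=1}^n e^{ζ_i(λ)} / E[e^{ζ_i(λ)} | F_{i-1}]`. -/
noncomputable def Zmult (A : MDS Ω P) (lam : ℝ) : Ω → ℝ := fun ω =>
  ∏ i ∈ Finset.Icc 1 A.n,
    Real.exp (A.zetaFn lam i ω) / (P[fun ω' => Real.exp (A.zetaFn lam i ω')|A.F (i - 1)]) ω

/-- The conjugate probability measure `dP_λ = Z_n(λ) dP`. -/
noncomputable def Pconj (A : MDS Ω P) (lam : ℝ) : Measure Ω :=
  P.withDensity fun ω => ENNReal.ofReal (A.Zmult lam ω)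

/-- `Y_n(λ)/λ = (∑_{i=1}^n (ζ_i(λ) − b_i(λ)))/λ`, with the convention
`Y_n(0)/0 = ∑_{i=1}^n ξ_i`. -/
noncomputable def Ynorm (A : MDS Ω P) (lam : ℝ) : Ω → ℝ :=
  if lam = 0 then fun ω => ∑ i ∈ Finset.Icc 1 A.n, A.xi i ω
  else fun ω => (∑ i ∈ Finset.Icc 1 A.n, (A.zetaFn lam i ω - A.bCoef lam i ω)) / lam

end MDS

section GaussCalc

/-- standard normal density -/
noncomputable def bePhi (z : ℝ) : ℝ := (Real.sqrt (2 * Real.pi))⁻¹ * Real.exp (-(z ^ 2) / 2)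

lemma bePhi_pos (z : ℝ) : 0 < bePhi z := by
  unfold bePhi; positivity

lemma bePhi_eq (z : ℝ) : bePhi z = ProbabilityTheory.gaussianPDFReal 0 1 z := by
  simp [bePhi, ProbabilityTheory.gaussianPDFReal]

lemma be_sqrt_two_pi : 1 ≤ Real.sqrt (2 * Real.pi) := by
  rw [Real.one_le_sqrt]
  nlinarith [Real.pi_gt_three]

lemma bePhi_le (z : ℝ) : bePhi z ≤ 4096 / (1 + z ^ 2) ^ 4 := by
  have h1 : (1 + z ^ 2 / 8) ^ 4 ≤ Real.exp (z ^ 2 / 2) := by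
    have h : 1 + z ^ 2 / 8 ≤ Real.exp (z ^ 2 / 8) := by
      have := Real.add_one_le_exp (z ^ 2 / 8); linarith
    calc (1 + z ^ 2 / 8) ^ 4 ≤ (Real.exp (z ^ 2 / 8)) ^ 4 := by gcongr
      _ = Real.exp (z ^ 2 / 2) := by rw [← Real.exp_nat_mul]; congr 1; push_cast; ring
  have h2 : (1 + z ^ 2) ^ 4 ≤ 4096 * Real.exp (z ^ 2 / 2) := by
    calc (1 + z ^ 2) ^ 4 ≤ (8 * (1 + z ^ 2 / 8)) ^ 4 := by
          gcongr; nlinarith [sq_nonneg z]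
      _ = 4096 * (1 + z ^ 2 / 8) ^ 4 := by ring
      _ ≤ _ := by gcongr
  have h3 : bePhi z ≤ Real.exp (-(z ^ 2) / 2) := by
    unfold bePhi
    have := inv_le_one_of_one_le₀ be_sqrt_two_pi
    have := Real.exp_pos (-(z ^ 2) / 2)
    nlinarith
  refine h3.trans ?_
  rw [show -(z ^ 2) / 2 = -(z ^ 2 / 2) by ring, Real.exp_neg, le_div_iff₀ (by positivity),
    inv_mul_le_iff₀ (Real.exp_pos _)]
  linarith

lemma bePhi_le_one (z : ℝ) : bePhi z ≤ 1 := by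
  unfold bePhi
  have := inv_le_one_of_one_le₀ be_sqrt_two_pi
  have h0 : 0 ≤ (Real.sqrt (2 * Real.pi))⁻¹ := by positivity
  have h2 := Real.exp_pos (-(z ^ 2) / 2)
  have : Real.exp (-(z ^ 2) / 2) ≤ 1 := Real.exp_le_one_iff.2 (by nlinarith [sq_nonneg z])
  nlinarith

lemma bePhi_hasDerivAt (z : ℝ) : HasDerivAt bePhi (-z * bePhi z) z := by
  have h : HasDerivAt (fun z : ℝ => -(z ^ 2) / 2) (-z) z := by
    have := ((hasDerivAt_pow 2 z).neg).div_const 2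
    refine this.congr_deriv ?_
    norm_num; ring
  have := (h.exp).const_mul ((Real.sqrt (2 * Real.pi))⁻¹)
  refine HasDerivAt.congr_deriv (f := bePhi) this ?_
  unfold bePhi; ring

lemma bePhi_continuous : Continuous bePhi := by
  unfold bePhi; fun_prop

lemma bePhi_integrable : Integrable bePhi := by
  have := ProbabilityTheory.integrable_gaussianPDFReal 0 1
  exact this.congr (Eventually.of_forall fun z => (bePhi_eq z).symm)

lemma stdNormalCDF_eq_integral (x : ℝ) : stdNormalCDF x = ∫ t in Set.Iic x, bePhi t := by
  unfold stdNormalCDF bePhi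
  rw [← integral_const_mul]

lemma stdNormalCDF_eq_gaussian (x : ℝ) :
    stdNormalCDF x = (ProbabilityTheory.gaussianReal 0 1).real (Set.Iic x) := by
  rw [stdNormalCDF_eq_integral, measureReal_def,
    ProbabilityTheory.gaussianReal_apply_eq_integral _ (by simp), ENNReal.toReal_ofReal]
  · simp only [bePhi_eq]
  · exact setIntegral_nonneg measurableSet_Iic
      fun t _ => ProbabilityTheory.gaussianPDFReal_nonneg _ _ _

lemma stdNormalCDF_nonneg (x : ℝ) : 0 ≤ stdNormalCDF x := by
  rw [stdNormalCDF_eq_gaussian]; positivity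

lemma stdNormalCDF_le_one (x : ℝ) : stdNormalCDF x ≤ 1 := by
  rw [stdNormalCDF_eq_gaussian]; exact measureReal_le_one

lemma stdNormalCDF_mono : Monotone stdNormalCDF := by
  intro x y h
  rw [stdNormalCDF_eq_gaussian, stdNormalCDF_eq_gaussian]
  exact measureReal_mono (Set.Iic_subset_Iic.2 h)

lemma stdNormalCDF_hasDerivAt (x : ℝ) : HasDerivAt stdNormalCDF (bePhi x) x := by
  have h : stdNormalCDF = fun y => (∫ t in Set.Iic (0:ℝ), bePhi t) + ∫ t in (0:ℝ)..y, bePhi t := by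
    ext y
    rw [stdNormalCDF_eq_integral, ← intervalIntegral.integral_Iic_sub_Iic
      bePhi_integrable.integrableOn bePhi_integrable.integrableOn]
    ring
  rw [h]
  exact (intervalIntegral.integral_hasDerivAt_right
    (bePhi_continuous.intervalIntegrable _ _)
    (bePhi_continuous.stronglyMeasurableAtFilter _ _) bePhi_continuous.continuousAt).const_add _

lemma stdNormalCDF_continuous : Continuous stdNormalCDF :=
  continuous_iff_continuousAt.2 fun x => (stdNormalCDF_hasDerivAt x).continuousAt

lemma be_mvt {f f' : ℝ → ℝ} {M r y : ℝ} (hf : ∀ z, HasDerivAt f (f' z) z)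
    (hM : ∀ z, |z - y| ≤ r → |f' z| ≤ M) :
    ∀ z, |z - y| ≤ r → |f z - f y| ≤ M * |z - y| := by
  intro z hz
  have hr : 0 ≤ r := (abs_nonneg _).trans hz
  have := (convex_closedBall y r).norm_image_sub_le_of_norm_hasDerivWithin_le (f := f) (f' := f')
    (C := M) (x := y) (y := z) (fun t _ => (hf t).hasDerivWithinAt)
    (fun t ht => hM t (by simpa [Real.dist_eq] using ht)) (by simpa using hr)
    (by simpa [Real.dist_eq] using hz)
  simpa [Real.norm_eq_abs] using this

lemma stdNormalCDF_lip (x y : ℝ) : |stdNormalCDF x - stdNormalCDF y| ≤ |x - y| := by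
  have := be_mvt (M := 1) (r := |x - y|) (y := y) stdNormalCDF_hasDerivAt
    (fun z _ => by rw [abs_of_pos (bePhi_pos z)]; exact bePhi_le_one z) x le_rfl
  linarith

lemma be_taylor3 {f f1 f2 f3 : ℝ → ℝ} {M r y : ℝ} (hf : ∀ z, HasDerivAt f (f1 z) z)
    (hf1 : ∀ z, HasDerivAt f1 (f2 z) z) (hf2 : ∀ z, HasDerivAt f2 (f3 z) z)
    (hr : 0 ≤ r)
    (hM : ∀ z, |z - y| ≤ r → |f3 z| ≤ M) :
    ∀ z, |z - y| ≤ r → |f z - f y - (z - y) * f1 y - (z - y) ^ 2 / 2 * f2 y| ≤ M * r ^ 3 := by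
  have hM0 : 0 ≤ M := (abs_nonneg _).trans (hM y (by simpa using hr))
  have h2 : ∀ z, |z - y| ≤ r → |f2 z - f2 y| ≤ M * r := fun z hz =>
    (be_mvt hf2 hM z hz).trans (by gcongr)
  have h1 : ∀ z, |z - y| ≤ r → |f1 z - f1 y - (z - y) * f2 y| ≤ M * r * r := by
    intro z hz
    have := be_mvt (f := fun z => f1 z - (z - y) * f2 y) (f' := fun z => f2 z - f2 y)
      (M := M * r) (r := r) (y := y)
      (fun z => by
        have := (hf1 z).sub (((hasDerivAt_id z).sub_const y).mul_const (f2 y))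
        exact HasDerivAt.congr_deriv this (by simp)) (fun z hz => h2 z hz) z hz
    simp only [sub_self, zero_mul, sub_zero] at this
    calc _ = |f1 z - (z - y) * f2 y - f1 y| := by congr 1; ring
      _ ≤ _ := this
      _ ≤ _ := by gcongr
  intro z hz
  have := be_mvt (f := fun z => f z - (z - y) * f1 y - (z - y) ^ 2 / 2 * f2 y)
      (f' := fun z => f1 z - f1 y - (z - y) * f2 y)
      (M := M * r * r) (r := r) (y := y)
      (fun z => by
        have h := ((hf z).sub (((hasDerivAt_id z).sub_const y).mul_const (f1 y))).sub
          (((((hasDerivAt_id z).sub_const y).pow 2).div_const 2).mul_const (f2 y))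
        refine (h.congr_deriv ?_)
        simp) (fun z hz => h1 z hz) z hz
  simp only [sub_self, zero_mul, sub_zero] at this
  calc _ = |f z - (z - y) * f1 y - (z - y) ^ 2 / 2 * f2 y - (f y - 0 ^ 2 / 2 * f2 y)| := by
        congr 1; ring
    _ ≤ _ := this
    _ ≤ M * r * r * r := by gcongr
    _ = _ := by ring

end GaussCalc

section Taylor

/-- derivative of the density -/
noncomputable def bePhi' (z : ℝ) : ℝ := -z * bePhi z

lemma bePhi'_hasDerivAt (z : ℝ) : HasDerivAt bePhi' ((z ^ 2 - 1) * bePhi z) z := by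
  have := ((hasDerivAt_id z).neg).mul (bePhi_hasDerivAt z)
  refine HasDerivAt.congr_deriv (f := bePhi') this ?_
  simp; ring

lemma bePhi'_continuous : Continuous bePhi' := by
  unfold bePhi'; exact continuous_neg.mul bePhi_continuous

lemma be_abs_le (z : ℝ) : |z| ≤ 1 + z ^ 2 := by
  rw [abs_le]; constructor <;> nlinarith [sq_nonneg (z - 1), sq_nonneg (z + 1)]

lemma bePhi'_le (z : ℝ) : |bePhi' z| ≤ 4096 / (1 + z ^ 2) ^ 3 := by
  unfold bePhi'
  rw [abs_mul, abs_neg, abs_of_pos (bePhi_pos z)]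
  calc |z| * bePhi z ≤ (1 + z ^ 2) * (4096 / (1 + z ^ 2) ^ 4) :=
        mul_le_mul (be_abs_le z) (bePhi_le z) (bePhi_pos z).le (by positivity)
    _ = _ := by field_simp

lemma bePhi''_le (z : ℝ) : |(z ^ 2 - 1) * bePhi z| ≤ 4096 / (1 + z ^ 2) ^ 3 := by
  rw [abs_mul, abs_of_pos (bePhi_pos z)]
  calc |z ^ 2 - 1| * bePhi z ≤ (1 + z ^ 2) * (4096 / (1 + z ^ 2) ^ 4) :=
        mul_le_mul (by rw [abs_le]; constructor <;> nlinarith [sq_nonneg z]) (bePhi_le z)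
          (bePhi_pos z).le (by positivity)
    _ = _ := by field_simp

lemma be_sqrt_le_four {t : ℝ} (ht : 1 / 16 < t) : Real.sqrt t ≤ 4 * t := by
  rw [Real.sqrt_le_left (by linarith)]; nlinarith

lemma be_base (y u ρ : ℝ) (h0 : 0 ≤ ρ) (h1 : ρ ≤ 1) :
    |stdNormalCDF (y - u) - stdNormalCDF y + u * bePhi y - u ^ 2 / 2 * bePhi' y| ≤
      200000 * (u ^ 2 / (1 + y ^ 2)) ^ (1 + ρ / 2) := by
  set q := 1 + y ^ 2 with hq
  have hq1 : 1 ≤ q := by nlinarith [sq_nonneg y]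
  have hq0 : 0 < q := by linarith
  set t := u ^ 2 / q with ht
  have ht0 : 0 ≤ t := by positivity
  have hu2 : u ^ 2 = t * q := by rw [ht]; field_simp
  have hu : |u| = Real.sqrt t * Real.sqrt q := by
    rw [← Real.sqrt_mul ht0, ← hu2, Real.sqrt_sq_eq_abs]
  have hsq : Real.sqrt q ≤ q := by
    rw [Real.sqrt_le_left hq0.le]; nlinarith
  have hqq : Real.sqrt q * Real.sqrt q = q := Real.mul_self_sqrt hq0.le
  have htt : Real.sqrt t * Real.sqrt t = t := Real.mul_self_sqrt ht0
  by_cases hc : t ≤ 1 / 16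
  · have hM : ∀ z, |z - y| ≤ |u| → |(z ^ 2 - 1) * bePhi z| ≤ 65536 / q ^ 2 := by
      intro z hz
      refine (bePhi''_le z).trans ?_
      have hz2 : (z - y) ^ 2 ≤ q / 16 := by
        have : (z - y) ^ 2 ≤ u ^ 2 := sq_le_sq.2 hz
        nlinarith
      have hqz : q ≤ 4 * (1 + z ^ 2) := by
        nlinarith [sq_nonneg (y - 2 * z), sq_nonneg (2 * y - 3 * z)]
      rw [div_le_div_iff₀ (by positivity) (by positivity)]
      have h3 : q ^ 2 ≤ (4 * (1 + z ^ 2)) ^ 2 := by gcongr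
      have h4 : (1 + z ^ 2) ^ 2 ≤ (1 + z ^ 2) ^ 3 :=
        pow_le_pow_right₀ (by nlinarith [sq_nonneg z]) (by norm_num)
      nlinarith
    have := be_taylor3 (f3 := fun z => (z ^ 2 - 1) * bePhi z) stdNormalCDF_hasDerivAt
      (f1 := bePhi) (f2 := bePhi') bePhi_hasDerivAt
      bePhi'_hasDerivAt (abs_nonneg u) hM (y - u) (by simp)
    have e : stdNormalCDF (y - u) - stdNormalCDF y + u * bePhi y - u ^ 2 / 2 * bePhi' y =
      stdNormalCDF (y - u) - stdNormalCDF y - (y - u - y) * bePhi y -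
        (y - u - y) ^ 2 / 2 * bePhi' y := by ring
    rw [e]
    refine this.trans ?_
    have e2 : |u| ^ 3 = (t * Real.sqrt t) * (q * Real.sqrt q) := by
      rw [hu]
      calc (Real.sqrt t * Real.sqrt q) ^ 3 = (Real.sqrt t * Real.sqrt t) * Real.sqrt t *
            ((Real.sqrt q * Real.sqrt q) * Real.sqrt q) := by ring
        _ = _ := by rw [htt, hqq]
    have e3 : t * Real.sqrt t ≤ t ^ (1 + ρ / 2) := by
      by_cases ht00 : t = 0
      · rw [ht00]; simp [Real.zero_rpow (by positivity : 1 + ρ / 2 ≠ 0)]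
      have htp : 0 < t := lt_of_le_of_ne ht0 (Ne.symm ht00)
      calc t * Real.sqrt t = t ^ (1 + 1 / 2 : ℝ) := by
            rw [Real.rpow_add htp, Real.rpow_one, Real.sqrt_eq_rpow]
        _ ≤ _ := Real.rpow_le_rpow_of_exponent_ge htp (by linarith) (by linarith)
    have htnn : 0 ≤ t * Real.sqrt t := by positivity
    calc 65536 / q ^ 2 * |u| ^ 3 ≤ 65536 / q ^ 2 * ((t * Real.sqrt t) * (q * q)) := by
          rw [e2]; gcongr
      _ = 65536 * (t * Real.sqrt t) := by field_simp
      _ ≤ _ := by nlinarith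
  · push Not at hc
    have hst := be_sqrt_le_four hc
    have e3 : t ≤ 4 * t ^ (1 + ρ / 2) := by
      have htp : 0 < t := by linarith
      rw [Real.rpow_add htp, Real.rpow_one]
      have h : (1 / 16 : ℝ) ^ (1 / 2 : ℝ) ≤ t ^ (ρ / 2) := by
        calc (1 / 16 : ℝ) ^ (1 / 2 : ℝ) ≤ (1 / 16 : ℝ) ^ (ρ / 2) :=
              Real.rpow_le_rpow_of_exponent_ge (by norm_num) (by norm_num) (by linarith)
          _ ≤ _ := Real.rpow_le_rpow (by norm_num) hc.le (by linarith)
      have h' : (1 / 16 : ℝ) ^ (1 / 2 : ℝ) = 1 / 4 := by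
        rw [← Real.sqrt_eq_rpow, show (1 / 16 : ℝ) = (1 / 4) ^ 2 by norm_num,
          Real.sqrt_sq (by norm_num)]
      nlinarith
    have hA : |stdNormalCDF (y - u) - stdNormalCDF y| ≤ 16 * t := by
      have := stdNormalCDF_nonneg y
      have := stdNormalCDF_nonneg (y - u)
      have := stdNormalCDF_le_one y
      have := stdNormalCDF_le_one (y - u)
      rw [abs_le]; constructor <;> linarith
    have hB : |u * bePhi y| ≤ 16384 * t := by
      rw [abs_mul, abs_of_pos (bePhi_pos y), hu]
      have h4 : q * q ≤ q ^ 4 := by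
        calc q * q = q ^ 2 := by ring
          _ ≤ q ^ 4 := pow_le_pow_right₀ hq1 (by norm_num)
      calc Real.sqrt t * Real.sqrt q * bePhi y ≤ (4 * t) * q * (4096 / q ^ 4) := by
            have := bePhi_le y
            gcongr
            exact (bePhi_pos y).le
        _ ≤ (4 * t) * q * (4096 / (q * 1)) := by
            gcongr; nlinarith
        _ = _ := by field_simp; norm_num
    have hC : |u ^ 2 / 2 * bePhi' y| ≤ 2048 * t := by
      rw [abs_mul, abs_of_nonneg (by positivity), hu2]
      calc t * q / 2 * |bePhi' y| ≤ t * q / 2 * (4096 / q ^ 3) := by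
            gcongr; exact bePhi'_le y
        _ ≤ t * q / 2 * (4096 / q ^ 1) := by
            gcongr
            norm_num
        _ = _ := by field_simp; norm_num
    calc _ ≤ |stdNormalCDF (y - u) - stdNormalCDF y| + |u * bePhi y| + |u ^ 2 / 2 * bePhi' y| := by
          refine (abs_sub _ _).trans ?_
          gcongr
          exact abs_add_le _ _
      _ ≤ 16 * t + 16384 * t + 2048 * t := by gcongr
      _ ≤ _ := by nlinarith

lemma be_L1 (y u ρ s : ℝ) (hs : 0 < s) (h0 : 0 ≤ ρ) (h1 : ρ ≤ 1) :
    |stdNormalCDF ((y - u) / √s) - stdNormalCDF (y / √s) + u * (bePhi (y / √s) / √s) -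
      u ^ 2 * (bePhi' (y / √s) / (2 * s))| ≤
      200000 * (|u| ^ (2 + ρ) * (s + y ^ 2) ^ (-(1 + ρ / 2))) := by
  have hss : √s * √s = s := Real.mul_self_sqrt hs.le
  have hs0 : 0 < √s := Real.sqrt_pos.2 hs
  have := be_base (y / √s) (u / √s) ρ h0 h1
  have e1 : u ^ 2 / s / (1 + y ^ 2 / s) = u ^ 2 / (s + y ^ 2) := by
    field_simp
  rw [← sub_div, div_pow, div_pow, Real.sq_sqrt hs.le, e1] at this
  have e2 : (u ^ 2 / (s + y ^ 2)) ^ (1 + ρ / 2) =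
      |u| ^ (2 + ρ) * (s + y ^ 2) ^ (-(1 + ρ / 2)) := by
    rw [Real.div_rpow (by positivity) (by positivity), Real.rpow_neg (by positivity), div_eq_mul_inv,
      ← sq_abs, ← Real.rpow_natCast, ← Real.rpow_mul (abs_nonneg u)]
    congr 2; push_cast; ring
  rw [e2] at this
  convert this using 2
  field_simp

lemma be_L2 (y w ρ s : ℝ) (hs : 0 < s) (hw0 : 0 ≤ w) (hws : w ≤ s) (h0 : 0 ≤ ρ) (h1 : ρ ≤ 1) :
    |stdNormalCDF (y / √(s + w)) - stdNormalCDF (y / √s) - w * (bePhi' (y / √s) / (2 * s))| ≤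
      200000 * (w ^ (1 + ρ / 2) * (s + y ^ 2) ^ (-(1 + ρ / 2))) := by
  set f : ℝ → ℝ := fun σ => stdNormalCDF (y / √σ)
  set f1 : ℝ → ℝ := fun σ => bePhi' (y / √σ) / (2 * σ)
  set f2 : ℝ → ℝ := fun σ => (y / √σ) * bePhi (y / √σ) * (3 - (y / √σ) ^ 2) / (4 * σ ^ 2)
  have hz : ∀ σ, 0 < σ → HasDerivAt (fun σ : ℝ => y / √σ) (-(y / √σ) / (2 * σ)) σ := by
    intro σ hσ
    have h := ((hasDerivAt_const σ y).div (Real.hasDerivAt_sqrt hσ.ne') (Real.sqrt_pos.2 hσ).ne')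
    refine HasDerivAt.congr_deriv h ?_
    have h1 : 0 < √σ := Real.sqrt_pos.2 hσ
    have h2 : √σ ^ 2 = σ := Real.sq_sqrt hσ.le
    rw [h2]; field_simp; simp
  have hf : ∀ σ, 0 < σ → HasDerivAt f (f1 σ) σ := by
    intro σ hσ
    have h := (stdNormalCDF_hasDerivAt (y / √σ)).comp σ (hz σ hσ)
    refine HasDerivAt.congr_deriv (f := f) h ?_
    simp only [f1, bePhi']; ring
  have hf1 : ∀ σ, 0 < σ → HasDerivAt f1 (f2 σ) σ := by
    intro σ hσ
    have h := ((bePhi'_hasDerivAt (y / √σ)).comp σ (hz σ hσ)).div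
      ((hasDerivAt_id σ).const_mul 2) (by simp; exact hσ.ne')
    refine HasDerivAt.congr_deriv (f := f1) h ?_
    simp only [f2, bePhi', Function.comp, id]
    field_simp
    ring
  set M := 3072 / (s + y ^ 2) ^ 2
  have hM : ∀ σ, s ≤ σ → |f2 σ| ≤ M := by
    intro σ hσ
    have hσ0 : 0 < σ := by linarith
    simp only [f2, M]
    set z := y / √σ with hzd
    have hy : σ + y ^ 2 = σ * (1 + z ^ 2) := by
      rw [hzd, div_pow, Real.sq_sqrt hσ0.le]; field_simp
    calc |z * bePhi z * (3 - z ^ 2) / (4 * σ ^ 2)|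
        = |z| * bePhi z * |3 - z ^ 2| / (4 * σ ^ 2) := by
          rw [abs_div, abs_mul, abs_mul, abs_of_pos (bePhi_pos z),
            abs_of_pos (by positivity : 0 < 4 * σ ^ 2)]
      _ ≤ (1 + z ^ 2) * (4096 / (1 + z ^ 2) ^ 4) * (3 * (1 + z ^ 2)) / (4 * σ ^ 2) := by
          have := be_abs_le z
          have := bePhi_le z
          have := (bePhi_pos z).le
          have : |3 - z ^ 2| ≤ 3 * (1 + z ^ 2) := by
            rw [abs_le]; constructor <;> nlinarith [sq_nonneg z]
          gcongr
      _ = 3072 / (σ * (1 + z ^ 2)) ^ 2 := by field_simp; norm_num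
      _ = 3072 / (σ + y ^ 2) ^ 2 := by rw [hy]
      _ ≤ _ := by gcongr
  have hM0 : 0 ≤ M := by positivity
  have hI : ∀ σ ∈ Set.Icc s (s + w), |f1 σ - f1 s| ≤ M * w := by
    intro σ hσ
    have := (convex_Icc s (s + w)).norm_image_sub_le_of_norm_hasDerivWithin_le (f := f1) (f' := f2)
      (C := M) (x := s) (y := σ) (fun t ht => (hf1 t (by linarith [ht.1])).hasDerivWithinAt)
      (fun t ht => hM t ht.1) ⟨le_rfl, by linarith⟩ hσ
    refine this.trans ?_
    gcongr
    rw [Real.norm_eq_abs, abs_of_nonneg (by linarith [hσ.1])]; linarith [hσ.2]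
  have hJ := (convex_Icc s (s + w)).norm_image_sub_le_of_norm_hasDerivWithin_le
      (f := fun σ => f σ - (σ - s) * f1 s) (f' := fun σ => f1 σ - f1 s)
      (C := M * w) (x := s) (y := s + w) (fun t ht => by
        have h := (hf t (by linarith [ht.1])).sub
          (((hasDerivAt_id t).sub_const s).mul_const (f1 s))
        exact (HasDerivAt.congr_deriv h (by simp)).hasDerivWithinAt)
      (fun t ht => hI t ht) ⟨le_rfl, by linarith⟩ ⟨by linarith, le_rfl⟩
  simp only [Real.norm_eq_abs, add_sub_cancel_left, sub_self, zero_mul, sub_zero,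
    abs_of_nonneg hw0] at hJ
  have e : f (s + w) - f s - w * f1 s = f (s + w) - w * f1 s - f s := by ring
  change |f (s + w) - f s - w * f1 s| ≤ _
  rw [e]
  refine hJ.trans ?_
  set t := w / (s + y ^ 2) with ht
  have ht0 : 0 ≤ t := by positivity
  have ht1 : t ≤ 1 := by
    rw [ht, div_le_one (by positivity)]; nlinarith [sq_nonneg y]
  have e2 : w ^ (1 + ρ / 2) * (s + y ^ 2) ^ (-(1 + ρ / 2)) = t ^ (1 + ρ / 2) := by
    rw [ht, Real.div_rpow hw0 (by positivity), Real.rpow_neg (by positivity)]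
    exact (div_eq_mul_inv _ _).symm
  rw [e2]
  have e3 : t ^ 2 ≤ t ^ (1 + ρ / 2) := by
    by_cases ht00 : t = 0
    · rw [ht00]; simp [Real.zero_rpow (by positivity : 1 + ρ / 2 ≠ 0)]
    have htp : 0 < t := lt_of_le_of_ne ht0 (Ne.symm ht00)
    rw [← Real.rpow_natCast]
    exact Real.rpow_le_rpow_of_exponent_ge htp ht1 (by push_cast; linarith)
  calc M * w * w = 3072 * t ^ 2 := by simp only [M, ht]; field_simp
    _ ≤ _ := by nlinarith [sq_nonneg t]

/-- bound on the second order coefficient -/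
lemma be_g2 (y s : ℝ) (hs : 0 < s) (hs4 : s ≤ 16) :
    |bePhi' (y / √s) / (2 * s)| ≤ 4096 * (s + y ^ 2) ^ (-(5 / 4 : ℝ)) := by
  set z := y / √s with hzd
  have hy : s + y ^ 2 = s * (1 + z ^ 2) := by
    rw [hzd, div_pow, Real.sq_sqrt hs.le]; field_simp
  have hq1 : 1 ≤ 1 + z ^ 2 := by nlinarith [sq_nonneg z]
  rw [abs_div, abs_of_pos (by positivity : 0 < 2 * s), hy, Real.mul_rpow hs.le (by positivity)]
  have h1 : |bePhi' z| ≤ 4096 * (1 + z ^ 2) ^ (-(5 / 4 : ℝ)) := by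
    refine (bePhi'_le z).trans ?_
    rw [div_eq_mul_inv]
    gcongr
    rw [← Real.rpow_natCast, ← Real.rpow_neg (by positivity)]
    exact Real.rpow_le_rpow_of_exponent_le hq1 (by norm_num)
  have h2 : (2 * s)⁻¹ ≤ s ^ (-(5 / 4 : ℝ)) := by
    have : s ^ (-(5 / 4 : ℝ)) = s⁻¹ * s ^ (-(1 / 4 : ℝ)) := by
      rw [← Real.rpow_neg_one, ← Real.rpow_add hs]; norm_num
    rw [this, mul_inv, mul_comm]
    gcongr
    rw [Real.rpow_neg hs.le]
    gcongr
    calc s ^ (1 / 4 : ℝ) ≤ 16 ^ (1 / 4 : ℝ) := by gcongr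
      _ = 2 := by
        rw [show (16 : ℝ) = 2 ^ (4 : ℝ) by norm_num, ← Real.rpow_mul (by norm_num)]; norm_num
  rw [div_eq_mul_inv]
  calc |bePhi' z| * (2 * s)⁻¹ ≤ (4096 * (1 + z ^ 2) ^ (-(5 / 4 : ℝ))) * s ^ (-(5 / 4 : ℝ)) := by
        gcongr
    _ = _ := by ring

/-- tangent line inequality for negative powers -/
lemma be_tangent {t m p : ℝ} (ht : 0 < t) (hm : 0 < m) (hp : 0 ≤ p) :
    m ^ (-p) - p * m ^ (-(p + 1)) * (t - m) ≤ t ^ (-p) := by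
  have h1 : 1 - p * (t / m - 1) ≤ (t / m) ^ (-p) := by
    rw [Real.rpow_def_of_pos (by positivity)]
    have h2 := Real.add_one_le_exp (Real.log (t / m) * -p)
    have h3 := Real.log_le_sub_one_of_pos (by positivity : 0 < t / m)
    nlinarith
  have hmp : 0 < m ^ (-p) := Real.rpow_pos_of_pos hm _
  have e1 : t ^ (-p) = (t / m) ^ (-p) * m ^ (-p) := by
    rw [← Real.mul_rpow (by positivity) hm.le]; congr 1; field_simp
  have e2 : m ^ (-(p + 1)) = m ^ (-p) / m := by
    rw [neg_add, ← sub_eq_add_neg, Real.rpow_sub_one hm.ne']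
  rw [e1, e2]
  calc _ = (1 - p * (t / m - 1)) * m ^ (-p) := by field_simp
    _ ≤ _ := by gcongr

end Taylor

section Core

set_option linter.unusedSectionVars false

/-- hypotheses of the abstract martingale Berry-Esseen bound -/
structure BESetup {Ω : Type} [mΩ : MeasurableSpace Ω] (Q : Measure Ω) (n : ℕ)
    (F : ℕ → MeasurableSpace Ω) (U w : ℕ → Ω → ℝ) (ρ γ ε δ C₀ : ℝ) : Prop where
  mono : Monotone F
  le : ∀ i, F i ≤ mΩ
  hU : ∀ i, i < n → StronglyMeasurable[F (i + 1)] (U i)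
  hw : ∀ i, i < n → StronglyMeasurable[F i] (w i)
  w_nonneg : ∀ i, i < n → ∀ᵐ ω ∂Q, 0 ≤ w i ω
  w_le : ∀ i, i < n → ∀ᵐ ω ∂Q, w i ω ≤ γ ^ 2
  sum_w : ∀ᵐ ω ∂Q, |∑ i ∈ Finset.range n, w i ω - 1| ≤ δ ^ 2
  sq_int : ∀ i, i < n → Integrable (fun ω => (U i ω) ^ 2) Q
  p_int : ∀ i, i < n → Integrable (fun ω => |U i ω| ^ (2 + ρ)) Q
  h1 : ∀ i, i < n → Q[U i|F i] =ᵐ[Q] 0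
  h2 : ∀ i, i < n → ∀ᵐ ω ∂Q, |(Q[fun ω' => (U i ω') ^ 2|F i]) ω - w i ω| ≤ ε * w i ω
  h3 : ∀ i, i < n → ∀ᵐ ω ∂Q, (Q[fun ω' => |U i ω'| ^ (2 + ρ)|F i]) ω ≤ C₀ * γ ^ ρ * w i ω
  ρ_pos : 0 < ρ
  ρ_le : ρ ≤ 1
  γ_pos : 0 < γ
  ε_nonneg : 0 ≤ ε
  ε_le : ε ≤ 1
  δ_nonneg : 0 ≤ δ
  C_nonneg : 0 ≤ C₀

lemma be_pull {Ω : Type} [mΩ : MeasurableSpace Ω] {Q : Measure Ω} [IsProbabilityMeasure Q]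
    {m : MeasurableSpace Ω} (hm : m ≤ mΩ) {g f : Ω → ℝ} (hg : StronglyMeasurable[m] g)
    (hf : Integrable f Q) (hgf : Integrable (fun ω => g ω * f ω) Q) :
    ∫ ω, g ω * f ω ∂Q = ∫ ω, g ω * (Q[f|m]) ω ∂Q := by
  have h := condExp_mul_of_stronglyMeasurable_left hg hgf hf
  rw [← integral_condExp hm (f := fun ω => g ω * f ω)]
  exact integral_congr_ae h

lemma be_bdd_mul {Ω : Type} [mΩ : MeasurableSpace Ω] {Q : Measure Ω}
    {g f : Ω → ℝ} {C : ℝ} (hf : Integrable f Q) (hg : AEStronglyMeasurable g Q)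
    (hC : ∀ᵐ ω ∂Q, |g ω| ≤ C) : Integrable (fun ω => g ω * f ω) Q :=
  hf.bdd_mul hg hC

lemma be_bdd_int {Ω : Type} [mΩ : MeasurableSpace Ω] {Q : Measure Ω} [IsProbabilityMeasure Q]
    {g : Ω → ℝ} {C : ℝ} (hg : AEStronglyMeasurable g Q)
    (hC : ∀ᵐ ω ∂Q, |g ω| ≤ C) : Integrable g Q :=
  Integrable.of_bound hg C hC

variable {Ω : Type} [mΩ : MeasurableSpace Ω] {Q : Measure Ω} [IsProbabilityMeasure Q] {n : ℕ}
    {F : ℕ → MeasurableSpace Ω} {U w : ℕ → Ω → ℝ} {ρ γ ε δ C₀ : ℝ}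

lemma BESetup.w_abs (h : BESetup Q n F U w ρ γ ε δ C₀) {i : ℕ} (hi : i < n) :
    ∀ᵐ ω ∂Q, |w i ω| ≤ γ ^ 2 := by
  filter_upwards [h.w_nonneg i hi, h.w_le i hi] with ω h1 h2
  rwa [abs_of_nonneg h1]

lemma BESetup.hw' (h : BESetup Q n F U w ρ γ ε δ C₀) {i : ℕ} (hi : i < n) :
    AEStronglyMeasurable (w i) Q := ((h.hw i hi).mono (h.le i)).aestronglyMeasurable

lemma BESetup.hU' (h : BESetup Q n F U w ρ γ ε δ C₀) {i : ℕ} (hi : i < n) :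
    AEStronglyMeasurable (U i) Q := ((h.hU i hi).mono (h.le (i + 1))).aestronglyMeasurable

lemma BESetup.w_int (h : BESetup Q n F U w ρ γ ε δ C₀) {i : ℕ} (hi : i < n) :
    Integrable (w i) Q := be_bdd_int (h.hw' hi) (h.w_abs hi)

lemma BESetup.U_memLp (h : BESetup Q n F U w ρ γ ε δ C₀) {i : ℕ} (hi : i < n) :
    MemLp (U i) 2 Q := (memLp_two_iff_integrable_sq (h.hU' hi)).2 (h.sq_int i hi)

lemma BESetup.U_int (h : BESetup Q n F U w ρ γ ε δ C₀) {i : ℕ} (hi : i < n) :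
    Integrable (U i) Q := (h.U_memLp hi).integrable (by norm_num)

lemma BESetup.c1 (h : BESetup Q n F U w ρ γ ε δ C₀) {i : ℕ} (hi : i < n) {g : Ω → ℝ}
    (hg : StronglyMeasurable[F i] g) (hgU : Integrable (fun ω => g ω * U i ω) Q) :
    ∫ ω, g ω * U i ω ∂Q = 0 := by
  rw [be_pull (h.le i) hg (h.U_int hi) hgU]
  rw [integral_eq_zero_of_ae]
  filter_upwards [h.h1 i hi] with ω hω
  simp [hω]

lemma BESetup.c2 (h : BESetup Q n F U w ρ γ ε δ C₀) {i : ℕ} (hi : i < n) {g : Ω → ℝ} {C : ℝ}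
    (hg : StronglyMeasurable[F i] g) (hC : ∀ᵐ ω ∂Q, |g ω| ≤ C) :
    |∫ ω, g ω * ((U i ω) ^ 2 - w i ω) ∂Q| ≤ ε * ∫ ω, |g ω| * w i ω ∂Q := by
  have hg' : AEStronglyMeasurable g Q := (hg.mono (h.le i)).aestronglyMeasurable
  have i1 := be_bdd_mul (h.sq_int i hi) hg' hC
  have i2 := be_bdd_mul (h.w_int hi) hg' hC
  have i3 : Integrable (fun ω => g ω * (Q[fun ω' => (U i ω') ^ 2|F i]) ω) Q :=
    be_bdd_mul integrable_condExp hg' hC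
  have e : ∫ ω, g ω * ((U i ω) ^ 2 - w i ω) ∂Q =
      ∫ ω, (g ω * ((Q[fun ω' => (U i ω') ^ 2|F i]) ω - w i ω)) ∂Q := by
    simp only [mul_sub]
    rw [integral_sub i1 i2, integral_sub i3 i2, be_pull (h.le i) hg (h.sq_int i hi) i1]
  rw [e, ← integral_const_mul]
  refine (abs_integral_le_integral_abs).trans (integral_mono_ae ?_ ?_ ?_)
  · simp only [mul_sub]; exact (i3.sub i2).abs
  · exact (be_bdd_mul (h.w_int hi) hg'.norm (C := C) (by simpa using hC)).const_mul ε
  · filter_upwards [h.h2 i hi] with ω hω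
    rw [abs_mul]
    calc |g ω| * _ ≤ |g ω| * (ε * w i ω) := by gcongr
      _ = _ := by ring

lemma BESetup.c3 (h : BESetup Q n F U w ρ γ ε δ C₀) {i : ℕ} (hi : i < n) {g : Ω → ℝ} {C : ℝ}
    (hg : StronglyMeasurable[F i] g) (hC : ∀ᵐ ω ∂Q, |g ω| ≤ C) (hg0 : ∀ᵐ ω ∂Q, 0 ≤ g ω) :
    ∫ ω, g ω * |U i ω| ^ (2 + ρ) ∂Q ≤ C₀ * γ ^ ρ * ∫ ω, g ω * w i ω ∂Q := by
  have hg' : AEStronglyMeasurable g Q := (hg.mono (h.le i)).aestronglyMeasurable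
  rw [be_pull (h.le i) hg (h.p_int i hi) (be_bdd_mul (h.p_int i hi) hg' hC), ← integral_const_mul]
  refine integral_mono_ae (be_bdd_mul integrable_condExp hg' hC)
    ((be_bdd_mul (h.w_int hi) hg' hC).const_mul _) ?_
  filter_upwards [h.h3 i hi, hg0] with ω hω h0
  calc g ω * _ ≤ g ω * (C₀ * γ ^ ρ * w i ω) := by gcongr
    _ = _ := by ring

lemma BESetup.c4 (h : BESetup Q n F U w ρ γ ε δ C₀) {i : ℕ} (hi : i < n) {g : Ω → ℝ} {C : ℝ}
    (hg : StronglyMeasurable[F i] g) (hC : ∀ᵐ ω ∂Q, |g ω| ≤ C) (hg0 : ∀ᵐ ω ∂Q, 0 ≤ g ω) :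
    ∫ ω, g ω * (U i ω) ^ 2 ∂Q ≤ 2 * ∫ ω, g ω * w i ω ∂Q := by
  have hg' : AEStronglyMeasurable g Q := (hg.mono (h.le i)).aestronglyMeasurable
  have i1 := be_bdd_mul (h.sq_int i hi) hg' hC
  have i2 := be_bdd_mul (h.w_int hi) hg' hC
  have := h.c2 hi hg hC
  simp only [mul_sub] at this
  rw [integral_sub i1 i2] at this
  have e : ∫ ω, |g ω| * w i ω ∂Q = ∫ ω, g ω * w i ω ∂Q := by
    refine integral_congr_ae ?_
    filter_upwards [hg0] with ω h0
    rw [abs_of_nonneg h0]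
  have h0 : 0 ≤ ∫ ω, g ω * w i ω ∂Q := by
    refine integral_nonneg_of_ae ?_
    filter_upwards [hg0, h.w_nonneg i hi] with ω h0 h1
    exact mul_nonneg h0 h1
  rw [e] at this
  have := (abs_le.1 this).2
  nlinarith [h.ε_le]

/-- partial sums -/
noncomputable def beS {Ω : Type} (U : ℕ → Ω → ℝ) (k : ℕ) : Ω → ℝ :=
  fun ω => ∑ i ∈ Finset.range k, U i ω

lemma beS_succ {Ω : Type} (U : ℕ → Ω → ℝ) (k : ℕ) (ω : Ω) :
    beS U (k + 1) ω = beS U k ω + U k ω := by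
  simp [beS, Finset.sum_range_succ]

lemma BESetup.S_meas (h : BESetup Q n F U w ρ γ ε δ C₀) {k : ℕ} (hk : k ≤ n) :
    Measurable[F k] (beS U k) := by
  unfold beS
  refine Finset.measurable_sum _ fun i hi => ?_
  rw [Finset.mem_range] at hi
  exact ((h.hU i (by omega)).mono (h.mono (by omega : i + 1 ≤ k))).measurable

lemma BESetup.V_meas (h : BESetup Q n F U w ρ γ ε δ C₀) {k : ℕ} (hk : k < n) :
    Measurable[F k] (beS w (k + 1)) := by
  unfold beS
  refine Finset.measurable_sum _ fun i hi => ?_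
  rw [Finset.mem_range] at hi
  exact ((h.hw i (by omega)).mono (h.mono (by omega : i ≤ k))).measurable

lemma BESetup.V_aesm (h : BESetup Q n F U w ρ γ ε δ C₀) {k : ℕ} (hk : k ≤ n) :
    Measurable (beS w k) := by
  unfold beS
  refine Finset.measurable_sum _ fun i hi => ?_
  rw [Finset.mem_range] at hi
  exact ((h.hw i (by omega)).mono (h.le i)).measurable

lemma BESetup.S_aesm (h : BESetup Q n F U w ρ γ ε δ C₀) {k : ℕ} (hk : k ≤ n) :
    Measurable (beS U k) := (h.S_meas hk).mono (h.le k) le_rfl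

lemma BESetup.S_memLp (h : BESetup Q n F U w ρ γ ε δ C₀) {k : ℕ} (hk : k ≤ n) :
    MemLp (beS U k) 2 Q := by
  unfold beS
  refine memLp_finsetSum _ fun i hi => ?_
  rw [Finset.mem_range] at hi
  exact h.U_memLp (by omega)

lemma BESetup.V_int (h : BESetup Q n F U w ρ γ ε δ C₀) {k : ℕ} (hk : k ≤ n) :
    Integrable (beS w k) Q := by
  unfold beS
  refine integrable_finsetSum _ fun i hi => ?_
  rw [Finset.mem_range] at hi
  exact h.w_int (by omega)

lemma BESetup.all (h : BESetup Q n F U w ρ γ ε δ C₀) :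
    ∀ᵐ ω ∂Q, (∀ i, i < n → 0 ≤ w i ω ∧ w i ω ≤ γ ^ 2) ∧ |beS w n ω - 1| ≤ δ ^ 2 := by
  have h1 : ∀ᵐ ω ∂Q, ∀ i, i < n → 0 ≤ w i ω ∧ w i ω ≤ γ ^ 2 := by
    rw [ae_all_iff]; intro i
    by_cases hi : i < n
    · filter_upwards [h.w_nonneg i hi, h.w_le i hi] with ω a b _ using ⟨a, b⟩
    · exact Eventually.of_forall fun ω hi' => absurd hi' hi
  filter_upwards [h1, h.sum_w] with ω a b using ⟨a, b⟩

/-- the supermartingale bound -/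
lemma BESetup.super (h : BESetup Q n F U w ρ γ ε δ C₀) {k : ℕ} {g : Ω → ℝ} {C : ℝ}
    (hg : StronglyMeasurable[F k] g) (hC : ∀ᵐ ω ∂Q, |g ω| ≤ C) (hg0 : ∀ᵐ ω ∂Q, 0 ≤ g ω)
    (x T : ℝ) : ∀ j, k ≤ j → j ≤ n →
    (Integrable (fun ω => g ω * ((x - beS U j ω) ^ 2 + 2 * (T - beS w j ω))) Q ∧
    ∫ ω, g ω * ((x - beS U j ω) ^ 2 + 2 * (T - beS w j ω)) ∂Q ≤
      ∫ ω, g ω * ((x - beS U k ω) ^ 2 + 2 * (T - beS w k ω)) ∂Q) := by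
  have hg' : AEStronglyMeasurable g Q := (hg.mono (h.le k)).aestronglyMeasurable
  have hL : ∀ j, j ≤ n → MemLp (fun ω => x - beS U j ω) 2 Q := fun j hj =>
    (memLp_const x).sub (h.S_memLp hj)
  have hIntg : ∀ j, j ≤ n →
      Integrable (fun ω => g ω * ((x - beS U j ω) ^ 2 + 2 * (T - beS w j ω))) Q := by
    intro j hj
    refine be_bdd_mul ?_ hg' hC
    exact (hL j hj).integrable_sq.add (((integrable_const T).sub (h.V_int hj)).const_mul 2)
  intro j hkj
  induction j, hkj using Nat.le_induction with
  | base => intro hk; exact ⟨hIntg k hk, le_rfl⟩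
  | succ j hkj ih =>
    intro hj
    refine ⟨hIntg _ hj, le_trans ?_ (ih (by omega)).2⟩
    have hgj : StronglyMeasurable[F j] g := hg.mono (h.mono hkj)
    have hjn : j < n := by omega
    have i1 : Integrable (fun ω => (g ω * (x - beS U j ω)) * U j ω) Q := by
      have := be_bdd_mul ((hL j hjn.le).integrable_mul (h.U_memLp hjn)) hg' hC
      refine this.congr (Eventually.of_forall fun ω => ?_)
      simp [mul_assoc]
    have z1 := h.c1 hjn (g := fun ω => g ω * (x - beS U j ω))
      (hgj.mul (stronglyMeasurable_const.sub (h.S_meas hjn.le).stronglyMeasurable)) i1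
    have z2 := h.c4 hjn hgj hC hg0
    have i2 := be_bdd_mul (h.sq_int j hjn) hg' hC
    have i3 := be_bdd_mul (h.w_int hjn) hg' hC
    have e : ∀ ω, g ω * ((x - beS U (j + 1) ω) ^ 2 + 2 * (T - beS w (j + 1) ω)) =
        g ω * ((x - beS U j ω) ^ 2 + 2 * (T - beS w j ω)) +
        ((-2) * ((g ω * (x - beS U j ω)) * U j ω) + (g ω * (U j ω) ^ 2 - 2 * (g ω * w j ω))) := by
      intro ω; rw [beS_succ, beS_succ]; ring
    simp only [e]
    have j1 : Integrable (fun ω => (-2) * ((g ω * (x - beS U j ω)) * U j ω)) Q := i1.const_mul _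
    have j2 : Integrable (fun ω => g ω * (U j ω) ^ 2 - 2 * (g ω * w j ω)) Q :=
      i2.sub (i3.const_mul 2)
    have j3 : Integrable (fun ω => (-2) * ((g ω * (x - beS U j ω)) * U j ω) +
      (g ω * (U j ω) ^ 2 - 2 * (g ω * w j ω))) Q := j1.add j2
    rw [integral_add (hIntg j hjn.le) j3,
      integral_add j1 j2, integral_const_mul, z1,
      integral_sub i2 (i3.const_mul 2), integral_const_mul]
    linarith

end Core

section Core2

set_option linter.unusedSectionVars false

variable {Ω : Type} [mΩ : MeasurableSpace Ω] {Q : Measure Ω} [IsProbabilityMeasure Q] {n : ℕ}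
    {F : ℕ → MeasurableSpace Ω} {U w : ℕ → Ω → ℝ} {ρ γ ε δ C₀ : ℝ}

/-- remaining variance plus smoothing -/
noncomputable def beV {Ω : Type} (w : ℕ → Ω → ℝ) (a δ : ℝ) (k : ℕ) : Ω → ℝ :=
  fun ω => a ^ 2 + max 0 (1 + δ ^ 2 - beS w k ω)

lemma beV_ge {Ω : Type} (w : ℕ → Ω → ℝ) (a δ : ℝ) (k : ℕ) (ω : Ω) : a ^ 2 ≤ beV w a δ k ω := by
  unfold beV; linarith [le_max_left 0 (1 + δ ^ 2 - beS w k ω)]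

lemma be_sum_mono {Ω : Type} {w : ℕ → Ω → ℝ} {n : ℕ} {ω : Ω} (h : ∀ i, i < n → 0 ≤ w i ω) {k : ℕ}
    (hk : k ≤ n) : beS w k ω ≤ beS w n ω := by
  unfold beS
  refine Finset.sum_le_sum_of_subset_of_nonneg (Finset.range_mono hk) ?_
  intro i hi _
  exact h i (Finset.mem_range.1 hi)

lemma BESetup.all2 (h : BESetup Q n F U w ρ γ ε δ C₀) (a : ℝ) :
    ∀ᵐ ω ∂Q, (∀ i, i < n → 0 ≤ w i ω ∧ w i ω ≤ γ ^ 2) ∧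
      (∀ k, k ≤ n → beV w a δ k ω = a ^ 2 + (1 + δ ^ 2 - beS w k ω)) ∧
      (∀ k, k ≤ n → 0 ≤ 1 + δ ^ 2 - beS w k ω ∧ 0 ≤ beS w k ω) ∧
      (∀ k, k < n → beV w a δ k ω = beV w a δ (k + 1) ω + w k ω) ∧
      beV w a δ n ω ≤ a ^ 2 + 2 * δ ^ 2 := by
  filter_upwards [h.all] with ω ⟨h1, h2⟩
  have hT : ∀ k, k ≤ n → 0 ≤ 1 + δ ^ 2 - beS w k ω := by
    intro k hk
    have := be_sum_mono (fun i hi => (h1 i hi).1) hk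
    have := (abs_le.1 h2).2
    linarith
  have hV : ∀ k, k ≤ n → beV w a δ k ω = a ^ 2 + (1 + δ ^ 2 - beS w k ω) := by
    intro k hk
    unfold beV; rw [max_eq_right (hT k hk)]
  refine ⟨h1, hV, fun k hk => ⟨hT k hk, ?_⟩, ?_, ?_⟩
  · exact Finset.sum_nonneg fun i hi => (h1 i (by rw [Finset.mem_range] at hi; omega)).1
  · intro k hk
    rw [hV k hk.le, hV (k + 1) hk, beS_succ]; ring
  · rw [hV n le_rfl]
    have := (abs_le.1 h2).1
    linarith

lemma BESetup.beV_meas (h : BESetup Q n F U w ρ γ ε δ C₀) (a : ℝ) {k : ℕ} (hk : k < n) :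
    Measurable[F k] (beV w a δ (k + 1)) := by
  unfold beV
  have : Measurable (fun v : ℝ => a ^ 2 + max 0 (1 + δ ^ 2 - v)) := by fun_prop
  exact this.comp (h.V_meas hk)

lemma BESetup.beV_meas' (h : BESetup Q n F U w ρ γ ε δ C₀) (a : ℝ) {k : ℕ} (hk : k ≤ n) :
    Measurable (beV w a δ k) := by
  unfold beV
  have : Measurable (fun v : ℝ => a ^ 2 + max 0 (1 + δ ^ 2 - v)) := by fun_prop
  exact this.comp (h.V_aesm hk)

lemma be_rpow_bdd {a t p : ℝ} (ha : 0 < a) (ht : a ^ 2 ≤ t) (hp : 0 ≤ p) :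
    0 ≤ t ^ (-p) ∧ t ^ (-p) ≤ (a ^ 2) ^ (-p) := by
  have h2 : 0 < a ^ 2 := by positivity
  exact ⟨Real.rpow_nonneg (by linarith) _, Real.rpow_le_rpow_of_nonpos h2 ht (by linarith)⟩

/-- measurable and bounded weight -/
lemma be_weight_meas {m : MeasurableSpace Ω} {s S : Ω → ℝ} (hs : Measurable[m] s)
    (hS : Measurable[m] S) (x p : ℝ) :
    Measurable[m] (fun ω => (s ω + (x - S ω) ^ 2) ^ (-p)) := by
  have : Measurable (fun v : ℝ × ℝ => (v.1 + (x - v.2) ^ 2) ^ (-p)) := by fun_prop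
  exact this.comp (hs.prodMk hS)

lemma be_weight_bdd (w : ℕ → Ω → ℝ) {a p : ℝ} (ha : 0 < a) (hp : 0 ≤ p) (δ : ℝ) (k : ℕ) (y : ℝ)
    (ω : Ω) :
    0 ≤ (beV w a δ k ω + y ^ 2) ^ (-p) ∧ (beV w a δ k ω + y ^ 2) ^ (-p) ≤ (a ^ 2) ^ (-p) :=
  be_rpow_bdd ha (by nlinarith [beV_ge w a δ k ω, sq_nonneg y]) hp

/-- transfer from time `k` to time `n` -/
lemma BESetup.transfer (h : BESetup Q n F U w ρ γ ε δ C₀) {a p : ℝ} (ha : 0 < a) (hγa : γ ≤ a)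
    (hp1 : 1 ≤ p) (hp2 : p ≤ 2) {k : ℕ} (hk : k < n) (x : ℝ) :
    ∫ ω, (beV w a δ (k + 1) ω + (x - beS U k ω) ^ 2) ^ (-p) * w k ω ∂Q ≤
      25 * ∫ ω, (beV w a δ (k + 1) ω + (x - beS U n ω) ^ 2) ^ (-p) * w k ω ∂Q := by
  have hp0 : 0 ≤ p := by linarith
  set s := beV w a δ (k + 1) with hs
  set y := fun ω => x - beS U k ω with hy
  have hsa : ∀ ω, a ^ 2 ≤ s ω := fun ω => beV_ge w a δ (k + 1) ω
  have ha2 : 0 < a ^ 2 := by positivity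
  have hmF : Measurable[F k] s := h.beV_meas a hk
  have hSF : Measurable[F k] (beS U k) := h.S_meas hk.le
  -- the multiplier
  set g : Ω → ℝ := fun ω => p * (5:ℝ) ^ (-(p + 1)) * (s ω + (x - beS U k ω) ^ 2) ^ (-(p + 1)) * w k ω
    with hg
  have hgm : StronglyMeasurable[F k] g :=
    (((be_weight_meas hmF hSF x (p + 1)).const_mul _).mul (h.hw k hk).measurable).stronglyMeasurable
  have hwt : ∀ ω, 0 ≤ (s ω + (x - beS U k ω) ^ 2) ^ (-(p + 1)) ∧
      (s ω + (x - beS U k ω) ^ 2) ^ (-(p + 1)) ≤ (a ^ 2) ^ (-(p + 1)) := fun ω =>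
    be_weight_bdd w ha (by linarith) δ (k + 1) _ ω
  have hg0 : ∀ᵐ ω ∂Q, 0 ≤ g ω := by
    filter_upwards [h.w_nonneg k hk] with ω h0
    have := (hwt ω).1
    simp only [hg]; positivity
  have hgC : ∀ᵐ ω ∂Q, |g ω| ≤ p * (5:ℝ) ^ (-(p + 1)) * (a ^ 2) ^ (-(p + 1)) * γ ^ 2 := by
    filter_upwards [h.w_nonneg k hk, h.w_le k hk, hg0] with ω h0 h1 h2
    rw [abs_of_nonneg h2]
    have := hwt ω
    have := this.1
    simp only [hg]
    exact mul_le_mul (mul_le_mul_of_nonneg_left (hwt ω).2 (by positivity)) h1 h0 (by positivity)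
  have hsup := h.super hgm hgC hg0 x (1 + δ ^ 2) n hk.le le_rfl
  have hsup0 := h.super hgm hgC hg0 x (1 + δ ^ 2) k le_rfl hk.le
  have hg' : AEStronglyMeasurable g Q := (hgm.mono (h.le k)).aestronglyMeasurable
  have hsint : Integrable (fun ω => g ω * s ω) Q := by
    refine be_bdd_mul ?_ hg' hgC
    have h1 : Integrable (fun ω => a ^ 2 + (1 + δ ^ 2 - beS w (k + 1) ω)) Q :=
      (integrable_const _).add ((integrable_const _).sub (h.V_int hk))
    refine h1.congr ?_
    filter_upwards [h.all2 a] with ω hω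
    exact (hω.2.1 (k + 1) hk).symm
  have hLn : Integrable (fun ω => g ω * (x - beS U n ω) ^ 2) Q :=
    be_bdd_mul ((memLp_const x).sub (h.S_memLp le_rfl)).integrable_sq hg' hgC
  have hLk : Integrable (fun ω => g ω * (x - beS U k ω) ^ 2) Q :=
    be_bdd_mul ((memLp_const x).sub (h.S_memLp hk.le)).integrable_sq hg' hgC
  -- key inequality
  have hkey : ∫ ω, (g ω * s ω + g ω * (x - beS U n ω) ^ 2) ∂Q ≤
      ∫ ω, (5 * (g ω * s ω) + 5 * (g ω * (x - beS U k ω) ^ 2)) ∂Q := by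
    calc ∫ ω, (g ω * s ω + g ω * (x - beS U n ω) ^ 2) ∂Q
        ≤ ∫ ω, (g ω * s ω + g ω * ((x - beS U n ω) ^ 2 + 2 * (1 + δ ^ 2 - beS w n ω))) ∂Q := by
          refine integral_mono_ae (hsint.add hLn) (hsint.add hsup.1) ?_
          filter_upwards [hg0, h.all2 a] with ω h0 hω
          have := (hω.2.2.1 n le_rfl).1
          have : 0 ≤ g ω * (1 + δ ^ 2 - beS w n ω) := by positivity
          simp only [mul_add]; nlinarith
      _ ≤ ∫ ω, (g ω * s ω + g ω * ((x - beS U k ω) ^ 2 + 2 * (1 + δ ^ 2 - beS w k ω))) ∂Q := by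
          rw [integral_add hsint hsup.1, integral_add hsint hsup0.1]
          linarith [hsup.2]
      _ ≤ _ := by
          refine integral_mono_ae (hsint.add hsup0.1) ((hsint.const_mul 5).add (hLk.const_mul 5)) ?_
          filter_upwards [hg0, h.all2 a] with ω h0 hω
          have e1 := hω.2.1 k hk.le
          have e2 := hω.2.2.2.1 k hk
          have e3 := (hω.1 k hk).2
          have e4 := hsa ω
          have e5 : γ ^ 2 ≤ a ^ 2 := by have := h.γ_pos; gcongr
          have e6 : 1 + δ ^ 2 - beS w k ω ≤ s ω := by
            rw [← hs] at e2; linarith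
          have : g ω * (1 + δ ^ 2 - beS w k ω) ≤ g ω * s ω := by gcongr
          have : 0 ≤ g ω * (x - beS U k ω) ^ 2 := by positivity
          have : 0 ≤ g ω * s ω := mul_nonneg h0 (by linarith)
          simp only [mul_add]; linarith
  have hwn : AEStronglyMeasurable (fun ω => (s ω + (x - beS U n ω) ^ 2) ^ (-p)) Q :=
    (be_weight_meas (h.beV_meas' a hk) (h.S_aesm le_rfl) x p).aestronglyMeasurable
  have hwk : AEStronglyMeasurable (fun ω => (s ω + (x - beS U k ω) ^ 2) ^ (-p)) Q :=
    (be_weight_meas (h.beV_meas' a hk) (h.S_aesm hk.le) x p).aestronglyMeasurable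
  have iN : Integrable (fun ω => (s ω + (x - beS U n ω) ^ 2) ^ (-p) * w k ω) Q :=
    be_bdd_mul (h.w_int hk) hwn (C := (a ^ 2) ^ (-p)) (Eventually.of_forall fun ω => by
      have := be_weight_bdd w ha hp0 δ (k + 1) (x - beS U n ω) ω
      rw [abs_of_nonneg this.1]; exact this.2)
  have iK : Integrable (fun ω => (s ω + (x - beS U k ω) ^ 2) ^ (-p) * w k ω) Q :=
    be_bdd_mul (h.w_int hk) hwk (C := (a ^ 2) ^ (-p)) (Eventually.of_forall fun ω => by
      have := be_weight_bdd w ha hp0 δ (k + 1) (x - beS U k ω) ω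
      rw [abs_of_nonneg this.1]; exact this.2)
  have hpt : ∫ ω, ((5:ℝ) ^ (-p) * ((s ω + (x - beS U k ω) ^ 2) ^ (-p) * w k ω)) ∂Q ≤
      ∫ ω, ((s ω + (x - beS U n ω) ^ 2) ^ (-p) * w k ω +
        ((g ω * s ω + g ω * (x - beS U n ω) ^ 2) -
          (5 * (g ω * s ω) + 5 * (g ω * (x - beS U k ω) ^ 2)))) ∂Q := by
    refine integral_mono_ae (iK.const_mul _) (iN.add ((hsint.add hLn).sub
      ((hsint.const_mul 5).add (hLk.const_mul 5)))) ?_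
    filter_upwards [h.w_nonneg k hk] with ω h0
    have hb : 0 < s ω + (x - beS U k ω) ^ 2 := by nlinarith [hsa ω, sq_nonneg (x - beS U k ω)]
    have ht : 0 < s ω + (x - beS U n ω) ^ 2 := by nlinarith [hsa ω, sq_nonneg (x - beS U n ω)]
    have := be_tangent (t := s ω + (x - beS U n ω) ^ 2) (m := 5 * (s ω + (x - beS U k ω) ^ 2)) ht
      (by positivity) hp0
    rw [Real.mul_rpow (by norm_num) hb.le, Real.mul_rpow (by norm_num) hb.le] at this
    have := mul_le_mul_of_nonneg_right this h0
    simp only [hg]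
    linarith
  have hsum : Integrable (fun ω => g ω * s ω + g ω * (x - beS U n ω) ^ 2) Q := hsint.add hLn
  have hsum2 : Integrable (fun ω => 5 * (g ω * s ω) + 5 * (g ω * (x - beS U k ω) ^ 2)) Q :=
    (hsint.const_mul 5).add (hLk.const_mul 5)
  have hsum3 : Integrable (fun ω => (g ω * s ω + g ω * (x - beS U n ω) ^ 2) -
      (5 * (g ω * s ω) + 5 * (g ω * (x - beS U k ω) ^ 2))) Q := hsum.sub hsum2
  rw [integral_const_mul, integral_add iN hsum3, integral_sub hsum hsum2] at hpt
  have h5 : (1:ℝ) / 25 ≤ (5:ℝ) ^ (-p) := by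
    calc (1:ℝ) / 25 = (5:ℝ) ^ (-2 : ℝ) := by
          rw [Real.rpow_neg (by norm_num)]; norm_num
      _ ≤ _ := Real.rpow_le_rpow_of_exponent_le (by norm_num) (by linarith)
  have hnn : 0 ≤ ∫ ω, (s ω + (x - beS U k ω) ^ 2) ^ (-p) * w k ω ∂Q := by
    refine integral_nonneg_of_ae ?_
    filter_upwards [h.w_nonneg k hk] with ω h0
    exact mul_nonneg (be_weight_bdd w ha hp0 δ (k + 1) (x - beS U k ω) ω).1 h0
  nlinarith

/-- deterministic telescoping bound -/
lemma be_telescope {n : ℕ} {v s : ℕ → ℝ} {a q z : ℝ} (ha : 0 < a) (hq0 : 0 < q) (hq1 : q ≤ 1)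
    (hv : ∀ i, i < n → 0 ≤ v i ∧ v i ≤ a ^ 2) (hs : ∀ i, i ≤ n → a ^ 2 ≤ s i)
    (hsv : ∀ i, i < n → s i = s (i + 1) + v i) :
    ∑ k ∈ Finset.range n, (s (k + 1) + z ^ 2) ^ (-(1 + q)) * v k ≤
      4 / q * (a ^ 2 + z ^ 2) ^ (-q) := by
  have ha2 : 0 < a ^ 2 := by positivity
  have hpos : ∀ i, i ≤ n → 0 < s i + z ^ 2 := fun i hi => by
    have := hs i hi; nlinarith [sq_nonneg z]
  have key : ∀ j, j ≤ n → ∑ k ∈ Finset.range j, (s (k + 1) + z ^ 2) ^ (-(1 + q)) * v k ≤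
      4 / q * ((s j + z ^ 2) ^ (-q) - (s 0 + z ^ 2) ^ (-q)) := by
    intro j
    induction j with
    | zero => intro _; simp
    | succ j ih =>
      intro hj
      rw [Finset.sum_range_succ]
      have ih := ih (by omega)
      have hjn : j < n := by omega
      have ht := be_tangent (hpos (j + 1) hj) (hpos j hjn.le) hq0.le
      have e : s (j + 1) + z ^ 2 - (s j + z ^ 2) = - v j := by rw [hsv j hjn]; ring
      rw [e] at ht
      have hcmp : (s (j + 1) + z ^ 2) ^ (-(1 + q)) ≤ 4 * (s j + z ^ 2) ^ (-(q + 1)) := by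
        have h2 : s j + z ^ 2 ≤ 2 * (s (j + 1) + z ^ 2) := by
          have := (hv j hjn).2; have := hs (j + 1) hj; have := hsv j hjn
          nlinarith [sq_nonneg z]
        have h3 : (2 * (s (j + 1) + z ^ 2)) ^ (-(q + 1)) ≤ (s j + z ^ 2) ^ (-(q + 1)) :=
          Real.rpow_le_rpow_of_nonpos (hpos j hjn.le) h2 (by linarith)
        rw [Real.mul_rpow (by norm_num) (hpos (j + 1) hj).le] at h3
        have h4 : (1:ℝ) / 4 ≤ (2:ℝ) ^ (-(q + 1)) := by
          calc (1:ℝ) / 4 = (2:ℝ) ^ (-2 : ℝ) := by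
                rw [Real.rpow_neg (by norm_num)]; norm_num
            _ ≤ _ := Real.rpow_le_rpow_of_exponent_le (by norm_num) (by linarith)
        have h5 := Real.rpow_nonneg (hpos (j + 1) hj).le (-(q + 1))
        rw [add_comm 1 q]
        nlinarith
      have hv0 := (hv j hjn).1
      calc _ ≤ 4 / q * ((s j + z ^ 2) ^ (-q) - (s 0 + z ^ 2) ^ (-q)) +
            4 * (s j + z ^ 2) ^ (-(q + 1)) * v j := by gcongr
        _ = 4 / q * ((s j + z ^ 2) ^ (-q) - (s 0 + z ^ 2) ^ (-q) +
            q * (s j + z ^ 2) ^ (-(q + 1)) * v j) := by field_simp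
        _ ≤ _ := by
          gcongr
          linarith
  refine (key n le_rfl).trans ?_
  have h1 := Real.rpow_nonneg (hpos 0 (by omega)).le (-q)
  have h2 : (s n + z ^ 2) ^ (-q) ≤ (a ^ 2 + z ^ 2) ^ (-q) :=
    Real.rpow_le_rpow_of_nonpos (by positivity) (by linarith [hs n le_rfl]) (by linarith)
  gcongr
  linarith

/-- summed weights -/
lemma BESetup.sum_weights (h : BESetup Q n F U w ρ γ ε δ C₀) {a q : ℝ} (ha : 0 < a) (hγa : γ ≤ a)
    (hq0 : 0 < q) (hq1 : q ≤ 1) (x : ℝ) :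
    ∑ k ∈ Finset.range n,
      ∫ ω, (beV w a δ (k + 1) ω + (x - beS U k ω) ^ 2) ^ (-(1 + q)) * w k ω ∂Q ≤
      100 / q * ∫ ω, (a ^ 2 + (x - beS U n ω) ^ 2) ^ (-q) ∂Q := by
  have iN : ∀ k ∈ Finset.range n,
      Integrable (fun ω => (beV w a δ (k + 1) ω + (x - beS U n ω) ^ 2) ^ (-(1 + q)) * w k ω) Q := by
    intro k hk
    rw [Finset.mem_range] at hk
    exact be_bdd_mul (h.w_int hk) (be_weight_meas (h.beV_meas' a hk) (h.S_aesm le_rfl) x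
      (1 + q)).aestronglyMeasurable (C := (a ^ 2) ^ (-(1 + q))) (Eventually.of_forall fun ω => by
      have := be_weight_bdd w ha (by linarith : 0 ≤ 1 + q) δ (k + 1) (x - beS U n ω) ω
      rw [abs_of_nonneg this.1]; exact this.2)
  calc _ ≤ ∑ k ∈ Finset.range n, 25 *
        ∫ ω, (beV w a δ (k + 1) ω + (x - beS U n ω) ^ 2) ^ (-(1 + q)) * w k ω ∂Q := by
        refine Finset.sum_le_sum fun k hk => ?_
        exact h.transfer ha hγa (by linarith) (by linarith) (Finset.mem_range.1 hk) x
    _ = 25 * ∫ ω, ∑ k ∈ Finset.range n,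
        (beV w a δ (k + 1) ω + (x - beS U n ω) ^ 2) ^ (-(1 + q)) * w k ω ∂Q := by
        rw [← Finset.mul_sum, integral_finsetSum _ iN]
    _ ≤ 25 * ∫ ω, 4 / q * (a ^ 2 + (x - beS U n ω) ^ 2) ^ (-q) ∂Q := by
        refine mul_le_mul_of_nonneg_left ?_ (by norm_num)
        refine integral_mono_ae (integrable_finsetSum _ iN) ?_ ?_
        · refine Integrable.const_mul ?_ _
          refine be_bdd_int (C := (a ^ 2) ^ (-q)) (be_weight_meas (measurable_const)
            (h.S_aesm le_rfl) x q).aestronglyMeasurable (Eventually.of_forall fun ω => ?_)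
          have := be_rpow_bdd ha (by nlinarith [sq_nonneg (x - beS U n ω)] :
            a ^ 2 ≤ a ^ 2 + (x - beS U n ω) ^ 2) hq0.le
          rw [abs_of_nonneg this.1]; exact this.2
        · filter_upwards [h.all2 a] with ω hω
          refine be_telescope (v := fun i => w i ω) (s := fun i => beV w a δ i ω) ha hq0 hq1 ?_ ?_ ?_
          · intro i hi
            have e5 : γ ^ 2 ≤ a ^ 2 := by have := h.γ_pos; gcongr
            exact ⟨(hω.1 i hi).1, (hω.1 i hi).2.trans e5⟩
          · exact fun i _ => beV_ge w a δ i ω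
          · exact fun i hi => hω.2.2.2.1 i hi
    _ = _ := by rw [integral_const_mul]; ring

end Core2

section Core3

set_option linter.unusedSectionVars false

variable {Ω : Type} [mΩ : MeasurableSpace Ω] {Q : Measure Ω} [IsProbabilityMeasure Q] {n : ℕ}
    {F : ℕ → MeasurableSpace Ω} {U w : ℕ → Ω → ℝ} {ρ γ ε δ C₀ : ℝ}

/-- smoothed indicator at time `k` -/
noncomputable def beG {Ω : Type} (U w : ℕ → Ω → ℝ) (a δ x : ℝ) (k : ℕ) : Ω → ℝ :=
  fun ω => stdNormalCDF ((x - beS U k ω) / √(beV w a δ k ω))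

lemma BESetup.G_int (h : BESetup Q n F U w ρ γ ε δ C₀) (a x : ℝ) {k : ℕ} (hk : k ≤ n) :
    Integrable (beG U w a δ x k) Q := by
  refine be_bdd_int (C := 1) ?_ (Eventually.of_forall fun ω => ?_)
  · have : Measurable (beG U w a δ x k) := by
      unfold beG
      exact stdNormalCDF_continuous.measurable.comp
        ((measurable_const.sub (h.S_aesm hk)).div (h.beV_meas' a hk).sqrt)
    exact this.aestronglyMeasurable
  · unfold beG
    rw [abs_of_nonneg (stdNormalCDF_nonneg _)]; exact stdNormalCDF_le_one _

/-- one Lindeberg step -/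
lemma BESetup.step (h : BESetup Q n F U w ρ γ ε δ C₀) {a : ℝ} (ha : 0 < a) (hγa : γ ≤ a)
    (ha1 : a ≤ 1) (hδ : δ ≤ 1) {k : ℕ} (hk : k < n) (x : ℝ) :
    |∫ ω, beG U w a δ x (k + 1) ω ∂Q - ∫ ω, beG U w a δ x k ω ∂Q| ≤
      200000 * (C₀ + 1) * γ ^ ρ *
        ∫ ω, (beV w a δ (k + 1) ω + (x - beS U k ω) ^ 2) ^ (-(1 + ρ / 2)) * w k ω ∂Q +
      4096 * ε *
        ∫ ω, (beV w a δ (k + 1) ω + (x - beS U k ω) ^ 2) ^ (-(1 + 1 / 4 : ℝ)) * w k ω ∂Q := by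
  have hρ := h.ρ_pos
  have hγ := h.γ_pos
  set s := beV w a δ (k + 1) with hs
  have hsa : ∀ ω, a ^ 2 ≤ s ω := fun ω => beV_ge w a δ (k + 1) ω
  have ha2 : 0 < a ^ 2 := by positivity
  have hs0 : ∀ ω, 0 < s ω := fun ω => ha2.trans_le (hsa ω)
  have hmF : Measurable[F k] s := h.beV_meas a hk
  have hSF : Measurable[F k] (beS U k) := h.S_meas hk.le
  have hs16 : ∀ᵐ ω ∂Q, s ω ≤ 16 := by
    filter_upwards [h.all2 a] with ω hω
    have e1 := hω.2.1 (k + 1) hk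
    have e2 := (hω.2.2.1 (k + 1) hk).2
    rw [hs, e1]
    have := h.δ_nonneg
    nlinarith
  set W : Ω → ℝ := fun ω => (s ω + (x - beS U k ω) ^ 2) ^ (-(1 + ρ / 2)) with hW
  set W' : Ω → ℝ := fun ω => (s ω + (x - beS U k ω) ^ 2) ^ (-(1 + 1 / 4 : ℝ)) with hW'
  have hWm : StronglyMeasurable[F k] W := (be_weight_meas hmF hSF x _).stronglyMeasurable
  have hWm' : StronglyMeasurable[F k] W' := (be_weight_meas hmF hSF x _).stronglyMeasurable
  have hWb : ∀ ω, 0 ≤ W ω ∧ W ω ≤ (a ^ 2) ^ (-(1 + ρ / 2)) := fun ω =>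
    be_weight_bdd w ha (by linarith) δ (k + 1) _ ω
  have hWb' : ∀ ω, 0 ≤ W' ω ∧ W' ω ≤ (a ^ 2) ^ (-(1 + 1 / 4 : ℝ)) := fun ω =>
    be_weight_bdd w ha (by linarith) δ (k + 1) _ ω
  have hWC : ∀ᵐ ω ∂Q, |W ω| ≤ (a ^ 2) ^ (-(1 + ρ / 2)) := Eventually.of_forall fun ω => by
    rw [abs_of_nonneg (hWb ω).1]; exact (hWb ω).2
  have hWC' : ∀ᵐ ω ∂Q, |W' ω| ≤ (a ^ 2) ^ (-(1 + 1 / 4 : ℝ)) := Eventually.of_forall fun ω => by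
    rw [abs_of_nonneg (hWb' ω).1]; exact (hWb' ω).2
  have hWa : AEStronglyMeasurable W Q := (hWm.mono (h.le k)).aestronglyMeasurable
  have hWa' : AEStronglyMeasurable W' Q := (hWm'.mono (h.le k)).aestronglyMeasurable
  set z : Ω → ℝ := fun ω => (x - beS U k ω) / √(s ω) with hz
  have hzm : Measurable[F k] z := (measurable_const.sub hSF).div hmF.sqrt
  set α : Ω → ℝ := fun ω => bePhi (z ω) / √(s ω) with hα
  set β : Ω → ℝ := fun ω => bePhi' (z ω) / (2 * s ω) with hβ
  have hαm : StronglyMeasurable[F k] α :=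
    ((bePhi_continuous.measurable.comp hzm).div hmF.sqrt).stronglyMeasurable
  have hβm : StronglyMeasurable[F k] β :=
    ((bePhi'_continuous.measurable.comp hzm).div (hmF.const_mul 2)).stronglyMeasurable
  have hαC : ∀ᵐ ω ∂Q, |α ω| ≤ 1 / a := Eventually.of_forall fun ω => by
    have h1 : a ≤ √(s ω) := by rw [← Real.sqrt_sq ha.le]; exact Real.sqrt_le_sqrt (hsa ω)
    rw [abs_of_nonneg (by have := bePhi_pos (z ω); positivity)]
    exact div_le_div₀ (by norm_num) (bePhi_le_one _) ha h1
  have hβ1 : ∀ᵐ ω ∂Q, |β ω| ≤ 4096 * W' ω := by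
    filter_upwards [hs16] with ω h16
    have := be_g2 (x - beS U k ω) (s ω) (hs0 ω) h16
    simp only [hβ, hW', hz]
    convert this using 3; norm_num
  have hβC : ∀ᵐ ω ∂Q, |β ω| ≤ 4096 * (a ^ 2) ^ (-(1 + 1 / 4 : ℝ)) := by
    filter_upwards [hβ1] with ω h1
    have := (hWb' ω).2
    linarith
  have iα : Integrable (fun ω => α ω * U k ω) Q :=
    be_bdd_mul (h.U_int hk) (hαm.mono (h.le k)).aestronglyMeasurable hαC
  have iβ : Integrable (fun ω => β ω * ((U k ω) ^ 2 - w k ω)) Q :=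
    be_bdd_mul ((h.sq_int k hk).sub (h.w_int hk)) (hβm.mono (h.le k)).aestronglyMeasurable hβC
  have e1 := h.c1 hk hαm iα
  have e2 := h.c2 hk hβm hβC
  have e3 := h.c3 hk hWm hWC (Eventually.of_forall fun ω => (hWb ω).1)
  have iWw : Integrable (fun ω => W ω * w k ω) Q := be_bdd_mul (h.w_int hk) hWa hWC
  have iWw' : Integrable (fun ω => W' ω * w k ω) Q := be_bdd_mul (h.w_int hk) hWa' hWC'
  have iWu : Integrable (fun ω => W ω * |U k ω| ^ (2 + ρ)) Q := be_bdd_mul (h.p_int k hk) hWa hWC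
  have e4 : ∫ ω, |β ω| * w k ω ∂Q ≤ 4096 * ∫ ω, W' ω * w k ω ∂Q := by
    rw [← integral_const_mul]
    refine integral_mono_ae (be_bdd_mul (h.w_int hk)
      (hβm.mono (h.le k)).aestronglyMeasurable.norm (C := 4096 * (a ^ 2) ^ (-(1 + 1 / 4 : ℝ)))
      (by simpa using hβC)) (iWw'.const_mul _) ?_
    filter_upwards [hβ1, h.w_nonneg k hk] with ω h1 h0
    rw [← mul_assoc]
    gcongr
  have iG1 := h.G_int a x (k := k + 1) hk
  have iG0 := h.G_int a x (k := k) hk.le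
  set D : Ω → ℝ := fun ω => beG U w a δ x (k + 1) ω - beG U w a δ x k ω + α ω * U k ω -
    β ω * ((U k ω) ^ 2 - w k ω) with hD
  have iGG : Integrable (fun ω => beG U w a δ x (k + 1) ω - beG U w a δ x k ω) Q := iG1.sub iG0
  have iGα : Integrable (fun ω => beG U w a δ x (k + 1) ω - beG U w a δ x k ω + α ω * U k ω) Q :=
    iGG.add iα
  have iD : Integrable D Q := iGα.sub iβ
  have eD : ∫ ω, D ω ∂Q = ∫ ω, beG U w a δ x (k + 1) ω ∂Q - ∫ ω, beG U w a δ x k ω ∂Q -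
      ∫ ω, β ω * ((U k ω) ^ 2 - w k ω) ∂Q := by
    simp only [hD]
    rw [integral_sub iGα iβ, integral_add iGG iα, integral_sub iG1 iG0, e1]; ring
  have hDb : |∫ ω, D ω ∂Q| ≤ 200000 * ∫ ω, W ω * |U k ω| ^ (2 + ρ) ∂Q +
      200000 * γ ^ ρ * ∫ ω, W ω * w k ω ∂Q := by
    rw [← integral_const_mul, ← integral_const_mul, ← integral_add (iWu.const_mul _)
      (iWw.const_mul _)]
    refine abs_integral_le_integral_abs.trans (integral_mono_ae iD.abs
      ((iWu.const_mul _).add (iWw.const_mul _)) ?_)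
    filter_upwards [h.all2 a] with ω hω
    have hw := hω.1 k hk
    have hw2 : w k ω ≤ s ω := hw.2.trans ((by gcongr : γ ^ 2 ≤ a ^ 2).trans (hsa ω))
    have l1 := be_L1 (x - beS U k ω) (U k ω) ρ (s ω) (hs0 ω) hρ.le h.ρ_le
    have l2 := be_L2 (x - beS U k ω) (w k ω) ρ (s ω) (hs0 ω) hw.1 hw2 hρ.le h.ρ_le
    have l3 : (w k ω) ^ (1 + ρ / 2) ≤ γ ^ ρ * w k ω := by
      have h2 : γ ^ ρ = (γ ^ 2) ^ (ρ / 2) := by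
        rw [← Real.rpow_natCast, ← Real.rpow_mul hγ.le]; congr 1; push_cast; ring
      have h3 : (w k ω) ^ (1 + ρ / 2) = (w k ω) ^ (ρ / 2) * w k ω := by
        rw [add_comm, Real.rpow_add_one' hw.1 (by positivity)]
      rw [h2, h3]
      exact mul_le_mul_of_nonneg_right (Real.rpow_le_rpow hw.1 hw.2 (by positivity)) hw.1
    have hG1 : beG U w a δ x (k + 1) ω = stdNormalCDF ((x - beS U k ω - U k ω) / √(s ω)) := by
      simp only [beG, beS_succ, ← hs]; congr 2; ring
    have hG0 : beG U w a δ x k ω = stdNormalCDF ((x - beS U k ω) / √(s ω + w k ω)) := by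
      simp only [beG]; rw [hω.2.2.2.1 k hk]
    have hDe : D ω = (stdNormalCDF ((x - beS U k ω - U k ω) / √(s ω)) -
          stdNormalCDF ((x - beS U k ω) / √(s ω)) + U k ω * (bePhi ((x - beS U k ω) / √(s ω)) / √(s ω)) -
          U k ω ^ 2 * (bePhi' ((x - beS U k ω) / √(s ω)) / (2 * s ω))) -
        (stdNormalCDF ((x - beS U k ω) / √(s ω + w k ω)) - stdNormalCDF ((x - beS U k ω) / √(s ω)) -
          w k ω * (bePhi' ((x - beS U k ω) / √(s ω)) / (2 * s ω))) := by
      simp only [hD, hG1, hG0, hα, hβ, hz]; ring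
    rw [hDe]
    refine (abs_sub _ _).trans ?_
    have l4 : (w k ω) ^ (1 + ρ / 2) * W ω ≤ γ ^ ρ * w k ω * W ω :=
      mul_le_mul_of_nonneg_right l3 (hWb ω).1
    simp only [hW] at l4 ⊢
    linarith
  have hab := abs_le.1 hDb
  have hab2 := abs_le.1 e2
  have hε4 := mul_le_mul_of_nonneg_left e4 h.ε_nonneg
  have hfin : |∫ ω, beG U w a δ x (k + 1) ω ∂Q - ∫ ω, beG U w a δ x k ω ∂Q| ≤
      200000 * (C₀ + 1) * γ ^ ρ * ∫ ω, W ω * w k ω ∂Q + 4096 * ε * ∫ ω, W' ω * w k ω ∂Q := by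
    rw [abs_le]
    constructor <;> linarith
  exact hfin

lemma BESetup.G_zero (h : BESetup Q n F U w ρ γ ε δ C₀) (a x : ℝ) :
    ∫ ω, beG U w a δ x 0 ω ∂Q = stdNormalCDF (x / √(a ^ 2 + (1 + δ ^ 2))) := by
  have : ∀ ω, beG U w a δ x 0 ω = stdNormalCDF (x / √(a ^ 2 + (1 + δ ^ 2))) := by
    intro ω
    simp only [beG, beV, beS, Finset.range_zero, Finset.sum_empty, sub_zero]
    rw [max_eq_right (by positivity)]
  simp [this]

lemma BESetup.lindeberg (h : BESetup Q n F U w ρ γ ε δ C₀) {a : ℝ} (ha : 0 < a) (hγa : γ ≤ a)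
    (ha1 : a ≤ 1) (hδ : δ ≤ 1) (x : ℝ) :
    |∫ ω, beG U w a δ x n ω ∂Q - stdNormalCDF (x / √(a ^ 2 + (1 + δ ^ 2)))| ≤
      40000000 / ρ * (C₀ + 1) * γ ^ ρ * (∫ ω, (a ^ 2 + (x - beS U n ω) ^ 2) ^ (-(ρ / 2)) ∂Q) +
      1638400 * ε * ∫ ω, (a ^ 2 + (x - beS U n ω) ^ 2) ^ (-(1 / 4 : ℝ)) ∂Q := by
  have hρ := h.ρ_pos
  have hγ := h.γ_pos
  have hC := h.C_nonneg
  have hε := h.ε_nonneg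
  rw [← h.G_zero a x]
  set T1 : ℕ → ℝ := fun k =>
    ∫ ω, (beV w a δ (k + 1) ω + (x - beS U k ω) ^ 2) ^ (-(1 + ρ / 2)) * w k ω ∂Q with hT1
  set T2 : ℕ → ℝ := fun k =>
    ∫ ω, (beV w a δ (k + 1) ω + (x - beS U k ω) ^ 2) ^ (-(1 + 1 / 4 : ℝ)) * w k ω ∂Q with hT2
  have h1 : |∫ ω, beG U w a δ x n ω ∂Q - ∫ ω, beG U w a δ x 0 ω ∂Q| ≤
      ∑ k ∈ Finset.range n, (200000 * (C₀ + 1) * γ ^ ρ * T1 k + 4096 * ε * T2 k) := by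
    rw [← Finset.sum_range_sub (fun k => ∫ ω, beG U w a δ x k ω ∂Q)]
    refine (Finset.abs_sum_le_sum_abs _ _).trans (Finset.sum_le_sum fun k hk => ?_)
    exact h.step ha hγa ha1 hδ (Finset.mem_range.1 hk) x
  rw [Finset.sum_add_distrib, ← Finset.mul_sum, ← Finset.mul_sum] at h1
  have h2 := h.sum_weights ha hγa (by positivity : 0 < ρ / 2) (by linarith [h.ρ_le]) x
  have h3 := h.sum_weights ha hγa (by norm_num : (0:ℝ) < 1 / 4) (by norm_num) x
  have h2' := mul_le_mul_of_nonneg_left h2 (by positivity : 0 ≤ 200000 * (C₀ + 1) * γ ^ ρ)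
  have h3' := mul_le_mul_of_nonneg_left h3 (by positivity : 0 ≤ 4096 * ε)
  refine h1.trans ((add_le_add h2' h3').trans (le_of_eq ?_))
  field_simp
  ring

end Core3

section Layer

set_option linter.unusedSectionVars false

lemma be_abel_pt {p a r : ℝ} (hp : 0 ≤ p) (ha : 0 < a) (hr : 0 ≤ r) (N : ℕ) :
    (a + r) ^ (-p) ≤ (((N:ℝ) + 1) * a) ^ (-p) + ∑ j ∈ Finset.range N,
      ((((j:ℝ) + 1) * a) ^ (-p) - (((j:ℝ) + 2) * a) ^ (-p)) *
        (if r ≤ ((j:ℝ) + 1) * a then 1 else 0) := by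
  induction N with
  | zero =>
    simp only [Nat.cast_zero, zero_add, one_mul, Finset.range_zero, Finset.sum_empty, add_zero]
    exact Real.rpow_le_rpow_of_nonpos ha (by linarith) (by linarith)
  | succ N ih =>
    rw [Finset.sum_range_succ]
    push_cast
    have e : (N:ℝ) + 1 + 1 = N + 2 := by ring
    rw [e]
    split_ifs with hN
    · linarith
    · have h1 : (a + r) ^ (-p) ≤ (((N:ℝ) + 2) * a) ^ (-p) :=
        Real.rpow_le_rpow_of_nonpos (by positivity) (by push Not at hN; linarith) (by linarith)
      have h2 : 0 ≤ ∑ j ∈ Finset.range N,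
        ((((j:ℝ) + 1) * a) ^ (-p) - (((j:ℝ) + 2) * a) ^ (-p)) *
        (if r ≤ ((j:ℝ) + 1) * a then 1 else 0) := by
        refine Finset.sum_nonneg fun j _ => mul_nonneg ?_ (by split_ifs <;> norm_num)
        rw [sub_nonneg]
        exact Real.rpow_le_rpow_of_nonpos (by positivity) (by nlinarith) (by linarith)
      linarith

lemma be_abel_sum {p a : ℝ} (ha : 0 < a) (N : ℕ) :
    ∑ j ∈ Finset.range N, ((((j:ℝ) + 1) * a) ^ (-p) - (((j:ℝ) + 2) * a) ^ (-p)) * ((j:ℝ) + 1) ≤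
      ∑ j ∈ Finset.range N, (((j:ℝ) + 1) * a) ^ (-p) := by
  have : ∀ N : ℕ, ∑ j ∈ Finset.range N,
      ((((j:ℝ) + 1) * a) ^ (-p) - (((j:ℝ) + 2) * a) ^ (-p)) * ((j:ℝ) + 1) =
      ∑ j ∈ Finset.range N, (((j:ℝ) + 1) * a) ^ (-p) - N * (((N:ℝ) + 1) * a) ^ (-p) := by
    intro N
    induction N with
    | zero => simp
    | succ N ih =>
      rw [Finset.sum_range_succ, Finset.sum_range_succ, ih]
      push_cast
      have e : (N:ℝ) + 1 + 1 = N + 2 := by ring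
      rw [e]; ring
  rw [this]
  have : 0 ≤ (N:ℝ) * (((N:ℝ) + 1) * a) ^ (-p) := by positivity
  linarith

lemma be_abel_tel {p a : ℝ} (ha : 0 < a) (N : ℕ) :
    ∑ j ∈ Finset.range N, ((((j:ℝ) + 1) * a) ^ (-p) - (((j:ℝ) + 2) * a) ^ (-p)) ≤ a ^ (-p) := by
  have h := Finset.sum_range_sub' (fun j : ℕ => (((j:ℝ) + 1) * a) ^ (-p)) N
  have e : ∀ j : ℕ, ((j + 1 : ℕ) : ℝ) + 1 = j + 2 := by intro j; push_cast; ring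
  simp only [e] at h
  rw [h]
  have : 0 ≤ (((N:ℝ) + 1) * a) ^ (-p) := by positivity
  simp only [Nat.cast_zero, zero_add, one_mul]
  linarith

lemma be_pow_sum {p : ℝ} (hp0 : 0 ≤ p) (hp : p < 1) (N : ℕ) :
    ∑ j ∈ Finset.range N, ((j:ℝ) + 1) ^ (-p) ≤ (N:ℝ) ^ (1 - p) / (1 - p) := by
  have h1p : 0 < 1 - p := by linarith
  induction N with
  | zero => simp [Real.zero_rpow h1p.ne']
  | succ N ih =>
    rw [Finset.sum_range_succ]
    push_cast
    have hN : (0:ℝ) < N + 1 := by positivity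
    have key : (N:ℝ) ^ (1 - p) ≤ ((N:ℝ) + 1) ^ (1 - p) - (1 - p) * ((N:ℝ) + 1) ^ (-p) := by
      have h := rpow_one_add_le_one_add_mul_self (s := -(1 / ((N:ℝ) + 1)))
        (by
          have : 1 / ((N:ℝ) + 1) ≤ 1 := by
            rw [div_le_one hN]; linarith [(Nat.cast_nonneg N : (0:ℝ) ≤ N)]
          linarith) h1p.le (by linarith)
      have e1 : (N:ℝ) = (N + 1) * (1 + -(1 / ((N:ℝ) + 1))) := by field_simp; ring
      have e0 : 0 ≤ 1 + -(1 / ((N:ℝ) + 1)) := by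
          have : 1 / ((N:ℝ) + 1) ≤ 1 := by
            rw [div_le_one hN]; linarith [(Nat.cast_nonneg N : (0:ℝ) ≤ N)]
          linarith
      have e2 : ((N:ℝ) + 1) ^ (-p) = ((N:ℝ) + 1) ^ (1 - p) / (N + 1) := by
        rw [show -p = (1 - p) - 1 by ring, Real.rpow_sub_one hN.ne']
      calc (N:ℝ) ^ (1 - p) = ((N:ℝ) + 1) ^ (1 - p) * (1 + -(1 / ((N:ℝ) + 1))) ^ (1 - p) := by
            rw [← Real.mul_rpow hN.le e0, ← e1]
        _ ≤ ((N:ℝ) + 1) ^ (1 - p) * (1 + (1 - p) * -(1 / ((N:ℝ) + 1))) := by gcongr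
        _ = _ := by rw [e2]; field_simp; ring
    calc _ ≤ (N:ℝ) ^ (1 - p) / (1 - p) + ((N:ℝ) + 1) ^ (-p) := by gcongr
      _ ≤ (((N:ℝ) + 1) ^ (1 - p) - (1 - p) * ((N:ℝ) + 1) ^ (-p)) / (1 - p) + ((N:ℝ) + 1) ^ (-p) := by
        gcongr
      _ = _ := by field_simp; ring

variable {Ω : Type} [mΩ : MeasurableSpace Ω] {Q : Measure Ω} [IsProbabilityMeasure Q]

lemma be_conc {S : Ω → ℝ} (hS : Measurable S) {D : ℝ}
    (hD : ∀ x, |Q.real {ω | S ω ≤ x} - stdNormalCDF x| ≤ D) (x : ℝ) {t : ℝ} (ht : 0 < t) :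
    Q.real {ω | |x - S ω| ≤ t} ≤ 3 * t + 2 * D := by
  have h1 : Q.real {ω | |x - S ω| ≤ t} + Q.real {ω | S ω ≤ x - 2 * t} ≤ Q.real {ω | S ω ≤ x + t} := by
    rw [← measureReal_union]
    · refine measureReal_mono ?_
      rintro ω (h | h)
      · have h : |x - S ω| ≤ t := h
        have := (abs_le.1 h).1
        show S ω ≤ x + t
        linarith
      · have : S ω ≤ x - 2 * t := h
        show S ω ≤ x + t
        linarith
    · rw [Set.disjoint_left]
      intro ω h h'
      have h : |x - S ω| ≤ t := h
      have := (abs_le.1 h).2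
      have : S ω ≤ x - 2 * t := h'
      linarith
    · exact measurableSet_le hS measurable_const
  have h2 := (abs_le.1 (hD (x + t))).2
  have h3 := (abs_le.1 (hD (x - 2 * t))).1
  have h4 := (le_abs_self _).trans (stdNormalCDF_lip (x + t) (x - 2 * t))
  rw [abs_of_nonneg (by linarith)] at h4
  linarith

lemma be_layer {S : Ω → ℝ} (hS : Measurable S) {D p a : ℝ}
    (hD : ∀ x, |Q.real {ω | S ω ≤ x} - stdNormalCDF x| ≤ D) (hp : 0 ≤ p) (ha : 0 < a)
    (x : ℝ) {N : ℕ} (hN : 1 ≤ N * a) :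
    ∫ ω, (a + |x - S ω|) ^ (-p) ∂Q ≤ 1 + 2 * D * a ^ (-p) +
      3 * (a * ∑ j ∈ Finset.range N, (((j:ℝ) + 1) * a) ^ (-p)) := by
  have hD0 : 0 ≤ D := (abs_nonneg _).trans (hD 0)
  set A : ℕ → Set Ω := fun j => {ω | |x - S ω| ≤ ((j:ℝ) + 1) * a} with hA
  have hAm : ∀ j, MeasurableSet (A j) := fun j =>
    measurableSet_le (measurable_const.sub hS).abs measurable_const
  set c : ℕ → ℝ := fun j => (((j:ℝ) + 1) * a) ^ (-p) - (((j:ℝ) + 2) * a) ^ (-p) with hc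
  have hc0 : ∀ j, 0 ≤ c j := fun j => by
    simp only [hc]; rw [sub_nonneg]
    exact Real.rpow_le_rpow_of_nonpos (by positivity) (by nlinarith) (by linarith)
  have hIntg : ∀ j ∈ Finset.range N, Integrable (fun ω => c j * (A j).indicator (fun _ => (1:ℝ)) ω) Q :=
    fun j _ => ((integrable_const (1:ℝ)).indicator (hAm j)).const_mul _
  have h1 : ∫ ω, (a + |x - S ω|) ^ (-p) ∂Q ≤ ∫ ω, ((((N:ℝ) + 1) * a) ^ (-p) +
      ∑ j ∈ Finset.range N, c j * (A j).indicator (fun _ => (1:ℝ)) ω) ∂Q := by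
    refine integral_mono_of_nonneg (Eventually.of_forall fun ω => ?_)
      ((integrable_const _).add (integrable_finsetSum _ hIntg)) (Eventually.of_forall fun ω => ?_)
    · show 0 ≤ (a + |x - S ω|) ^ (-p)
      positivity
    · have := be_abel_pt hp ha (abs_nonneg (x - S ω)) N
      simpa only [Set.indicator_apply, hA, hc, Set.mem_ofPred_eq] using this
  rw [integral_add (integrable_const _) (integrable_finsetSum _ hIntg), integral_finsetSum _ hIntg] at h1
  refine h1.trans ?_
  have e1 : ∫ _ω : Ω, (((N:ℝ) + 1) * a) ^ (-p) ∂Q ≤ 1 := by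
    simp only [integral_const, probReal_univ, smul_eq_mul, one_mul]
    exact Real.rpow_le_one_of_one_le_of_nonpos (by linarith) (by linarith)
  have e2 : ∑ j ∈ Finset.range N, ∫ ω, c j * (A j).indicator (fun _ => (1:ℝ)) ω ∂Q ≤
      ∑ j ∈ Finset.range N, (2 * D * c j + 3 * (a * (c j * ((j:ℝ) + 1)))) := by
    refine Finset.sum_le_sum fun j _ => ?_
    rw [integral_const_mul, integral_indicator_const _ (hAm j)]
    have := be_conc hS hD x (t := ((j:ℝ) + 1) * a) (by positivity)
    have := mul_le_mul_of_nonneg_left this (hc0 j)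
    simp only [smul_eq_mul, mul_one]
    linarith
  rw [Finset.sum_add_distrib, ← Finset.mul_sum, ← Finset.mul_sum, ← Finset.mul_sum] at e2
  have e3 := mul_le_mul_of_nonneg_left (be_abel_sum (p := p) ha N) ha.le
  have e4 := mul_le_mul_of_nonneg_left (be_abel_tel (p := p) ha N) (by positivity : 0 ≤ 2 * D)
  simp only [hc] at e2
  linarith

lemma be_pow_half {a y p : ℝ} (ha : 0 < a) (hp0 : 0 ≤ p) (hp1 : p ≤ 1) :
    (a ^ 2 + y ^ 2) ^ (-(p / 2)) ≤ 2 * (a + |y|) ^ (-p) := by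
  have h0 : 0 < a + |y| := by positivity
  have h1 : (a + |y|) ^ (-p) = ((a + |y|) ^ 2) ^ (-(p / 2)) := by
    rw [← Real.rpow_natCast, ← Real.rpow_mul h0.le]; congr 1; push_cast; ring
  rw [h1]
  have h2 : (2 * (a ^ 2 + y ^ 2)) ^ (-(p / 2)) ≤ ((a + |y|) ^ 2) ^ (-(p / 2)) :=
    Real.rpow_le_rpow_of_nonpos (by positivity)
      (by nlinarith [sq_abs y, sq_nonneg (a - |y|)]) (by linarith)
  rw [Real.mul_rpow (by norm_num) (by positivity)] at h2
  have h3 : (1:ℝ) / 2 ≤ (2:ℝ) ^ (-(p / 2)) := by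
    calc (1:ℝ) / 2 = (2:ℝ) ^ (-1 : ℝ) := by rw [Real.rpow_neg (by norm_num)]; norm_num
      _ ≤ _ := Real.rpow_le_rpow_of_exponent_le (by norm_num) (by linarith)
  have h4 : 0 ≤ (a ^ 2 + y ^ 2) ^ (-(p / 2)) := by positivity
  nlinarith

lemma be_half_int {S : Ω → ℝ} (hS : Measurable S) {p a : ℝ} (hp : 0 ≤ p) (hp1 : p ≤ 1) (ha : 0 < a)
    (x : ℝ) :
    ∫ ω, (a ^ 2 + (x - S ω) ^ 2) ^ (-(p / 2)) ∂Q ≤ 2 * ∫ ω, (a + |x - S ω|) ^ (-p) ∂Q := by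
  rw [← integral_const_mul]
  refine integral_mono_of_nonneg (Eventually.of_forall fun ω => ?_) (Integrable.const_mul ?_ _)
    (Eventually.of_forall fun ω => be_pow_half ha hp hp1)
  · show 0 ≤ (a ^ 2 + (x - S ω) ^ 2) ^ (-(p / 2))
    positivity
  · refine be_bdd_int (C := a ^ (-p)) ?_ (Eventually.of_forall fun ω => ?_)
    · have : Measurable (fun ω => (a + |x - S ω|) ^ (-p)) :=
        (measurable_const.add (measurable_const.sub hS).abs).pow_const _
      exact this.aestronglyMeasurable
    · rw [abs_of_nonneg (by positivity)]
      exact Real.rpow_le_rpow_of_nonpos ha (by linarith [abs_nonneg (x - S ω)]) (by linarith)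

lemma be_layer_lt {S : Ω → ℝ} (hS : Measurable S) {D p a : ℝ}
    (hD : ∀ x, |Q.real {ω | S ω ≤ x} - stdNormalCDF x| ≤ D) (hp : 0 ≤ p) (hp1 : p < 1) (ha : 0 < a)
    (ha1 : a ≤ 1) (x : ℝ) :
    ∫ ω, (a ^ 2 + (x - S ω) ^ 2) ^ (-(p / 2)) ∂Q ≤ 14 / (1 - p) + 4 * D * a ^ (-p) := by
  have h1p : 0 < 1 - p := by linarith
  obtain ⟨hN1, hN2⟩ : 1 ≤ (⌈1 / a⌉₊ : ℝ) * a ∧ (⌈1 / a⌉₊ : ℝ) * a ≤ 2 := by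
    have h1 := Nat.le_ceil (1 / a)
    have h2 := (Nat.ceil_lt_add_one (by positivity : 0 ≤ 1 / a)).le
    constructor
    · rw [div_le_iff₀ ha] at h1; exact h1
    · calc _ ≤ (1 / a + 1) * a := by gcongr
        _ = 1 + a := by field_simp
        _ ≤ 2 := by linarith
  have h := be_layer hS hD hp ha x hN1
  have h2 := be_half_int (Q := Q) hS hp hp1.le ha x
  have h3 : a * ∑ j ∈ Finset.range ⌈1 / a⌉₊, (((j:ℝ) + 1) * a) ^ (-p) ≤ 2 / (1 - p) := by
    have e : ∀ j : ℕ, (((j:ℝ) + 1) * a) ^ (-p) = ((j:ℝ) + 1) ^ (-p) * a ^ (-p) := fun j =>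
      Real.mul_rpow (by positivity) ha.le
    simp only [e]
    rw [← Finset.sum_mul]
    have := be_pow_sum hp hp1 ⌈1 / a⌉₊
    calc _ = a ^ (1 - p) * ∑ j ∈ Finset.range ⌈1 / a⌉₊, ((j:ℝ) + 1) ^ (-p) := by
          rw [show 1 - p = -p + 1 by ring, Real.rpow_add_one ha.ne']; ring
      _ ≤ a ^ (1 - p) * ((⌈1 / a⌉₊:ℝ) ^ (1 - p) / (1 - p)) := by gcongr
      _ = ((⌈1 / a⌉₊ : ℝ) * a) ^ (1 - p) / (1 - p) := by
          rw [Real.mul_rpow (by positivity) ha.le]; ring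
      _ ≤ 2 / (1 - p) := by
          gcongr
          calc _ ≤ (2:ℝ) ^ (1 - p) := Real.rpow_le_rpow (by positivity) hN2 h1p.le
            _ ≤ (2:ℝ) ^ (1:ℝ) := Real.rpow_le_rpow_of_exponent_le (by norm_num) (by linarith)
            _ = 2 := by simp
  have h4 : 1 ≤ 1 / (1 - p) := by rw [le_div_iff₀ h1p]; linarith
  have e5 : 14 / (1 - p) = 2 * (1 / (1 - p)) + 6 * (2 / (1 - p)) := by ring
  rw [e5]; linarith

lemma be_layer_one {S : Ω → ℝ} (hS : Measurable S) {D a : ℝ}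
    (hD : ∀ x, |Q.real {ω | S ω ≤ x} - stdNormalCDF x| ≤ D) (ha : 0 < a)
    (ha1 : a ≤ 1) (x : ℝ) :
    ∫ ω, (a ^ 2 + (x - S ω) ^ 2) ^ (-((1:ℝ) / 2)) ∂Q ≤ 14 + 6 * Real.log (1 / a) + 4 * D * a⁻¹ := by
  obtain ⟨hN1, hN2⟩ : 1 ≤ (⌈1 / a⌉₊ : ℝ) * a ∧ (⌈1 / a⌉₊ : ℝ) * a ≤ 2 := by
    have h1 := Nat.le_ceil (1 / a)
    have h2 := (Nat.ceil_lt_add_one (by positivity : 0 ≤ 1 / a)).le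
    constructor
    · rw [div_le_iff₀ ha] at h1; exact h1
    · calc _ ≤ (1 / a + 1) * a := by gcongr
        _ = 1 + a := by field_simp
        _ ≤ 2 := by linarith
  have h := be_layer hS hD zero_le_one ha x hN1
  have h2 := be_half_int (Q := Q) hS zero_le_one le_rfl ha x
  simp only [Real.rpow_neg_one] at h h2
  have h3 : a * ∑ j ∈ Finset.range ⌈1 / a⌉₊, (((j:ℝ) + 1) * a)⁻¹ ≤ 2 + Real.log (1 / a) := by
    have e : a * ∑ j ∈ Finset.range ⌈1 / a⌉₊, (((j:ℝ) + 1) * a)⁻¹ = (harmonic ⌈1 / a⌉₊ : ℝ) := by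
      rw [harmonic, Finset.mul_sum]; push_cast
      refine Finset.sum_congr rfl fun j _ => ?_
      field_simp
    rw [e]
    have h5 := harmonic_le_one_add_log ⌈1 / a⌉₊
    have hpos : (0:ℝ) < ⌈1 / a⌉₊ := by
      by_contra hc
      have : (⌈1 / a⌉₊:ℝ) * a ≤ 0 := mul_nonpos_of_nonpos_of_nonneg (not_lt.1 hc) ha.le
      linarith
    have h6 : Real.log ⌈1 / a⌉₊ ≤ Real.log (2 * (1 / a)) := by
      refine Real.log_le_log hpos ?_
      rw [← mul_div_assoc, le_div_iff₀ ha]; linarith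
    rw [Real.log_mul (by norm_num) (by positivity)] at h6
    have := Real.log_two_lt_d9
    linarith
  linarith [Real.log_nonneg (by rw [le_div_iff₀ ha]; linarith : 1 ≤ 1 / a)]

end Layer

section Smooth

set_option linter.unusedSectionVars false

lemma be_gauss_cheb {v : ℝ} (hv : 0 < v) :
    (ProbabilityTheory.gaussianReal 0 1).real {y | v ≤ |y|} ≤ 1 / v ^ 2 := by
  have h := ProbabilityTheory.meas_ge_le_variance_div_sq (μ := ProbabilityTheory.gaussianReal 0 1)
    (X := id) (ProbabilityTheory.memLp_id_gaussianReal 2) hv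
  rw [ProbabilityTheory.variance_id_gaussianReal] at h
  simp only [id, ProbabilityTheory.integral_id_gaussianReal, sub_zero, NNReal.coe_one] at h
  rw [measureReal_def]
  exact ENNReal.toReal_le_of_le_ofReal (by positivity) h

lemma be_tail_neg {v : ℝ} (hv : 0 < v) : stdNormalCDF (-v) ≤ 1 / v ^ 2 := by
  rw [stdNormalCDF_eq_gaussian]
  refine (measureReal_mono ?_).trans (be_gauss_cheb hv)
  intro y hy
  have hy : y ≤ -v := hy
  show v ≤ |y|
  rw [abs_of_nonpos (by linarith)]; linarith

lemma be_tail_pos {v : ℝ} (hv : 0 < v) : 1 - stdNormalCDF v ≤ 1 / v ^ 2 := by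
  rw [stdNormalCDF_eq_gaussian]
  have h : (ProbabilityTheory.gaussianReal 0 1).real (Set.Iic v)ᶜ =
    1 - (ProbabilityTheory.gaussianReal 0 1).real (Set.Iic v) := by
    rw [measureReal_compl measurableSet_Iic, probReal_univ]
  rw [← h]
  refine (measureReal_mono ?_).trans (be_gauss_cheb hv)
  intro y hy
  have hy : ¬ (y ≤ v) := hy
  show v ≤ |y|
  rw [abs_of_nonneg (by linarith)]; linarith

lemma be_sq_sum (N : ℕ) : ∑ j ∈ Finset.range N, (((j:ℝ) + 1) ^ 2)⁻¹ ≤ 2 := by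
  have : ∀ N : ℕ, ∑ j ∈ Finset.range N, (((j:ℝ) + 1) ^ 2)⁻¹ ≤ 2 - 2 / ((N:ℝ) + 1) := by
    intro N
    induction N with
    | zero => simp
    | succ N ih =>
      rw [Finset.sum_range_succ]
      push_cast
      have : (((N:ℝ) + 1) ^ 2)⁻¹ ≤ 2 / ((N:ℝ) + 1) - 2 / ((N:ℝ) + 1 + 1) := by
        rw [div_sub_div _ _ (by positivity) (by positivity), inv_eq_one_div,
          div_le_div_iff₀ (by positivity) (by positivity)]
        nlinarith [(Nat.cast_nonneg N : (0:ℝ) ≤ N)]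
      linarith
  have h1 := this N
  have : 0 ≤ 2 / ((N:ℝ) + 1) := by positivity
  linarith

variable {Ω : Type} [mΩ : MeasurableSpace Ω] {Q : Measure Ω} [IsProbabilityMeasure Q]

lemma be_layer_two {S : Ω → ℝ} (hS : Measurable S) {D c : ℝ}
    (hD : ∀ x, |Q.real {ω | S ω ≤ x} - stdNormalCDF x| ≤ D) (hc : 0 < c) (hc2 : c ≤ 2) (x : ℝ) :
    Integrable (fun ω => c ^ 2 / (4 * c + |x - S ω|) ^ 2) Q ∧
    ∫ ω, c ^ 2 / (4 * c + |x - S ω|) ^ 2 ∂Q ≤ D / 8 + 4 * c := by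
  have h4 : 0 < 4 * c := by positivity
  have e : ∀ t : ℝ, t ^ (-(2:ℝ)) = (t ^ 2)⁻¹ := by
    intro t
    by_cases ht : 0 ≤ t
    · rw [Real.rpow_neg ht]; norm_num
    · rw [show (-(2:ℝ)) = ((-2 : ℤ) : ℝ) by norm_num, Real.rpow_intCast, zpow_neg]; norm_cast
  have hm : Measurable (fun ω => c ^ 2 / (4 * c + |x - S ω|) ^ 2) :=
    measurable_const.div ((measurable_const.add (measurable_const.sub hS).abs).pow_const _)
  constructor
  · refine be_bdd_int (C := 1) hm.aestronglyMeasurable (Eventually.of_forall fun ω => ?_)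
    rw [abs_of_nonneg (by positivity), div_le_one (by positivity)]
    have := abs_nonneg (x - S ω)
    nlinarith
  · have h := be_layer hS hD (p := 2) (by norm_num) h4 x (N := ⌈1 / (4 * c)⌉₊) (by
      have := Nat.le_ceil (1 / (4 * c))
      rwa [div_le_iff₀ h4] at this)
    simp only [e] at h
    have h2 : 4 * c * ∑ j ∈ Finset.range ⌈1 / (4 * c)⌉₊, ((((j:ℝ) + 1) * (4 * c)) ^ 2)⁻¹ ≤
        2 / (4 * c) := by
      have e2 : ∀ j : ℕ, ((((j:ℝ) + 1) * (4 * c)) ^ 2)⁻¹ = (((j:ℝ) + 1) ^ 2)⁻¹ * ((4 * c) ^ 2)⁻¹ := by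
        intro j; rw [mul_pow, mul_inv]
      simp only [e2]
      rw [← Finset.sum_mul]
      calc _ ≤ 4 * c * (2 * ((4 * c) ^ 2)⁻¹) := by
            gcongr; exact be_sq_sum _
        _ = _ := by field_simp
    simp only [div_eq_mul_inv]
    rw [integral_const_mul]
    have h3 := mul_le_mul_of_nonneg_left h (by positivity : 0 ≤ c ^ 2)
    refine h3.trans ?_
    calc c ^ 2 * (1 + 2 * D * ((4 * c) ^ 2)⁻¹ + 3 * (4 * c *
          ∑ j ∈ Finset.range ⌈1 / (4 * c)⌉₊, ((((j:ℝ) + 1) * (4 * c)) ^ 2)⁻¹)) ≤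
          c ^ 2 * (1 + 2 * D * ((4 * c) ^ 2)⁻¹ + 3 * (2 / (4 * c))) := by gcongr
      _ = c ^ 2 + D / 8 + 3 / 2 * c := by field_simp; ring
      _ ≤ D * 8⁻¹ + 4 * c := by nlinarith

lemma be_smooth {S A : Ω → ℝ} (hS : Measurable S) (hA : Measurable A) {D c M : ℝ}
    (hD : ∀ x, |Q.real {ω | S ω ≤ x} - stdNormalCDF x| ≤ D) (hc : 0 < c) (hc2 : c ≤ 2)
    (hA0 : ∀ᵐ ω ∂Q, 0 < A ω ∧ A ω ≤ c)
    (hM : ∀ x, |∫ ω, stdNormalCDF ((x - S ω) / A ω) ∂Q - stdNormalCDF x| ≤ M) (x : ℝ) :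
    |Q.real {ω | S ω ≤ x} - stdNormalCDF x| ≤ M + D / 8 + 8 * c := by
  obtain ⟨hi, hl⟩ := be_layer_two hS hD hc hc2 x
  have hms : MeasurableSet {ω | S ω ≤ x} := measurableSet_le hS measurable_const
  have hG : ∀ y, Integrable (fun ω => stdNormalCDF ((y - S ω) / A ω)) Q := by
    intro y
    refine be_bdd_int (C := 1) ?_ (Eventually.of_forall fun ω => ?_)
    · exact (stdNormalCDF_continuous.measurable.comp
        ((measurable_const.sub hS).div hA)).aestronglyMeasurable
    · rw [abs_of_nonneg (stdNormalCDF_nonneg _)]; exact stdNormalCDF_le_one _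
  have hind : Q.real {ω | S ω ≤ x} = ∫ ω, {ω | S ω ≤ x}.indicator (fun _ => (1:ℝ)) ω ∂Q := by
    rw [integral_indicator_const _ hms]; simp
  have hindi : Integrable ({ω | S ω ≤ x}.indicator (fun _ => (1:ℝ))) Q :=
    (integrable_const (1:ℝ)).indicator hms
  have up : Q.real {ω | S ω ≤ x} ≤ ∫ ω, stdNormalCDF ((x + 4 * c - S ω) / A ω) ∂Q +
      ∫ ω, c ^ 2 / (4 * c + |x - S ω|) ^ 2 ∂Q := by
    rw [hind, ← integral_add (hG _) hi]
    refine integral_mono_ae hindi ((hG _).add hi) ?_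
    filter_upwards [hA0] with ω ⟨h0, h1⟩
    simp only [Set.indicator_apply]
    split_ifs with hω
    · have hω : S ω ≤ x := hω
      rw [abs_of_nonneg (by linarith)]
      have hpos : 0 < 4 * c + (x - S ω) := by linarith
      have h2 := be_tail_pos (v := (4 * c + (x - S ω)) / c) (by positivity)
      have h3 : stdNormalCDF ((4 * c + (x - S ω)) / c) ≤ stdNormalCDF ((x + 4 * c - S ω) / A ω) := by
        refine stdNormalCDF_mono ?_
        rw [show x + 4 * c - S ω = 4 * c + (x - S ω) by ring]
        gcongr
      have h4 : 1 / ((4 * c + (x - S ω)) / c) ^ 2 = c ^ 2 / (4 * c + (x - S ω)) ^ 2 := by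
        field_simp
      linarith
    · have := stdNormalCDF_nonneg ((x + 4 * c - S ω) / A ω)
      positivity
  have dn : ∫ ω, stdNormalCDF ((x - 4 * c - S ω) / A ω) ∂Q ≤ Q.real {ω | S ω ≤ x} +
      ∫ ω, c ^ 2 / (4 * c + |x - S ω|) ^ 2 ∂Q := by
    rw [hind, ← integral_add hindi hi]
    refine integral_mono_ae (hG _) (hindi.add hi) ?_
    filter_upwards [hA0] with ω ⟨h0, h1⟩
    simp only [Set.indicator_apply]
    split_ifs with hω
    · have := stdNormalCDF_le_one ((x - 4 * c - S ω) / A ω)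
      have : 0 ≤ c ^ 2 / (4 * c + |x - S ω|) ^ 2 := by positivity
      linarith
    · have hω : ¬ (S ω ≤ x) := hω
      rw [abs_of_nonpos (by linarith)]
      have hpos : 0 < 4 * c + -(x - S ω) := by linarith
      have h2 := be_tail_neg (v := (4 * c + -(x - S ω)) / c) (by positivity)
      have h3 : stdNormalCDF ((x - 4 * c - S ω) / A ω) ≤ stdNormalCDF (-((4 * c + -(x - S ω)) / c)) := by
        refine stdNormalCDF_mono ?_
        rw [show x - 4 * c - S ω = -(4 * c + -(x - S ω)) by ring, neg_div]
        gcongr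
      have h4 : 1 / ((4 * c + -(x - S ω)) / c) ^ 2 = c ^ 2 / (4 * c + -(x - S ω)) ^ 2 := by
        field_simp
      linarith
  have m1 := (abs_le.1 (hM (x + 4 * c))).2
  have m2 := (abs_le.1 (hM (x - 4 * c))).1
  have l1 := (le_abs_self _).trans (stdNormalCDF_lip (x + 4 * c) x)
  have l2 := (neg_le_abs _).trans (stdNormalCDF_lip (x - 4 * c) x)
  rw [abs_of_nonneg (by linarith)] at l1
  rw [abs_of_nonpos (by linarith)] at l2
  rw [abs_le]
  constructor <;> linarith

lemma be_var_shift {v : ℝ} (h0 : 0 ≤ v) (h1 : v ≤ 1) (x : ℝ) :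
    |stdNormalCDF (x / √(1 + v)) - stdNormalCDF x| ≤ 202048 * v := by
  have h := be_L2 x v 0 1 one_pos h0 h1 le_rfl zero_le_one
  simp only [Real.sqrt_one, div_one, mul_one, zero_div, add_zero, Real.rpow_one] at h
  have h2 : (1 + x ^ 2) ^ (-(1:ℝ)) ≤ 1 :=
    Real.rpow_le_one_of_one_le_of_nonpos (by nlinarith [sq_nonneg x]) (by norm_num)
  have h3 : |v * (bePhi' x / 2)| ≤ 2048 * v := by
    have := bePhi'_le x
    have h5 : 4096 / (1 + x ^ 2) ^ 3 ≤ 4096 := by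
      rw [div_le_iff₀ (by positivity)]
      have : 1 ≤ (1 + x ^ 2) ^ 3 := one_le_pow₀ (by nlinarith [sq_nonneg x])
      linarith
    rw [abs_mul, abs_of_nonneg h0, abs_div, abs_two]
    have : |bePhi' x| / 2 ≤ 2048 := by linarith
    nlinarith
  have h6 : v * (1 + x ^ 2) ^ (-(1:ℝ)) ≤ v := by nlinarith
  have a1 := abs_le.1 h
  have a2 := abs_le.1 h3
  rw [abs_le]
  constructor <;> linarith

variable {n : ℕ} {F : ℕ → MeasurableSpace Ω} {U w : ℕ → Ω → ℝ} {ρ γ ε δ C₀ : ℝ}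

lemma BESetup.core (h : BESetup Q n F U w ρ γ ε δ C₀) {a J : ℝ} (ha : 0 < a) (hγa : γ ≤ a)
    (hδa : δ ≤ a) (ha1 : a ≤ 1 / 2)
    (hI : ∀ D x, (∀ x, |Q.real {ω | beS U n ω ≤ x} - stdNormalCDF x| ≤ D) →
      ∫ ω, (a ^ 2 + (x - beS U n ω) ^ 2) ^ (-(ρ / 2)) ∂Q ≤ J + 4 * D * a ^ (-ρ))
    (h1 : 1280000000 / ρ * (C₀ + 1) * γ ^ ρ * a ^ (-ρ) ≤ 1)
    (h2 : 52428800 * ε * a ^ (-(1 / 2 : ℝ)) ≤ 1) (x : ℝ) :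
    |Q.real {ω | beS U n ω ≤ x} - stdNormalCDF x| ≤
      2 * (40000000 / ρ * (C₀ + 1) * γ ^ ρ * J + 1638400 * 28 * ε + 202064 * a) := by
  have hρ := h.ρ_pos
  have hγ := h.γ_pos
  have hC := h.C_nonneg
  have hε := h.ε_nonneg
  have hδ := h.δ_nonneg
  set d : ℝ → ℝ := fun x => |Q.real {ω | beS U n ω ≤ x} - stdNormalCDF x| with hd
  have hd1 : ∀ x, d x ≤ 1 := by
    intro x
    simp only [hd]
    have := stdNormalCDF_nonneg x
    have := stdNormalCDF_le_one x
    have : 0 ≤ Q.real {ω | beS U n ω ≤ x} := measureReal_nonneg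
    have : Q.real {ω | beS U n ω ≤ x} ≤ 1 := measureReal_le_one
    rw [abs_le]; constructor <;> linarith
  have hbdd : BddAbove (Set.range d) := ⟨1, by rintro _ ⟨x, rfl⟩; exact hd1 x⟩
  set D := ⨆ x, d x with hDd
  have hD : ∀ x, |Q.real {ω | beS U n ω ≤ x} - stdNormalCDF x| ≤ D := fun x => le_ciSup hbdd x
  have hS := h.S_aesm (k := n) le_rfl
  set M := 40000000 / ρ * (C₀ + 1) * γ ^ ρ * (J + 4 * D * a ^ (-ρ)) +
    1638400 * ε * (28 + 4 * D * a ^ (-(1 / 2 : ℝ))) + 202048 * a with hMd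
  have hM : ∀ x, |∫ ω, stdNormalCDF ((x - beS U n ω) / √(beV w a δ n ω)) ∂Q - stdNormalCDF x| ≤ M := by
    intro x
    have l1 := h.lindeberg ha hγa (by linarith) (by linarith) x
    have l2 := hI D x hD
    have l3 := be_layer_lt hS hD (p := 1 / 2) (by norm_num) (by norm_num) ha (by linarith) x
    have l4 := be_var_shift (v := a ^ 2 + δ ^ 2) (by positivity) (by nlinarith) x
    rw [show 1 + (a ^ 2 + δ ^ 2) = a ^ 2 + (1 + δ ^ 2) by ring] at l4
    have l5 : 202048 * (a ^ 2 + δ ^ 2) ≤ 202048 * a := by nlinarith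
    have e1 : (1 / 2 / 2 : ℝ) = 1 / 4 := by norm_num
    have e2 : (14 / (1 - 1 / 2) : ℝ) = 28 := by norm_num
    rw [e1, e2] at l3
    have l2' := mul_le_mul_of_nonneg_left l2 (by positivity : 0 ≤ 40000000 / ρ * (C₀ + 1) * γ ^ ρ)
    have l3' := mul_le_mul_of_nonneg_left l3 (by positivity : 0 ≤ 1638400 * ε)
    have b1 := abs_le.1 l1
    have b4 := abs_le.1 l4
    simp only [beG] at b1
    rw [abs_le, hMd]
    constructor <;> linarith
  have hA0 : ∀ᵐ ω ∂Q, 0 < √(beV w a δ n ω) ∧ √(beV w a δ n ω) ≤ 2 * a := by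
    filter_upwards [h.all2 a] with ω hω
    have g1 := hω.2.2.2.2
    have g2 := beV_ge w a δ n ω
    constructor
    · exact Real.sqrt_pos.2 (by nlinarith)
    · rw [Real.sqrt_le_left (by positivity)]; nlinarith
  have key : ∀ x, d x ≤ M + D / 8 + 8 * (2 * a) := fun x =>
    be_smooth hS (h.beV_meas' a le_rfl).sqrt hD (by positivity) (by linarith) hA0 hM x
  have hDle : D ≤ M + D / 8 + 8 * (2 * a) := ciSup_le key
  have hD0 : 0 ≤ D := (abs_nonneg _).trans (hD 0)
  have f1 : 40000000 / ρ * (C₀ + 1) * γ ^ ρ * (4 * D * a ^ (-ρ)) ≤ D / 8 := by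
    have := mul_le_mul_of_nonneg_left h1 (by positivity : 0 ≤ D / 8)
    calc _ = D / 8 * (1280000000 / ρ * (C₀ + 1) * γ ^ ρ * a ^ (-ρ)) := by ring
      _ ≤ _ := by linarith
  have f2 : 1638400 * ε * (4 * D * a ^ (-(1 / 2 : ℝ))) ≤ D / 8 := by
    have := mul_le_mul_of_nonneg_left h2 (by positivity : 0 ≤ D / 8)
    calc _ = D / 8 * (52428800 * ε * a ^ (-(1 / 2 : ℝ))) := by ring
      _ ≤ _ := by linarith
  refine (hD x).trans ?_
  rw [hMd] at hDle
  linarith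

lemma be_half_cond {ε a : ℝ} (hε : 0 ≤ ε) (hε1 : ε ≤ 1) (ha : 0 < a) (h : 52428800 ^ 2 * ε ≤ a) :
    52428800 * ε * a ^ (-(1 / 2 : ℝ)) ≤ 1 := by
  rw [Real.rpow_neg ha.le, ← Real.sqrt_eq_rpow, ← div_eq_mul_inv, div_le_one (Real.sqrt_pos.2 ha)]
  refine Real.le_sqrt_of_sq_le ?_
  nlinarith

lemma be_dist_le_one (S : Ω → ℝ) (x : ℝ) : |Q.real {ω | S ω ≤ x} - stdNormalCDF x| ≤ 1 := by
  have := stdNormalCDF_nonneg x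
  have := stdNormalCDF_le_one x
  have : 0 ≤ Q.real {ω | S ω ≤ x} := measureReal_nonneg
  have : Q.real {ω | S ω ≤ x} ≤ 1 := measureReal_le_one
  rw [abs_le]; constructor <;> linarith

end Smooth

theorem be_core_lt {ρ C₀ : ℝ} (hρ : 0 < ρ) (hρ1 : ρ < 1) (hC : 0 ≤ C₀) :
    ∃ K : ℝ, 0 < K ∧ ∀ {Ω : Type} [mΩ : MeasurableSpace Ω] {Q : Measure Ω} [IsProbabilityMeasure Q]
      {n : ℕ} {F : ℕ → MeasurableSpace Ω} {U w : ℕ → Ω → ℝ} {γ ε δ : ℝ}, γ ≤ 1 / 4 →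
      BESetup Q n F U w ρ γ ε δ C₀ → ∀ x,
      |Q.real {ω | beS U n ω ≤ x} - stdNormalCDF x| ≤ K * (γ ^ ρ + ε + δ) := by
  set E : ℝ := 1280000000 / ρ * (C₀ + 1) with hE
  have hE0 : 0 < E := by positivity
  set K1 : ℝ := E ^ (1 / ρ) with hK1
  have hE1 : 1 ≤ E := by
    rw [hE]
    have : 1 ≤ 1280000000 / ρ := by rw [le_div_iff₀ hρ]; linarith
    nlinarith
  have hK1' : 1 ≤ K1 := Real.one_le_rpow hE1 (by positivity)
  have h1p : 0 < 1 - ρ := by linarith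
  set L : ℝ := K1 + 52428800 ^ 2 + 1 with hL
  refine ⟨2 * (E * (14 / (1 - ρ)) + 1638400 * 28 + 202064 * L), by positivity, ?_⟩
  intro Ω mΩ Q _ n F U w γ ε δ hγ4 h x
  have hγ := h.γ_pos
  have hε := h.ε_nonneg
  have hδ := h.δ_nonneg
  set a := K1 * γ + 52428800 ^ 2 * ε + δ with ha
  have hγρ : γ ≤ γ ^ ρ := by
    conv_lhs => rw [← Real.rpow_one γ]
    exact Real.rpow_le_rpow_of_exponent_ge hγ (by linarith) hρ1.le
  have haL : a ≤ L * (γ ^ ρ + ε + δ) := by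
    have h0 : 0 ≤ γ ^ ρ := by positivity
    have : K1 * γ ≤ K1 * γ ^ ρ := by gcongr
    have h3 : 0 ≤ K1 * (ε + δ) := by positivity
    rw [ha, hL]; nlinarith
  have ha0 : 0 < a := by positivity
  have hsum : 0 ≤ γ ^ ρ + ε + δ := by positivity
  by_cases ha1 : a ≤ 1 / 2
  · have hγa : K1 * γ ≤ a := by rw [ha]; nlinarith
    refine (h.core (a := a) (J := 14 / (1 - ρ)) ha0 (by nlinarith) (by rw [ha]; nlinarith [mul_pos (by linarith : 0 < K1) hγ]) ha1
      ?_ ?_ ?_ x).trans ?_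
    · intro D x hD
      exact be_layer_lt (h.S_aesm le_rfl) hD hρ.le hρ1 ha0 (by linarith) x
    · have : a ^ (-ρ) ≤ (K1 * γ) ^ (-ρ) :=
        Real.rpow_le_rpow_of_nonpos (by positivity) hγa (by linarith)
      calc 1280000000 / ρ * (C₀ + 1) * γ ^ ρ * a ^ (-ρ) ≤ E * γ ^ ρ * (K1 * γ) ^ (-ρ) := by
            rw [hE]; gcongr
        _ = 1 := by
            rw [Real.mul_rpow (by positivity) hγ.le, Real.rpow_neg hγ.le, Real.rpow_neg (by positivity),
              hK1, ← Real.rpow_mul hE0.le, one_div_mul_cancel hρ.ne', Real.rpow_one]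
            field_simp
    · exact be_half_cond hε h.ε_le ha0 (by rw [ha]; nlinarith [mul_pos (by linarith : 0 < K1) hγ])
    · have g1 : 40000000 / ρ * (C₀ + 1) * γ ^ ρ * (14 / (1 - ρ)) ≤
          E * (14 / (1 - ρ)) * (γ ^ ρ + ε + δ) := by
        calc _ ≤ E * γ ^ ρ * (14 / (1 - ρ)) := by
              rw [hE]; gcongr; norm_num
          _ ≤ E * (γ ^ ρ + ε + δ) * (14 / (1 - ρ)) := by gcongr; linarith
          _ = _ := by ring
      have : 0 ≤ γ ^ ρ := by positivity
      nlinarith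
  · refine (be_dist_le_one _ x).trans ?_
    push Not at ha1
    have : 0 ≤ E * (14 / (1 - ρ)) * (γ ^ ρ + ε + δ) := by positivity
    nlinarith

theorem be_core_one {C₀ : ℝ} (hC : 0 ≤ C₀) :
    ∃ K : ℝ, 0 < K ∧ ∀ {Ω : Type} [mΩ : MeasurableSpace Ω] {Q : Measure Ω} [IsProbabilityMeasure Q]
      {n : ℕ} {F : ℕ → MeasurableSpace Ω} {U w : ℕ → Ω → ℝ} {γ ε δ : ℝ}, γ ≤ 1 / 4 →
      BESetup Q n F U w 1 γ ε δ C₀ → ∀ x,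
      |Q.real {ω | beS U n ω ≤ x} - stdNormalCDF x| ≤ K * (γ * |Real.log γ| + ε + δ) := by
  set E : ℝ := 1280000000 * (C₀ + 1) with hE
  have hE0 : 0 < E := by positivity
  have hE1 : 1 ≤ E := by rw [hE]; nlinarith
  set L : ℝ := E + 52428800 ^ 2 + 1 with hL
  refine ⟨2 * (E * 20 + 1638400 * 28 + 202064 * L), by positivity, ?_⟩
  intro Ω mΩ Q _ n F U w γ ε δ hγ4 h x
  have hγ := h.γ_pos
  have hε := h.ε_nonneg
  have hδ := h.δ_nonneg
  set a := E * γ + 52428800 ^ 2 * ε + δ with ha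
  have hlog : |Real.log γ| = Real.log (1 / γ) := by
    rw [one_div, Real.log_inv, abs_of_nonpos (Real.log_nonpos hγ.le (by linarith))]
  have hlog1 : 1 ≤ |Real.log γ| := by
    rw [hlog, Real.le_log_iff_exp_le (by positivity), le_div_iff₀ hγ]
    have := Real.exp_one_lt_d9
    nlinarith
  set T := γ * |Real.log γ| with hT
  have hγT : γ ≤ T := by rw [hT]; nlinarith
  have hT0 : 0 ≤ T := by linarith
  have haL : a ≤ L * (T + ε + δ) := by
    have : E * γ ≤ E * T := by gcongr
    have h3 : 0 ≤ E * (ε + δ) := by positivity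
    rw [ha, hL]; nlinarith
  have ha0 : 0 < a := by positivity
  have hsum : 0 ≤ T + ε + δ := by positivity
  by_cases ha1 : a ≤ 1 / 2
  · have hγa : E * γ ≤ a := by rw [ha]; nlinarith
    have hγa' : γ ≤ a := by nlinarith
    refine (h.core (a := a) (J := 14 + 6 * Real.log (1 / a)) ha0 hγa' (by rw [ha]; nlinarith [mul_pos hE0 hγ]) ha1
      ?_ ?_ ?_ x).trans ?_
    · intro D x hD
      rw [Real.rpow_neg_one]
      exact be_layer_one (h.S_aesm le_rfl) hD ha0 (by linarith) x
    · rw [Real.rpow_neg_one, Real.rpow_one, div_one, ← hE, ← div_eq_mul_inv, div_le_one ha0]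
      exact hγa
    · exact be_half_cond hε h.ε_le ha0 (by rw [ha]; nlinarith [mul_pos hE0 hγ])
    · have g0 : Real.log (1 / a) ≤ |Real.log γ| := by
        rw [hlog]
        exact Real.log_le_log (by positivity) (one_div_le_one_div_of_le hγ hγa')
      have g1 : 40000000 / 1 * (C₀ + 1) * γ ^ (1:ℝ) * (14 + 6 * Real.log (1 / a)) ≤
          E * 20 * (T + ε + δ) := by
        rw [Real.rpow_one, div_one]
        calc _ ≤ 40000000 * (C₀ + 1) * γ * (20 * |Real.log γ|) := by gcongr; linarith
          _ = 40000000 * (C₀ + 1) * (20 * T) := by rw [hT]; ring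
          _ ≤ E * (20 * T) := by rw [hE]; gcongr; norm_num
          _ ≤ _ := by nlinarith [mul_nonneg hE0.le hε, mul_nonneg hE0.le hδ]
      nlinarith
  · refine (be_dist_le_one _ x).trans ?_
    push Not at ha1
    have : 0 ≤ E * 20 * (T + ε + δ) := by positivity
    nlinarith

section Tilt

set_option linter.unusedSectionVars false

/-- a multiplicative martingale -/
structure TiltS {Ω : Type} [mΩ : MeasurableSpace Ω] (P : Measure Ω) (n : ℕ)
    (F : ℕ → MeasurableSpace Ω) (v : ℕ → Ω → ℝ) (C : ℝ) : Prop where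
  mono : Monotone F
  le : ∀ i, F i ≤ mΩ
  hv : ∀ i, i < n → StronglyMeasurable[F (i + 1)] (v i)
  v_nonneg : ∀ i, i < n → ∀ᵐ ω ∂P, 0 ≤ v i ω
  v_le : ∀ i, i < n → ∀ᵐ ω ∂P, v i ω ≤ C
  v_one : ∀ i, i < n → ∀ᵐ ω ∂P, (P[v i|F i]) ω = 1
  C_one : 1 ≤ C

variable {Ω : Type} [mΩ : MeasurableSpace Ω] {P : Measure Ω} [IsProbabilityMeasure P] {n : ℕ}
    {F : ℕ → MeasurableSpace Ω} {v : ℕ → Ω → ℝ} {C : ℝ}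

/-- tilted measure -/
noncomputable def beQ (P : Measure Ω) (v : ℕ → Ω → ℝ) (n : ℕ) : Measure Ω :=
  P.withDensity fun ω => ENNReal.ofReal (∏ i ∈ Finset.range n, v i ω)

lemma TiltS.all (h : TiltS P n F v C) : ∀ᵐ ω ∂P, ∀ i, i < n → 0 ≤ v i ω ∧ v i ω ≤ C := by
  rw [ae_all_iff]; intro i
  by_cases hi : i < n
  · filter_upwards [h.v_nonneg i hi, h.v_le i hi] with ω a b _ using ⟨a, b⟩
  · exact Eventually.of_forall fun ω hi' => absurd hi' hi

lemma TiltS.v_int (h : TiltS P n F v C) {i : ℕ} (hi : i < n) : Integrable (v i) P := by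
  refine be_bdd_int (C := C) ((h.hv i hi).mono (h.le _)).aestronglyMeasurable ?_
  filter_upwards [h.all] with ω hω
  rw [abs_of_nonneg (hω i hi).1]; exact (hω i hi).2

lemma TiltS.prod_meas (h : TiltS P n F v C) {s : Finset ℕ} {k : ℕ} (hk : k ≤ n)
    (hs : ∀ i ∈ s, i < k) : StronglyMeasurable[F k] (fun ω => ∏ i ∈ s, v i ω) :=
  Finset.stronglyMeasurable_fun_prod _ fun i hi =>
    (h.hv i ((hs i hi).trans_le hk)).mono (h.mono (hs i hi))

lemma TiltS.prod_bdd (h : TiltS P n F v C) {s : Finset ℕ} (hs : ∀ i ∈ s, i < n) :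
    ∀ᵐ ω ∂P, 0 ≤ ∏ i ∈ s, v i ω ∧ |∏ i ∈ s, v i ω| ≤ C ^ s.card := by
  filter_upwards [h.all] with ω hω
  have h0 : 0 ≤ ∏ i ∈ s, v i ω := Finset.prod_nonneg fun i hi => (hω i (hs i hi)).1
  refine ⟨h0, ?_⟩
  rw [abs_of_nonneg h0]
  rw [← Finset.prod_const]
  exact Finset.prod_le_prod (fun i hi => (hω i (hs i hi)).1) fun i hi => (hω i (hs i hi)).2

lemma TiltS.tower (h : TiltS P n F v C) {k : ℕ} {G : Ω → ℝ} (hG : StronglyMeasurable[F k] G)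
    (hGi : Integrable G P) : ∀ m, k ≤ m → m ≤ n →
    StronglyMeasurable[F m] (fun ω => (∏ i ∈ Finset.Ico k m, v i ω) * G ω) ∧
    Integrable (fun ω => (∏ i ∈ Finset.Ico k m, v i ω) * G ω) P ∧
    ∫ ω, (∏ i ∈ Finset.Ico k m, v i ω) * G ω ∂P = ∫ ω, G ω ∂P := by
  intro m hkm
  induction m, hkm using Nat.le_induction with
  | base => intro _; simpa using ⟨hG, hGi⟩
  | succ m hkm ih =>
    intro hm
    obtain ⟨i0, i1, i2⟩ := ih (by omega)
    have e : ∀ ω, (∏ i ∈ Finset.Ico k (m + 1), v i ω) * G ω =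
        ((∏ i ∈ Finset.Ico k m, v i ω) * G ω) * v m ω := by
      intro ω; rw [Finset.prod_Ico_succ_top hkm]; ring
    simp only [e]
    have hIntg : Integrable (fun ω => ((∏ i ∈ Finset.Ico k m, v i ω) * G ω) * v m ω) P := by
      have := be_bdd_mul i1 ((h.hv m hm).mono (h.le _)).aestronglyMeasurable (C := C) (by
        filter_upwards [h.all] with ω hω
        rw [abs_of_nonneg (hω m hm).1]; exact (hω m hm).2)
      refine this.congr (Eventually.of_forall fun ω => ?_)
      simp only; ring
    refine ⟨(i0.mono (h.mono (Nat.le_succ m))).mul (h.hv m hm), hIntg, ?_⟩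
    rw [be_pull (h.le m) i0 (h.v_int hm) hIntg, ← i2]
    refine integral_congr_ae ?_
    filter_upwards [h.v_one m hm] with ω hω
    rw [hω, mul_one]

lemma TiltS.Z_meas (h : TiltS P n F v C) : Measurable (fun ω => ∏ i ∈ Finset.range n, v i ω) :=
  ((h.prod_meas le_rfl fun i hi => Finset.mem_range.1 hi).mono (h.le n)).measurable

lemma TiltS.Z_one (h : TiltS P n F v C) : ∫ ω, ∏ i ∈ Finset.range n, v i ω ∂P = 1 := by
  have := (h.tower (k := 0) (G := fun _ => 1) stronglyMeasurable_const (integrable_const _) n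
    (Nat.zero_le _) le_rfl).2.2
  simp only [mul_one, integral_const, probReal_univ, smul_eq_mul] at this
  rw [Finset.range_eq_Ico]; exact this

lemma TiltS.prob (h : TiltS P n F v C) : IsProbabilityMeasure (beQ P v n) := by
  constructor
  rw [beQ, withDensity_apply _ MeasurableSet.univ, Measure.restrict_univ,
    ← ofReal_integral_eq_lintegral_ofReal, h.Z_one, ENNReal.ofReal_one]
  · exact be_bdd_int h.Z_meas.aestronglyMeasurable
      ((h.prod_bdd fun i hi => Finset.mem_range.1 hi).mono fun ω hω => hω.2)
  · exact (h.prod_bdd fun i hi => Finset.mem_range.1 hi).mono fun ω hω => hω.1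

lemma beQ_ac : beQ P v n ≪ P := withDensity_absolutelyContinuous _ _

lemma TiltS.integral_eq (h : TiltS P n F v C) (f : Ω → ℝ) :
    ∫ ω, f ω ∂(beQ P v n) = ∫ ω, (∏ i ∈ Finset.range n, v i ω) * f ω ∂P := by
  rw [beQ, integral_withDensity_eq_integral_toReal_smul h.Z_meas.ennreal_ofReal
    (Eventually.of_forall fun ω => ENNReal.ofReal_lt_top)]
  refine integral_congr_ae ?_
  filter_upwards [h.prod_bdd (s := Finset.range n) fun i hi => Finset.mem_range.1 hi] with ω hω
  rw [ENNReal.toReal_ofReal hω.1, smul_eq_mul]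

lemma TiltS.integrable_of (h : TiltS P n F v C) {i : ℕ} (hi : i < n) {f : Ω → ℝ}
    (hf : Integrable (fun ω => v i ω * f ω) P) : Integrable f (beQ P v n) := by
  rw [beQ, integrable_withDensity_iff_integrable_smul' h.Z_meas.ennreal_ofReal
    (Eventually.of_forall fun ω => ENNReal.ofReal_lt_top)]
  have hs : ∀ j ∈ (Finset.range n).erase i, j < n := fun j hj =>
    Finset.mem_range.1 (Finset.mem_of_mem_erase hj)
  have := be_bdd_mul hf ((h.prod_meas le_rfl hs).mono (h.le n)).aestronglyMeasurable
    ((h.prod_bdd hs).mono fun ω hω => hω.2)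
  refine this.congr ?_
  filter_upwards [h.prod_bdd (s := Finset.range n) fun i hi => Finset.mem_range.1 hi] with ω hω
  rw [ENNReal.toReal_ofReal hω.1, smul_eq_mul, ← Finset.mul_prod_erase _ _ (Finset.mem_range.2 hi)]
  ring

lemma TiltS.integrable_of' (h : TiltS P n F v C) {f : Ω → ℝ}
    (hf : Integrable f P) : Integrable f (beQ P v n) := by
  rw [beQ, integrable_withDensity_iff_integrable_smul' h.Z_meas.ennreal_ofReal
    (Eventually.of_forall fun ω => ENNReal.ofReal_lt_top)]
  have hs : ∀ j ∈ (Finset.range n), j < n := fun j hj => Finset.mem_range.1 hj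
  have := be_bdd_mul hf ((h.prod_meas le_rfl hs).mono (h.le n)).aestronglyMeasurable
    ((h.prod_bdd hs).mono fun ω hω => hω.2)
  refine this.congr ?_
  filter_upwards [h.prod_bdd (s := Finset.range n) fun i hi => Finset.mem_range.1 hi] with ω hω
  rw [ENNReal.toReal_ofReal hω.1, smul_eq_mul]

/-- integral under the tilted measure of an adapted function -/
lemma TiltS.integral_adapted (h : TiltS P n F v C) {k : ℕ} (hk : k ≤ n) {f : Ω → ℝ}
    (hf : StronglyMeasurable[F k] (fun ω => (∏ i ∈ Finset.range k, v i ω) * f ω))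
    (hfi : Integrable (fun ω => (∏ i ∈ Finset.range k, v i ω) * f ω) P) :
    ∫ ω, f ω ∂(beQ P v n) = ∫ ω, (∏ i ∈ Finset.range k, v i ω) * f ω ∂P := by
  rw [h.integral_eq, ← (h.tower hf hfi n hk le_rfl).2.2]
  refine integral_congr_ae (Eventually.of_forall fun ω => ?_)
  simp only
  rw [← mul_assoc, mul_comm (∏ i ∈ Finset.Ico k n, v i ω), Finset.prod_range_mul_prod_Ico _ hk]

lemma TiltS.bayes (h : TiltS P n F v C) {i : ℕ} (hi : i < n) {f : Ω → ℝ}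
    (hfm : StronglyMeasurable[F (i + 1)] f) (hf : Integrable (fun ω => v i ω * f ω) P) :
    (beQ P v n)[f|F i] =ᵐ[beQ P v n] P[fun ω => v i ω * f ω|F i] := by
  classical
  have := h.prob
  symm
  have hs : ∀ j ∈ Finset.range i, j < i := fun j hj => Finset.mem_range.1 hj
  have hZm := h.prod_meas hi.le hs
  have hZb := (h.prod_bdd fun j hj => (hs j hj).trans hi).mono fun ω hω => hω.2
  have hZa := (hZm.mono (h.le i)).aestronglyMeasurable (μ := P)
  refine ae_eq_condExp_of_forall_setIntegral_eq (h.le i) (h.integrable_of hi hf) ?_ ?_ ?_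
  · intro s _ _
    exact (h.integrable_of' integrable_condExp).integrableOn
  · intro s hsm _
    have hsm' := h.le i s hsm
    rw [← integral_indicator hsm', ← integral_indicator hsm']
    have hind : StronglyMeasurable[F i] (s.indicator (fun _ => (1:ℝ))) :=
      stronglyMeasurable_const.indicator hsm
    have hi1 : ∀ ω, |s.indicator (fun _ => (1:ℝ)) ω| ≤ 1 := by
      intro ω; rw [Set.indicator_apply]; split_ifs <;> simp
    have e : ∀ (g : Ω → ℝ) ω, s.indicator g ω = s.indicator (fun _ => (1:ℝ)) ω * g ω := by
      intro g ω; simp only [Set.indicator_apply]; split_ifs <;> simp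
    simp only [e (P[fun ω => v i ω * f ω|F i]), e f]
    have hgm : StronglyMeasurable[F i]
        (fun ω => (∏ i ∈ Finset.range i, v i ω) * s.indicator (fun _ => (1:ℝ)) ω) := hZm.mul hind
    have hga := (hgm.mono (h.le i)).aestronglyMeasurable (μ := P)
    have hgb : ∀ᵐ ω ∂P, |(∏ i ∈ Finset.range i, v i ω) * s.indicator (fun _ => (1:ℝ)) ω| ≤
        C ^ (Finset.range i).card := by
      filter_upwards [hZb] with ω hω
      rw [abs_mul]
      nlinarith [hi1 ω, abs_nonneg (∏ i ∈ Finset.range i, v i ω)]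
    have k1 : Integrable (fun ω => (∏ i ∈ Finset.range i, v i ω) *
        (s.indicator (fun _ => (1:ℝ)) ω * (P[fun ω => v i ω * f ω|F i]) ω)) P := by
      simp only [← mul_assoc]
      exact be_bdd_mul integrable_condExp hga hgb
    have k2 : Integrable (fun ω => ((∏ i ∈ Finset.range i, v i ω) *
        s.indicator (fun _ => (1:ℝ)) ω) * (v i ω * f ω)) P := be_bdd_mul hf hga hgb
    have e2 : ∀ ω, (∏ j ∈ Finset.range (i + 1), v j ω) * (s.indicator (fun _ => (1:ℝ)) ω * f ω) =
        ((∏ i ∈ Finset.range i, v i ω) * s.indicator (fun _ => (1:ℝ)) ω) * (v i ω * f ω) := by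
      intro ω; rw [Finset.prod_range_succ]; ring
    rw [h.integral_adapted (f := fun ω => s.indicator (fun _ => (1:ℝ)) ω *
        (P[fun ω => v i ω * f ω|F i]) ω) hi.le (hZm.mul (hind.mul stronglyMeasurable_condExp)) k1,
      h.integral_adapted (f := fun ω => s.indicator (fun _ => (1:ℝ)) ω * f ω) (k := i + 1) hi ((h.prod_meas hi fun j hj => Finset.mem_range.1 hj).mul
        ((hind.mono (h.mono (Nat.le_succ i))).mul hfm)) (by simpa only [e2] using k2)]
    simp only [e2]
    rw [be_pull (h.le i) hgm hf k2]
    simp only [← mul_assoc]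
  · exact stronglyMeasurable_condExp.aestronglyMeasurable

end Tilt

section Pointwise

lemma pw_exp_neg {x : ℝ} (hx : x ≤ 0) :
    |x| * Real.exp x ≤ 1 ∧ x ^ 2 * Real.exp x ≤ 2 ∧ |x| ^ 3 * Real.exp x ≤ 6 := by
  have h0 : 0 ≤ -x := by linarith
  have e : Real.exp x * Real.exp (-x) = 1 := by rw [← Real.exp_add]; simp
  have hp := Real.exp_pos x
  have h1 := Real.pow_div_factorial_le_exp (-x) h0 1
  have h2 := Real.pow_div_factorial_le_exp (-x) h0 2
  have h3 := Real.pow_div_factorial_le_exp (-x) h0 3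
  norm_num [Nat.factorial] at h1 h2 h3
  rw [abs_of_nonpos hx]
  refine ⟨?_, ?_, ?_⟩ <;> nlinarith

lemma pw_exp_sub_one {x : ℝ} (hx : x ≤ 1 / 2) : |Real.exp x - 1| ≤ 2 * |x| := by
  have h1 := Real.add_one_le_exp x
  rcases le_total x 0 with h | h
  · have : Real.exp x ≤ 1 := Real.exp_le_one_iff.2 h
    rw [abs_of_nonpos (by linarith), abs_of_nonpos h]; linarith
  · have h2 := Real.abs_exp_sub_one_sub_id_le (x := x) (by rw [abs_of_nonneg h]; linarith)
    have h2 := (abs_le.1 h2).2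
    rw [abs_of_nonneg (by linarith), abs_of_nonneg h]; nlinarith

lemma pw_exp_two {x : ℝ} (hx : x ≤ 1 / 2) : Real.exp x ≤ 2 := by
  have := (abs_le.1 (pw_exp_sub_one (x := 1/2) le_rfl)).2
  rw [abs_of_nonneg (by norm_num)] at this
  have := Real.exp_le_exp.2 hx
  linarith

lemma pw_exp_lin {x : ℝ} (hx : x ≤ 1 / 2) : |Real.exp x - 1 - x| ≤ x ^ 2 := by
  rcases le_total (-1) x with h | h
  · exact Real.abs_exp_sub_one_sub_id_le (abs_le.2 ⟨h, by linarith⟩)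
  · have h1 := Real.add_one_le_exp x
    have h2 : Real.exp x ≤ 1 := Real.exp_le_one_iff.2 (by linarith)
    rw [abs_of_nonneg (by linarith)]; nlinarith

/-- `ζ` as a function of `y` -/
noncomputable def zt (y : ℝ) : ℝ := y - y ^ 2 / 2

lemma zt_le (y : ℝ) : zt y ≤ 1 / 2 := by unfold zt; nlinarith [sq_nonneg (y - 1)]

lemma zt_small {y : ℝ} (hy : |y| ≤ 2) : |zt y| ≤ 2 * |y| := by
  have : zt y = y * (1 - y / 2) := by unfold zt; ring
  rw [this, abs_mul, mul_comm]
  refine mul_le_mul_of_nonneg_right ?_ (abs_nonneg y)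
  have := abs_le.1 hy
  exact abs_le.2 ⟨by linarith, by linarith⟩

lemma zt_big {y : ℝ} (hy : 2 ≤ |y|) : zt y ≤ 0 := by
  have : zt y = y * (1 - y / 2) := by unfold zt; ring
  rw [this]
  rcases le_abs.1 hy with h | h <;> nlinarith

lemma pw1 (y : ℝ) : |Real.exp (zt y) - 1 - y| ≤ 5 * y ^ 2 := by
  rcases le_total |y| 2 with h | h
  · have h1 := pw_exp_lin (zt_le y)
    have h2 : (zt y) ^ 2 ≤ 4 * y ^ 2 := by
      rw [← sq_abs, ← sq_abs y]; nlinarith [zt_small h, abs_nonneg (zt y), abs_nonneg y]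
    have : Real.exp (zt y) - 1 - y = (Real.exp (zt y) - 1 - zt y) + (- (y ^ 2 / 2)) := by
      unfold zt; ring
    have h3 := abs_le.1 h1
    rw [this]
    exact abs_le.2 ⟨by nlinarith [sq_nonneg y], by nlinarith [sq_nonneg y]⟩
  · have h1 := Real.exp_pos (zt y)
    have h2 := pw_exp_two (zt_le y)
    have h3 := abs_le.1 (le_refl |y|)
    have h4 : 4 ≤ y ^ 2 := by rw [← sq_abs]; nlinarith
    have h5 : |y| * 2 ≤ y ^ 2 := by rw [← sq_abs]; nlinarith
    exact abs_le.2 ⟨by nlinarith, by nlinarith⟩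

lemma pw2 (y : ℝ) : |zt y * Real.exp (zt y) - y| ≤ 21 * y ^ 2 := by
  rcases le_total |y| 2 with h | h
  · have h1 : |zt y * (Real.exp (zt y) - 1)| ≤ 8 * y ^ 2 := by
      rw [abs_mul, ← sq_abs y]
      have a := pw_exp_sub_one (zt_le y)
      have b := zt_small h
      have c := mul_le_mul b (a.trans (mul_le_mul_of_nonneg_left b two_pos.le)) (abs_nonneg _)
        (by positivity)
      nlinarith
    have : zt y * Real.exp (zt y) - y = zt y * (Real.exp (zt y) - 1) + (- (y ^ 2 / 2)) := by
      unfold zt; ring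
    have h3 := abs_le.1 h1
    rw [this]
    exact abs_le.2 ⟨by nlinarith [sq_nonneg y], by nlinarith [sq_nonneg y]⟩
  · have h1 := (pw_exp_neg (zt_big h)).1
    have h3 : |zt y * Real.exp (zt y)| ≤ 1 := by rwa [abs_mul, abs_of_pos (Real.exp_pos _)]
    have h4 : 4 ≤ y ^ 2 := by rw [← sq_abs]; nlinarith
    have h5 : |y| * 2 ≤ y ^ 2 := by rw [← sq_abs]; nlinarith
    have := abs_sub (zt y * Real.exp (zt y)) y
    nlinarith

variable {ρ : ℝ}

lemma pw_small (h0 : 0 < ρ) (h1 : ρ ≤ 1) {y : ℝ} (hy : |y| ≤ 2) : |y| ^ 3 ≤ 2 * |y| ^ (2 + ρ) := by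
  rcases (abs_nonneg y).eq_or_lt with h | h
  · rw [← h]; norm_num; positivity
  · have e : |y| ^ 3 = |y| ^ (2 + ρ) * |y| ^ (1 - ρ) := by
      rw [← Real.rpow_add h, ← Real.rpow_natCast]; norm_num
    have h2 : |y| ^ (1 - ρ) ≤ 2 := by
      calc |y| ^ (1 - ρ) ≤ 2 ^ (1 - ρ) := Real.rpow_le_rpow h.le hy (by linarith)
        _ ≤ 2 ^ (1:ℝ) := Real.rpow_le_rpow_of_exponent_le (by norm_num) (by linarith)
        _ = 2 := by norm_num
    rw [e]
    have : 0 ≤ |y| ^ (2 + ρ) := by positivity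
    nlinarith

lemma pw_big (h0 : 0 < ρ) {y : ℝ} (hy : 2 ≤ |y|) : y ^ 2 ≤ |y| ^ (2 + ρ) := by
  rw [← sq_abs, ← Real.rpow_natCast]
  exact Real.rpow_le_rpow_of_exponent_le (by linarith) (by norm_num; exact h0.le)

lemma pw3 (h0 : 0 < ρ) (h1 : ρ ≤ 1) (y : ℝ) :
    |zt y ^ 2 * Real.exp (zt y) - y ^ 2| ≤ 84 * |y| ^ (2 + ρ) := by
  rcases le_total |y| 2 with h | h
  · have hs := pw_small h0 h1 h
    have b := zt_small h
    have a := pw_exp_sub_one (zt_le y)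
    have h1 : |zt y ^ 2 * (Real.exp (zt y) - 1)| ≤ 16 * |y| ^ 3 := by
      rw [abs_mul, abs_pow]
      calc |zt y| ^ 2 * |Real.exp (zt y) - 1| ≤ (2 * |y|) ^ 2 * (2 * (2 * |y|)) := by
            gcongr; linarith
        _ = _ := by ring
    have h2 : |zt y ^ 2 - y ^ 2| ≤ 4 * |y| ^ 3 := by
      have e : zt y ^ 2 - y ^ 2 = - (y ^ 2 / 2) * (zt y + y) := by unfold zt; ring
      rw [e, abs_mul, abs_neg, abs_of_nonneg (by positivity), ← sq_abs]
      calc |y| ^ 2 / 2 * |zt y + y| ≤ |y| ^ 2 / 2 * (2 * |y| + |y|) := by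
            gcongr; exact (abs_add_le _ _).trans (by linarith)
        _ ≤ _ := by nlinarith [pow_nonneg (abs_nonneg y) 3]
    have e : zt y ^ 2 * Real.exp (zt y) - y ^ 2 =
      zt y ^ 2 * (Real.exp (zt y) - 1) + (zt y ^ 2 - y ^ 2) := by ring
    rw [e]
    have := abs_add_le (zt y ^ 2 * (Real.exp (zt y) - 1)) (zt y ^ 2 - y ^ 2)
    have : 0 ≤ |y| ^ (2 + ρ) := by positivity
    linarith
  · have h2 := (pw_exp_neg (zt_big h)).2.1
    have h3 : 0 ≤ zt y ^ 2 * Real.exp (zt y) := by positivity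
    have h4 : 4 ≤ y ^ 2 := by rw [← sq_abs]; nlinarith
    have h5 := pw_big h0 h
    exact abs_le.2 ⟨by linarith, by linarith⟩

lemma pw4 (h0 : 0 < ρ) (h1 : ρ ≤ 1) (y : ℝ) :
    |zt y| ^ (2 + ρ) * Real.exp (zt y) ≤ 16 * |y| ^ (2 + ρ) := by
  rcases le_total |y| 2 with h | h
  · have a := pw_exp_two (zt_le y)
    have b : |zt y| ^ (2 + ρ) ≤ (2 * |y|) ^ (2 + ρ) :=
      Real.rpow_le_rpow (abs_nonneg _) (zt_small h) (by linarith)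
    have c : (2 * |y|) ^ (2 + ρ) ≤ 8 * |y| ^ (2 + ρ) := by
      rw [Real.mul_rpow two_pos.le (abs_nonneg _)]
      refine mul_le_mul_of_nonneg_right ?_ (by positivity)
      calc (2:ℝ) ^ (2 + ρ) ≤ 2 ^ (3:ℝ) := Real.rpow_le_rpow_of_exponent_le (by norm_num) (by linarith)
        _ = 8 := by norm_num
    have d := Real.exp_pos (zt y)
    have : 0 ≤ |y| ^ (2 + ρ) := by positivity
    have : 0 ≤ |zt y| ^ (2 + ρ) := by positivity
    nlinarith
  · obtain ⟨-, h2, h3⟩ := pw_exp_neg (zt_big h)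
    have h4 : 4 ≤ y ^ 2 := by rw [← sq_abs]; nlinarith
    have h5 := pw_big h0 h
    have d := Real.exp_pos (zt y)
    have : |zt y| ^ (2 + ρ) ≤ zt y ^ 2 + |zt y| ^ 3 := by
      rw [← sq_abs]
      rcases le_total |zt y| 1 with k | k
      · rcases (abs_nonneg (zt y)).eq_or_lt with k0 | k0
        · rw [← k0, Real.zero_rpow (by linarith)]; norm_num
        have : |zt y| ^ (2 + ρ) ≤ |zt y| ^ (2:ℝ) :=
          Real.rpow_le_rpow_of_exponent_ge k0 k (by linarith)
        rw [Real.rpow_two] at this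
        have : 0 ≤ |zt y| ^ 3 := by positivity
        linarith
      · have : |zt y| ^ (2 + ρ) ≤ |zt y| ^ (3:ℝ) :=
          Real.rpow_le_rpow_of_exponent_le k (by linarith)
        have e : |zt y| ^ (3:ℝ) = |zt y| ^ 3 := by rw [← Real.rpow_natCast]; norm_num
        rw [e] at this
        exact this.trans (le_add_of_nonneg_left (by positivity))
    nlinarith

end Pointwise

section OneStep

set_option linter.unusedSectionVars false

variable {Ω : Type} {m : MeasurableSpace Ω} [mΩ : MeasurableSpace Ω] {P : Measure Ω}
  [IsProbabilityMeasure P]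

lemma be_ce_pull (hm : m ≤ mΩ) {g f : Ω → ℝ} {C : ℝ} (hg : StronglyMeasurable[m] g)
    (hC : ∀ᵐ ω ∂P, |g ω| ≤ C) (hf : Integrable f P) :
    P[fun ω => g ω * f ω|m] =ᵐ[P] fun ω => g ω * (P[f|m]) ω :=
  condExp_mul_of_stronglyMeasurable_left hg
    (be_bdd_mul hf (hg.mono hm).aestronglyMeasurable hC) hf

lemma be_ce_abs {f f0 h : Ω → ℝ} (hf : Integrable f P) (hf0 : Integrable f0 P)
    (hh : Integrable h P) (H : ∀ ω, |f ω - f0 ω| ≤ h ω) :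
    ∀ᵐ ω ∂P, |(P[f|m]) ω - (P[f0|m]) ω| ≤ (P[h|m]) ω := by
  have h1 : P[f - f0|m] ≤ᵐ[P] P[h|m] := condExp_mono (hf.sub hf0) hh
    (Eventually.of_forall fun ω => (abs_le.1 (H ω)).2)
  have h2 : P[f0 - f|m] ≤ᵐ[P] P[h|m] := condExp_mono (hf0.sub hf) hh
    (Eventually.of_forall fun ω => by
      have := (abs_le.1 (H ω)).1
      simp only [Pi.sub_apply]; linarith)
  filter_upwards [h1, h2, condExp_sub hf hf0 m, condExp_sub hf0 hf m] with ω a b c d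
  rw [c, Pi.sub_apply] at a
  rw [d, Pi.sub_apply] at b
  exact abs_le.2 ⟨by linarith, by linarith⟩

lemma be_ce_const (c : ℝ) (f : Ω → ℝ) :
    P[fun ω => c * f ω|m] =ᵐ[P] fun ω => c * (P[f|m]) ω := condExp_smul c f m

lemma be_bern {ρ t : ℝ} (h0 : 0 < ρ) (ht : 0 < t) (y : ℝ) :
    t ^ ρ * ((1 + ρ / 2) * y ^ 2 - ρ / 2 * t ^ 2) ≤ |y| ^ (2 + ρ) := by
  have hz : -1 ≤ y ^ 2 / t ^ 2 - 1 := by have : 0 ≤ y ^ 2 / t ^ 2 := by positivity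
                                         linarith
  have h := one_add_mul_self_le_rpow_one_add hz (p := 1 + ρ / 2) (by linarith)
  have e : (1 + (y ^ 2 / t ^ 2 - 1)) ^ (1 + ρ / 2) = |y| ^ (2 + ρ) / t ^ (2 + ρ) := by
    rw [add_sub_cancel, ← sq_abs, ← div_pow, ← Real.div_rpow (abs_nonneg _) ht.le,
      ← Real.rpow_natCast, ← Real.rpow_mul (by positivity)]
    congr 1; push_cast; ring
  rw [e, le_div_iff₀ (by positivity), Real.rpow_add ht, Real.rpow_two] at h
  refine le_trans (le_of_eq ?_) h
  field_simp; ring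

lemma be_w_le {ρ t : ℝ} (h0 : 0 < ρ) (ht : 0 < t) {y : Ω → ℝ}
    (hy2 : Integrable (fun ω => y ω ^ 2) P) (hyp : Integrable (fun ω => |y ω| ^ (2 + ρ)) P)
    (h : ∀ᵐ ω ∂P, (P[fun ω => |y ω| ^ (2 + ρ)|m]) ω ≤ t ^ ρ * (P[fun ω => y ω ^ 2|m]) ω)
    (hm : m ≤ mΩ) :
    ∀ᵐ ω ∂P, (P[fun ω => y ω ^ 2|m]) ω ≤ t ^ 2 := by
  have hi1 : Integrable (fun ω => (t ^ ρ * (1 + ρ / 2)) * y ω ^ 2) P := hy2.const_mul _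
  have hi2 : Integrable (fun _ : Ω => t ^ ρ * (ρ / 2) * t ^ 2) P := integrable_const _
  have h1 : P[(fun ω => (t ^ ρ * (1 + ρ / 2)) * y ω ^ 2) - fun _ => t ^ ρ * (ρ / 2) * t ^ 2|m]
      ≤ᵐ[P] P[fun ω => |y ω| ^ (2 + ρ)|m] := by
    refine condExp_mono (hi1.sub hi2) hyp (Eventually.of_forall fun ω => ?_)
    refine le_trans (le_of_eq ?_) (be_bern h0 ht (y ω))
    simp only [Pi.sub_apply]; ring
  filter_upwards [h, h1, condExp_sub hi1 hi2 m,
    be_ce_const (P := P) (m := m) (t ^ ρ * (1 + ρ / 2)) (fun ω => y ω ^ 2)] with ω a b c d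
  rw [c, Pi.sub_apply, d, condExp_const hm] at b
  have hT : 0 < t ^ ρ := by positivity
  have : t ^ ρ * (ρ / 2) * (P[fun ω => y ω ^ 2|m]) ω ≤ t ^ ρ * (ρ / 2) * t ^ 2 := by linarith
  exact le_of_mul_le_mul_left this (by positivity)

/-- one-step hypotheses -/
structure OneS (P : Measure Ω) (m : MeasurableSpace Ω) (y : Ω → ℝ) (ρ T : ℝ) : Prop where
  hm : m ≤ mΩ
  hy : Measurable[mΩ] y
  h0 : 0 < ρ
  h1 : ρ ≤ 1
  T0 : 0 ≤ T
  y2 : Integrable (fun ω => y ω ^ 2) P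
  yp : Integrable (fun ω => |y ω| ^ (2 + ρ)) P
  mean : P[y|m] =ᵐ[P] 0
  p3 : ∀ᵐ ω ∂P, (P[fun ω => |y ω| ^ (2 + ρ)|m]) ω ≤ T * (P[fun ω => y ω ^ 2|m]) ω
  WT : ∀ᵐ ω ∂P, (P[fun ω => y ω ^ 2|m]) ω ≤ T
  W1 : ∀ᵐ ω ∂P, (P[fun ω => y ω ^ 2|m]) ω ≤ 1

/-- normalisation -/
noncomputable def osM {Ω : Type} (m : MeasurableSpace Ω) {mΩ : MeasurableSpace Ω} (P : Measure Ω)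
    (y : Ω → ℝ) : Ω → ℝ :=
  P[fun ω => Real.exp (zt (y ω))|m]

/-- drift -/
noncomputable def osb {Ω : Type} (m : MeasurableSpace Ω) {mΩ : MeasurableSpace Ω} (P : Measure Ω)
    (y : Ω → ℝ) : Ω → ℝ := fun ω =>
  (P[fun ω => zt (y ω) * Real.exp (zt (y ω))|m]) ω / osM m P y ω

variable {y : Ω → ℝ} {ρ T : ℝ}

lemma OneS.W0 (h : OneS P m y ρ T) : ∀ᵐ ω ∂P, 0 ≤ (P[fun ω => y ω ^ 2|m]) ω :=
  condExp_nonneg (Eventually.of_forall fun ω => sq_nonneg _)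

lemma OneS.yi (h : OneS P m y ρ T) : Integrable y P := by
  refine Integrable.mono' ((integrable_const (1:ℝ)).add h.y2) h.hy.aestronglyMeasurable
    (Eventually.of_forall fun ω => ?_)
  simp only [Pi.add_apply, Real.norm_eq_abs]
  rw [← sq_abs]; nlinarith [sq_nonneg (|y ω| - 1), abs_nonneg (y ω)]

lemma OneS.zm (h : OneS P m y ρ T) : Measurable fun ω => zt (y ω) := by
  unfold zt; exact h.hy.sub ((h.hy.pow_const 2).div_const 2)

lemma OneS.em (h : OneS P m y ρ T) : Measurable fun ω => Real.exp (zt (y ω)) := h.zm.exp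

lemma OneS.ei (h : OneS P m y ρ T) : Integrable (fun ω => Real.exp (zt (y ω))) P :=
  be_bdd_int h.em.aestronglyMeasurable (C := 2) (Eventually.of_forall fun ω => by
    rw [abs_of_pos (Real.exp_pos _)]; exact pw_exp_two (zt_le _))

lemma OneS.zei (h : OneS P m y ρ T) :
    Integrable (fun ω => zt (y ω) * Real.exp (zt (y ω))) P := by
  refine Integrable.mono' (h.yi.abs.add (h.y2.const_mul 21))
    (h.zm.mul h.em).aestronglyMeasurable (Eventually.of_forall fun ω => ?_)
  have := pw2 (y ω)
  have h2 := abs_add_le (zt (y ω) * Real.exp (zt (y ω)) - y ω) (y ω)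
  rw [sub_add_cancel] at h2
  simp only [Pi.add_apply, Real.norm_eq_abs]; linarith

lemma OneS.z2ei (h : OneS P m y ρ T) :
    Integrable (fun ω => zt (y ω) ^ 2 * Real.exp (zt (y ω))) P := by
  refine Integrable.mono' (h.y2.add (h.yp.const_mul 84))
    ((h.zm.pow_const 2).mul h.em).aestronglyMeasurable (Eventually.of_forall fun ω => ?_)
  have := (abs_le.1 (pw3 h.h0 h.h1 (y ω))).2
  rw [Real.norm_eq_abs, abs_of_nonneg (by positivity)]
  simp only [Pi.add_apply]; linarith

lemma OneS.zpei (h : OneS P m y ρ T) :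
    Integrable (fun ω => |zt (y ω)| ^ (2 + ρ) * Real.exp (zt (y ω))) P := by
  refine Integrable.mono' (h.yp.const_mul 16)
    ((h.zm.abs.pow_const _).mul h.em).aestronglyMeasurable (Eventually.of_forall fun ω => ?_)
  rw [Real.norm_eq_abs, abs_of_nonneg (by positivity)]
  exact pw4 h.h0 h.h1 _

lemma OneS.M1 (h : OneS P m y ρ T) :
    ∀ᵐ ω ∂P, |osM m P y ω - 1| ≤ 5 * (P[fun ω => y ω ^ 2|m]) ω := by
  have h1 : Integrable (fun ω => 1 + y ω) P := (integrable_const _).add h.yi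
  have := be_ce_abs (m := m) h.ei h1 (h.y2.const_mul 5) fun ω => by
    have := pw1 (y ω); rwa [sub_sub] at this
  filter_upwards [this, condExp_add (integrable_const (1:ℝ)) h.yi m, h.mean,
    be_ce_const (P := P) (m := m) 5 (fun ω => y ω ^ 2)] with ω a b c d
  have e : (P[fun ω => 1 + y ω|m]) ω = 1 := by
    have b' : (P[fun ω => 1 + y ω|m]) ω = _ := b
    rw [b', Pi.add_apply, c, condExp_const h.hm]; simp
  rw [e, d] at a
  exact a

lemma OneS.M2 (h : OneS P m y ρ T) : ∀ᵐ ω ∂P, 1 / 2 ≤ osM m P y ω := by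
  have h1 : Integrable (fun ω => 1 + y ω) P := (integrable_const _).add h.yi
  have h2 : Integrable (fun ω => (1 / 2) * y ω ^ 2) P := h.y2.const_mul _
  have k : P[(fun ω => 1 + y ω) - fun ω => (1 / 2) * y ω ^ 2|m] ≤ᵐ[P] osM m P y := by
    refine condExp_mono (h1.sub h2) h.ei (Eventually.of_forall fun ω => ?_)
    have := Real.add_one_le_exp (zt (y ω))
    refine le_trans (le_of_eq ?_) this
    simp only [Pi.sub_apply, zt]; ring
  filter_upwards [k, condExp_sub h1 h2 m, condExp_add (integrable_const (1:ℝ)) h.yi m, h.mean,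
    be_ce_const (P := P) (m := m) (1 / 2) (fun ω => y ω ^ 2), h.W1] with ω k a b c d f
  have e : (P[fun ω => 1 + y ω|m]) ω = 1 := by
    have b' : (P[fun ω => 1 + y ω|m]) ω = _ := b
    rw [b', Pi.add_apply, c, condExp_const h.hm]; simp
  rw [a, Pi.sub_apply, e, d] at k
  linarith

lemma OneS.A1 (h : OneS P m y ρ T) :
    ∀ᵐ ω ∂P, |(P[fun ω => zt (y ω) * Real.exp (zt (y ω))|m]) ω| ≤
      21 * (P[fun ω => y ω ^ 2|m]) ω := by
  filter_upwards [be_ce_abs (m := m) h.zei h.yi (h.y2.const_mul 21) fun ω => pw2 (y ω), h.mean,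
    be_ce_const (P := P) (m := m) 21 (fun ω => y ω ^ 2)] with ω a c d
  rw [c, d] at a
  simpa using a

lemma OneS.A2 (h : OneS P m y ρ T) :
    ∀ᵐ ω ∂P, |(P[fun ω => zt (y ω) ^ 2 * Real.exp (zt (y ω))|m]) ω - (P[fun ω => y ω ^ 2|m]) ω| ≤
      84 * T * (P[fun ω => y ω ^ 2|m]) ω := by
  filter_upwards [be_ce_abs (m := m) h.z2ei h.y2 (h.yp.const_mul 84) fun ω => pw3 h.h0 h.h1 (y ω),
    be_ce_const (P := P) (m := m) 84 (fun ω => |y ω| ^ (2 + ρ)), h.p3] with ω a d e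
  rw [d] at a
  linarith

lemma OneS.A3 (h : OneS P m y ρ T) :
    ∀ᵐ ω ∂P, (P[fun ω => |zt (y ω)| ^ (2 + ρ) * Real.exp (zt (y ω))|m]) ω ≤
      16 * T * (P[fun ω => y ω ^ 2|m]) ω := by
  have k : P[fun ω => |zt (y ω)| ^ (2 + ρ) * Real.exp (zt (y ω))|m] ≤ᵐ[P]
    P[fun ω => 16 * |y ω| ^ (2 + ρ)|m] :=
    condExp_mono h.zpei (h.yp.const_mul 16) (Eventually.of_forall fun ω => pw4 h.h0 h.h1 _)
  filter_upwards [k, be_ce_const (P := P) (m := m) 16 (fun ω => |y ω| ^ (2 + ρ)), h.p3] with ω a d e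
  rw [d] at a
  linarith

lemma OneS.b1 (h : OneS P m y ρ T) :
    ∀ᵐ ω ∂P, |osb m P y ω| ≤ 42 * (P[fun ω => y ω ^ 2|m]) ω := by
  filter_upwards [h.A1, h.M2] with ω a b
  rw [osb, abs_div, abs_of_pos (a := osM m P y ω) (by linarith), div_le_iff₀ (by linarith)]
  have := abs_nonneg ((P[fun ω => zt (y ω) * Real.exp (zt (y ω))|m]) ω)
  nlinarith

/-- reciprocal normalisation -/
noncomputable def osr {Ω : Type} (m : MeasurableSpace Ω) {mΩ : MeasurableSpace Ω} (P : Measure Ω)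
    (y : Ω → ℝ) : Ω → ℝ := fun ω =>
  (osM m P y ω)⁻¹

lemma osr_meas : StronglyMeasurable[m] (osr m P y) := by
  have : Measurable[m] (osM m P y) := stronglyMeasurable_condExp.measurable
  exact this.inv.stronglyMeasurable

lemma osb_meas : StronglyMeasurable[m] (osb m P y) := by
  have : Measurable[m] (osM m P y) := stronglyMeasurable_condExp.measurable
  have h2 : Measurable[m] (P[fun ω => zt (y ω) * Real.exp (zt (y ω))|m]) :=
    stronglyMeasurable_condExp.measurable
  exact (h2.div this).stronglyMeasurable

lemma OneS.r (h : OneS P m y ρ T) : ∀ᵐ ω ∂P, 0 ≤ osr m P y ω ∧ osr m P y ω ≤ 2 ∧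
    |osr m P y ω| ≤ 2 ∧ osr m P y ω * osM m P y ω = 1 := by
  filter_upwards [h.M2] with ω a
  have a0 : 0 < osM m P y ω := by linarith
  have b : osr m P y ω ≤ 2 := by
    rw [osr, inv_le_comm₀ a0 two_pos]; linarith
  have c : 0 ≤ osr m P y ω := by rw [osr]; positivity
  exact ⟨c, b, by rwa [abs_of_nonneg c], inv_mul_cancel₀ a0.ne'⟩

end OneStep

section OneStep2

set_option linter.unusedSectionVars false

variable {Ω : Type} {m : MeasurableSpace Ω} [mΩ : MeasurableSpace Ω] {P : Measure Ω}
  [IsProbabilityMeasure P] {y : Ω → ℝ} {ρ T : ℝ}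

/-- one-step density -/
noncomputable def osv {Ω : Type} (m : MeasurableSpace Ω) {mΩ : MeasurableSpace Ω} (P : Measure Ω)
    (y : Ω → ℝ) : Ω → ℝ := fun ω => Real.exp (zt (y ω)) / osM m P y ω

/-- centred increments -/
noncomputable def ose {Ω : Type} (m : MeasurableSpace Ω) {mΩ : MeasurableSpace Ω} (P : Measure Ω)
    (y : Ω → ℝ) : Ω → ℝ := fun ω => zt (y ω) - osb m P y ω

lemma osv_eq (ω : Ω) : osv m P y ω = osr m P y ω * Real.exp (zt (y ω)) := by
  rw [osv, osr, div_eq_mul_inv, mul_comm]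

lemma OneS.v0 (h : OneS P m y ρ T) : ∀ᵐ ω ∂P, 0 ≤ osv m P y ω := by
  filter_upwards [h.r] with ω hr
  rw [osv_eq]; exact mul_nonneg hr.1 (Real.exp_pos _).le

lemma OneS.v4 (h : OneS P m y ρ T) : ∀ᵐ ω ∂P, osv m P y ω ≤ 4 := by
  filter_upwards [h.r] with ω hr
  rw [osv_eq]
  have := pw_exp_two (zt_le (y ω))
  have := Real.exp_pos (zt (y ω))
  nlinarith [hr.1, hr.2.1]

lemma OneS.vone (h : OneS P m y ρ T) : ∀ᵐ ω ∂P, (P[osv m P y|m]) ω = 1 := by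
  have e : osv m P y = fun ω => osr m P y ω * Real.exp (zt (y ω)) := funext osv_eq
  rw [e]
  filter_upwards [be_ce_pull h.hm osr_meas (h.r.mono fun ω a => a.2.2.1) h.ei, h.r] with ω a b
  rw [a]; exact b.2.2.2

lemma OneS.b42 (h : OneS P m y ρ T) : ∀ᵐ ω ∂P, |osb m P y ω| ≤ 42 := by
  filter_upwards [h.b1, h.W1] with ω a b
  linarith

lemma OneS.bM (h : OneS P m y ρ T) : ∀ᵐ ω ∂P,
    osr m P y ω * (P[fun ω => zt (y ω) * Real.exp (zt (y ω))|m]) ω = osb m P y ω := by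
  refine Eventually.of_forall fun ω => ?_
  rw [osr, osb, div_eq_mul_inv, mul_comm]

lemma OneS.rk (h : OneS P m y ρ T) {g : Ω → ℝ} {C : ℝ} (hg : StronglyMeasurable[m] g)
    (hC : ∀ᵐ ω ∂P, |g ω| ≤ C) {f : Ω → ℝ} (hf : Integrable f P) :
    Integrable (fun ω => (osr m P y ω * g ω) * f ω) P ∧
    P[fun ω => (osr m P y ω * g ω) * f ω|m] =ᵐ[P]
      fun ω => (osr m P y ω * g ω) * (P[f|m]) ω := by
  have hm : StronglyMeasurable[m] fun ω => osr m P y ω * g ω := osr_meas.mul hg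
  have hb : ∀ᵐ ω ∂P, |osr m P y ω * g ω| ≤ 2 * C := by
    filter_upwards [h.r, hC] with ω a b
    rw [abs_mul]
    exact mul_le_mul a.2.2.1 b (abs_nonneg _) two_pos.le
  exact ⟨be_bdd_mul hf (hm.mono h.hm).aestronglyMeasurable hb, be_ce_pull h.hm hm hb hf⟩

lemma OneS.c1 (h : OneS P m y ρ T) : Integrable (fun ω => osv m P y ω * ose m P y ω) P ∧
    P[fun ω => osv m P y ω * ose m P y ω|m] =ᵐ[P] 0 := by
  have e : (fun ω => osv m P y ω * ose m P y ω) =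
      (fun ω => (osr m P y ω * 1) * (zt (y ω) * Real.exp (zt (y ω)))) -
      fun ω => (osr m P y ω * osb m P y ω) * Real.exp (zt (y ω)) := by
    funext ω; rw [osv_eq, ose]; simp only [Pi.sub_apply]; ring
  obtain ⟨i1, p1⟩ := h.rk (g := fun _ => 1) (C := 1) stronglyMeasurable_const (by simp) h.zei
  obtain ⟨i2, p2⟩ := h.rk osb_meas h.b42 h.ei
  rw [e]
  refine ⟨i1.sub i2, ?_⟩
  filter_upwards [condExp_sub i1 i2 m, p1, p2, h.bM, h.r] with ω a b c d f
  rw [a, Pi.sub_apply, b, c, mul_one, d, mul_right_comm]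
  have := f.2.2.2
  rw [osM] at this
  rw [this]; simp

lemma OneS.c2 (h : OneS P m y ρ T) : Integrable (fun ω => osv m P y ω * ose m P y ω ^ 2) P ∧
    ∀ᵐ ω ∂P, |(P[fun ω => osv m P y ω * ose m P y ω ^ 2|m]) ω - (P[fun ω => y ω ^ 2|m]) ω| ≤
      2000 * T * (P[fun ω => y ω ^ 2|m]) ω := by
  have e : (fun ω => osv m P y ω * ose m P y ω ^ 2) =
      ((fun ω => (osr m P y ω * 1) * (zt (y ω) ^ 2 * Real.exp (zt (y ω)))) -
      fun ω => (osr m P y ω * (2 * osb m P y ω)) * (zt (y ω) * Real.exp (zt (y ω)))) +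
      fun ω => (osr m P y ω * osb m P y ω ^ 2) * Real.exp (zt (y ω)) := by
    funext ω; rw [osv_eq, ose]; simp only [Pi.sub_apply, Pi.add_apply]; ring
  obtain ⟨i1, p1⟩ := h.rk (g := fun _ => 1) (C := 1) stronglyMeasurable_const (by simp) h.z2ei
  obtain ⟨i2, p2⟩ := h.rk (g := fun ω => 2 * osb m P y ω) (C := 84) (osb_meas.const_mul 2) (by
    filter_upwards [h.b42] with ω a
    rw [abs_mul, abs_two]; linarith) h.zei
  obtain ⟨i3, p3⟩ := h.rk (g := fun ω => osb m P y ω ^ 2) (C := 42 ^ 2) (osb_meas.pow 2) (by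
    filter_upwards [h.b42] with ω a
    rw [abs_pow]; exact pow_le_pow_left₀ (abs_nonneg _) a 2) h.ei
  rw [e]
  refine ⟨(i1.sub i2).add i3, ?_⟩
  filter_upwards [condExp_add (i1.sub i2) i3 m, condExp_sub i1 i2 m, p1, p2, p3, h.bM, h.r,
    h.A2, h.b1, h.M1, h.W0, h.WT] with ω a a' b c d e f k1 k2 k3 k4 k5
  rw [a, Pi.add_apply, a', Pi.sub_apply, b, c, d]
  change |osr m P y ω * 1 * _ - osr m P y ω * (2 * osb m P y ω) * _ +
    osr m P y ω * osb m P y ω ^ 2 * osM m P y ω - _| ≤ _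
  set W := (P[fun ω => y ω ^ 2|m]) ω
  set r := osr m P y ω
  set B := osb m P y ω
  set M := osM m P y ω
  set Z2 := (P[fun ω => zt (y ω) ^ 2 * Real.exp (zt (y ω))|m]) ω
  set Z1 := (P[fun ω => zt (y ω) * Real.exp (zt (y ω))|m]) ω
  obtain ⟨f0, f1, -, f3⟩ := f
  have e1 : r * 1 * Z2 - r * (2 * B) * Z1 + r * B ^ 2 * M - W =
      r * (Z2 - W) + (- (r * (M - 1) * W) - B ^ 2) := by
    linear_combination (B ^ 2 + W) * f3 - 2 * B * e
  rw [e1]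
  have hT := h.T0
  have g1 : |r * (Z2 - W)| ≤ 168 * T * W := by
    rw [abs_mul, abs_of_nonneg f0]
    have : 0 ≤ T * W := by positivity
    nlinarith [abs_nonneg (Z2 - W)]
  have hWW : W * W ≤ T * W := mul_le_mul_of_nonneg_right k5 k4
  have g2 : |r * (M - 1) * W| ≤ 10 * (T * W) := by
    rw [abs_mul, abs_mul, abs_of_nonneg f0, abs_of_nonneg k4]
    have : r * |M - 1| ≤ 2 * (5 * W) := mul_le_mul f1 k3 (abs_nonneg _) two_pos.le
    nlinarith
  have g3 : B ^ 2 ≤ 1764 * (T * W) := by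
    rw [← sq_abs]
    have := pow_le_pow_left₀ (abs_nonneg B) k2 2
    nlinarith
  have g4 := sq_nonneg B
  have : 0 ≤ T * W := by positivity
  have g1 := abs_le.1 g1
  have g2 := abs_le.1 g2
  exact abs_le.2 ⟨by nlinarith, by nlinarith⟩

lemma pw_pow_add (h0 : 0 < ρ) (h1 : ρ ≤ 1) (a b : ℝ) :
    |a - b| ^ (2 + ρ) ≤ 8 * (|a| ^ (2 + ρ) + |b| ^ (2 + ρ)) := by
  have k1 : |a - b| ≤ 2 * max |a| |b| := by
    have := abs_sub a b
    have := le_max_left |a| |b|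
    have := le_max_right |a| |b|
    linarith
  have hm : 0 ≤ max |a| |b| := (abs_nonneg a).trans (le_max_left _ _)
  have k2 := Real.rpow_le_rpow (abs_nonneg _) k1 (z := 2 + ρ) (by linarith)
  rw [Real.mul_rpow two_pos.le hm] at k2
  have k3 : (2:ℝ) ^ (2 + ρ) ≤ 8 := by
    calc (2:ℝ) ^ (2 + ρ) ≤ 2 ^ (3:ℝ) := Real.rpow_le_rpow_of_exponent_le (by norm_num) (by linarith)
      _ = 8 := by norm_num
  have k4 : (max |a| |b|) ^ (2 + ρ) ≤ |a| ^ (2 + ρ) + |b| ^ (2 + ρ) := by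
    have ha : 0 ≤ |a| ^ (2 + ρ) := by positivity
    have hb : 0 ≤ |b| ^ (2 + ρ) := by positivity
    rcases max_choice |a| |b| with h | h <;> rw [h] <;> linarith
  have k5 : 0 ≤ (max |a| |b|) ^ (2 + ρ) := by positivity
  nlinarith

lemma OneS.c3 (h : OneS P m y ρ T) :
    Integrable (fun ω => osv m P y ω * |ose m P y ω| ^ (2 + ρ)) P ∧
    ∀ᵐ ω ∂P, (P[fun ω => osv m P y ω * |ose m P y ω| ^ (2 + ρ)|m]) ω ≤
      600000 * T * (P[fun ω => y ω ^ 2|m]) ω := by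
  have h0 := h.h0
  have h1 := h.h1
  obtain ⟨i1, p1⟩ := h.rk (g := fun _ => 8) (C := 8) stronglyMeasurable_const (by simp) h.zpei
  have hbm : StronglyMeasurable[m] fun ω => 8 * |osb m P y ω| ^ (2 + ρ) :=
    (continuous_const.mul (continuous_abs.rpow_const fun _ => Or.inr
      (by linarith))).comp_stronglyMeasurable osb_meas
  obtain ⟨i3, p3⟩ := h.rk (C := 8 * 42 ^ (2 + ρ)) hbm (by
    filter_upwards [h.b42] with ω a
    rw [abs_of_nonneg (by positivity)]
    have := Real.rpow_le_rpow (abs_nonneg _) a (z := 2 + ρ) (by linarith)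
    linarith) h.ei
  have hle : ∀ᵐ ω ∂P, osv m P y ω * |ose m P y ω| ^ (2 + ρ) ≤
      ((fun ω => (osr m P y ω * 8) * (|zt (y ω)| ^ (2 + ρ) * Real.exp (zt (y ω)))) +
      fun ω => (osr m P y ω * (8 * |osb m P y ω| ^ (2 + ρ))) * Real.exp (zt (y ω))) ω := by
    filter_upwards [h.v0] with ω a
    have := mul_le_mul_of_nonneg_left (pw_pow_add h0 h1 (zt (y ω)) (osb m P y ω)) a
    refine le_trans this (le_of_eq ?_)
    rw [osv_eq]; simp only [Pi.add_apply]; ring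
  have hmeas : Measurable[mΩ] fun ω => osv m P y ω * |ose m P y ω| ^ (2 + ρ) := by
    have hb : Measurable[mΩ] (osb m P y) := (osb_meas.mono h.hm).measurable
    have hr : Measurable[mΩ] (osr m P y) := (osr_meas.mono h.hm).measurable
    have : Measurable[mΩ] (osv m P y) := by
      rw [show osv m P y = fun ω => osr m P y ω * Real.exp (zt (y ω)) from funext osv_eq]
      exact hr.mul h.em
    exact this.mul ((h.zm.sub hb).abs.pow_const _)
  have hIntg : Integrable (fun ω => osv m P y ω * |ose m P y ω| ^ (2 + ρ)) P := by
    refine Integrable.mono' (i1.add i3) hmeas.aestronglyMeasurable ?_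
    filter_upwards [hle, h.v0] with ω a b
    rw [Real.norm_eq_abs, abs_of_nonneg (mul_nonneg b (by positivity))]
    exact a
  refine ⟨hIntg, ?_⟩
  filter_upwards [condExp_mono (m := m) hIntg (i1.add i3) hle, condExp_add i1 i3 m, p1, p3, h.r,
    h.A3, h.b1, h.W0, h.WT, h.W1] with ω a b c d f k1 k2 k3 k4 k5
  rw [b, Pi.add_apply, c, d] at a
  refine a.trans ?_
  change osr m P y ω * 8 * _ + osr m P y ω * (8 * |osb m P y ω| ^ (2 + ρ)) * osM m P y ω ≤ _
  set W := (P[fun ω => y ω ^ 2|m]) ω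
  obtain ⟨f0, f1, -, f3⟩ := f
  have hT := h.T0
  have g1 : |osb m P y ω| ^ (2 + ρ) ≤ 74088 * (T * W) := by
    calc |osb m P y ω| ^ (2 + ρ) ≤ (42 * W) ^ (2 + ρ) :=
          Real.rpow_le_rpow (abs_nonneg _) k2 (by linarith)
      _ = 42 ^ (2 + ρ) * W ^ (2 + ρ) := Real.mul_rpow (by norm_num) k3
      _ ≤ 74088 * (T * W) := by
          have q1 : (42:ℝ) ^ (2 + ρ) ≤ 74088 := by
            calc (42:ℝ) ^ (2 + ρ) ≤ 42 ^ (3:ℝ) :=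
                  Real.rpow_le_rpow_of_exponent_le (by norm_num) (by linarith)
              _ = 74088 := by norm_num
          have q2 : W ^ (2 + ρ) ≤ T * W := by
            have : W ^ (2 + ρ) ≤ W ^ (2:ℝ) :=
              Real.rpow_le_rpow_of_exponent_ge' k3 k5 (by norm_num) (by linarith)
            rw [Real.rpow_two] at this
            nlinarith
          exact mul_le_mul q1 q2 (by positivity) (by norm_num)
  have e2 : osr m P y ω * (8 * |osb m P y ω| ^ (2 + ρ)) * osM m P y ω =
      8 * |osb m P y ω| ^ (2 + ρ) := by linear_combination (8 * |osb m P y ω| ^ (2 + ρ)) * f3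
  have e3 : osr m P y ω * 8 * (P[fun ω => |zt (y ω)| ^ (2 + ρ) * Real.exp (zt (y ω))|m]) ω ≤
      2 * 8 * (16 * T * W) := by
    have : 0 ≤ T * W := by positivity
    have q : osr m P y ω * 8 ≤ 2 * 8 := by linarith
    calc _ ≤ osr m P y ω * 8 * (16 * T * W) := mul_le_mul_of_nonneg_left k1 (by positivity)
      _ ≤ _ := mul_le_mul_of_nonneg_right q (by nlinarith)
  rw [e2]
  have : 0 ≤ T * W := by positivity
  linarith

end OneStep2

section Seq

set_option linter.unusedSectionVars false

/-- normalised martingale difference sequence -/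
structure SeqS {Ω : Type} [mΩ : MeasurableSpace Ω] (P : Measure Ω) (n : ℕ)
    (F : ℕ → MeasurableSpace Ω) (ξ : ℕ → Ω → ℝ) (ρ γ δ : ℝ) : Prop where
  mono : Monotone F
  le : ∀ i, F i ≤ mΩ
  hξ : ∀ i, i < n → StronglyMeasurable[F (i + 1)] (ξ i)
  x2 : ∀ i, i < n → Integrable (fun ω => ξ i ω ^ 2) P
  xp : ∀ i, i < n → Integrable (fun ω => |ξ i ω| ^ (2 + ρ)) P
  mean : ∀ i, i < n → P[ξ i|F i] =ᵐ[P] 0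
  p3 : ∀ i, i < n → ∀ᵐ ω ∂P, (P[fun ω => |ξ i ω| ^ (2 + ρ)|F i]) ω ≤
    γ ^ ρ * (P[fun ω => ξ i ω ^ 2|F i]) ω
  sumw : ∀ᵐ ω ∂P, |∑ i ∈ Finset.range n, (P[fun ω => ξ i ω ^ 2|F i]) ω - 1| ≤ δ ^ 2
  h0 : 0 < ρ
  h1 : ρ ≤ 1
  γ0 : 0 < γ
  δ0 : 0 ≤ δ

variable {Ω : Type} [mΩ : MeasurableSpace Ω] {P : Measure Ω} [IsProbabilityMeasure P] {n : ℕ}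
    {F : ℕ → MeasurableSpace Ω} {ξ : ℕ → Ω → ℝ} {ρ γ δ : ℝ}

lemma SeqS.w_le (h : SeqS P n F ξ ρ γ δ) {i : ℕ} (hi : i < n) :
    ∀ᵐ ω ∂P, (P[fun ω => ξ i ω ^ 2|F i]) ω ≤ γ ^ 2 :=
  be_w_le h.h0 h.γ0 (h.x2 i hi) (h.xp i hi) (h.p3 i hi) (h.le i)

lemma SeqS.w_nonneg (i : ℕ) : ∀ᵐ ω ∂P, 0 ≤ (P[fun ω => ξ i ω ^ 2|F i]) ω :=
  condExp_nonneg (Eventually.of_forall fun _ => sq_nonneg _)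

lemma SeqS.setup_zero (h : SeqS P n F ξ ρ γ δ) :
    BESetup P n F ξ (fun i => P[fun ω => ξ i ω ^ 2|F i]) ρ γ 0 δ 600000 where
  mono := h.mono
  le := h.le
  hU := h.hξ
  hw := fun i _ => stronglyMeasurable_condExp
  w_nonneg := fun i _ => SeqS.w_nonneg i
  w_le := fun i hi => h.w_le hi
  sum_w := h.sumw
  sq_int := h.x2
  p_int := h.xp
  h1 := h.mean
  h2 := fun i hi => Eventually.of_forall fun ω => by simp
  h3 := fun i hi => by
    filter_upwards [h.p3 i hi, SeqS.w_nonneg (P := P) (F := F) (ξ := ξ) i] with ω a b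
    have : 0 ≤ γ ^ ρ * (P[fun ω => ξ i ω ^ 2|F i]) ω :=
      mul_nonneg (Real.rpow_nonneg h.γ0.le _) b
    linarith
  ρ_pos := h.h0
  ρ_le := h.h1
  γ_pos := h.γ0
  ε_nonneg := le_rfl
  ε_le := zero_le_one
  δ_nonneg := h.δ0
  C_nonneg := by norm_num

lemma SeqS.W_eq (lam : ℝ) (i : ℕ) : P[fun ω => (lam * ξ i ω) ^ 2|F i] =ᵐ[P]
    fun ω => lam ^ 2 * (P[fun ω => ξ i ω ^ 2|F i]) ω := by
  simp only [mul_pow]; exact be_ce_const _ _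

lemma SeqS.oneS (h : SeqS P n F ξ ρ γ δ) {i : ℕ} (hi : i < n) {lam : ℝ} (hl : 0 < lam)
    (hlg : lam * γ ≤ 1) : OneS P (F i) (fun ω => lam * ξ i ω) ρ ((lam * γ) ^ ρ) := by
  have h0 := h.h0
  have hg := h.γ0
  have hW := SeqS.W_eq (P := P) (F := F) (ξ := ξ) lam i
  have hp : ∀ ω, |lam * ξ i ω| ^ (2 + ρ) = lam ^ (2 + ρ) * |ξ i ω| ^ (2 + ρ) := by
    intro ω; rw [abs_mul, abs_of_pos hl, Real.mul_rpow hl.le (abs_nonneg _)]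
  have ht : 0 < lam * γ := by positivity
  have hW2 : ∀ᵐ ω ∂P, (P[fun ω => (lam * ξ i ω) ^ 2|F i]) ω ≤ (lam * γ) ^ 2 := by
    filter_upwards [hW, h.w_le hi] with ω a b
    rw [a, mul_pow]; gcongr
  exact {
    hm := h.le i
    hy := ((h.hξ i hi).mono (h.le _)).measurable.const_mul lam
    h0 := h0
    h1 := h.h1
    T0 := by positivity
    y2 := by simp only [mul_pow]; exact (h.x2 i hi).const_mul _
    yp := by simp only [hp]; exact (h.xp i hi).const_mul _
    mean := by
      filter_upwards [be_ce_const (P := P) (m := F i) lam (ξ i), h.mean i hi] with ω a b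
      rw [a, b]; simp
    p3 := by
      simp only [hp]
      filter_upwards [be_ce_const (P := P) (m := F i) (lam ^ (2 + ρ)) (fun ω => |ξ i ω| ^ (2 + ρ)),
        hW, h.p3 i hi] with ω a b c
      rw [a, b, Real.mul_rpow hl.le hg.le, Real.rpow_add hl, Real.rpow_two]
      have := mul_le_mul_of_nonneg_left c (a := lam ^ 2 * lam ^ ρ) (by positivity)
      linarith
    WT := by
      filter_upwards [hW2] with ω a
      refine a.trans ?_
      rw [← Real.rpow_two]
      exact Real.rpow_le_rpow_of_exponent_ge ht hlg (by linarith [h.h1])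
    W1 := by
      filter_upwards [hW2] with ω a
      exact a.trans (pow_le_one₀ ht.le hlg) }

lemma be_osv_meas {y : Ω → ℝ} {i : ℕ} (hmono : Monotone F) (hy : StronglyMeasurable[F (i + 1)] y) :
    StronglyMeasurable[F (i + 1)] (osv (F i) P y) ∧
    StronglyMeasurable[F (i + 1)] (ose (F i) P y) := by
  have c : Continuous zt := by unfold zt; fun_prop
  have hz : StronglyMeasurable[F (i + 1)] fun ω => zt (y ω) := c.comp_stronglyMeasurable hy
  have he : StronglyMeasurable[F (i + 1)] fun ω => Real.exp (zt (y ω)) :=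
    Real.continuous_exp.comp_stronglyMeasurable hz
  have hle := hmono (Nat.le_succ i)
  refine ⟨?_, hz.sub (osb_meas.mono hle)⟩
  rw [show osv (F i) P y = fun ω => osr (F i) P y ω * Real.exp (zt (y ω)) from funext osv_eq]
  exact (osr_meas.mono hle).mul he

lemma SeqS.tilt (h : SeqS P n F ξ ρ γ δ) {lam : ℝ} (hl : 0 < lam) (hlg : lam * γ ≤ 1) :
    TiltS P n F (fun i => osv (F i) P (fun ω => lam * ξ i ω)) 4 where
  mono := h.mono
  le := h.le
  hv := fun i hi => (be_osv_meas h.mono ((h.hξ i hi).const_mul lam)).1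
  v_nonneg := fun i hi => (h.oneS hi hl hlg).v0
  v_le := fun i hi => (h.oneS hi hl hlg).v4
  v_one := fun i hi => (h.oneS hi hl hlg).vone
  C_one := by norm_num

lemma SeqS.setup_pos (h : SeqS P n F ξ ρ γ δ) {lam : ℝ} (hl : 0 < lam) (hlg : lam * γ ≤ 1)
    (hε : 2000 * (lam * γ) ^ ρ ≤ 1) :
    BESetup (beQ P (fun i => osv (F i) P (fun ω => lam * ξ i ω)) n) n F
      (fun i ω => ose (F i) P (fun ω => lam * ξ i ω) ω / lam)
      (fun i => P[fun ω => ξ i ω ^ 2|F i]) ρ γ (2000 * (lam * γ) ^ ρ) δ 600000 := by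
  have ht := h.tilt hl hlg
  set v : ℕ → Ω → ℝ := fun i => osv (F i) P (fun ω => lam * ξ i ω) with hv
  set η : ℕ → Ω → ℝ := fun i => ose (F i) P (fun ω => lam * ξ i ω) with hη
  set Q := beQ P v n with hQ
  have hac : Q ≪ P := beQ_ac
  have hprob : IsProbabilityMeasure Q := ht.prob
  have hg := h.γ0
  have hηm : ∀ i, i < n → StronglyMeasurable[F (i + 1)] (η i) := fun i hi =>
    (be_osv_meas h.mono ((h.hξ i hi).const_mul lam)).2
  have e2 : ∀ i ω, (η i ω / lam) ^ 2 = (lam ^ 2)⁻¹ * η i ω ^ 2 := by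
    intro i ω; rw [div_pow, div_eq_inv_mul]
  have ep : ∀ i ω, |η i ω / lam| ^ (2 + ρ) = (lam ^ (2 + ρ))⁻¹ * |η i ω| ^ (2 + ρ) := by
    intro i ω; rw [abs_div, abs_of_pos hl, Real.div_rpow (abs_nonneg _) hl.le, div_eq_inv_mul]
  have hm2 : ∀ i, i < n → StronglyMeasurable[F (i + 1)] (fun ω => η i ω ^ 2) := fun i hi =>
    (hηm i hi).pow 2
  have hmp : ∀ i, i < n → StronglyMeasurable[F (i + 1)] (fun ω => |η i ω| ^ (2 + ρ)) :=
    fun i hi => (continuous_abs.rpow_const fun _ => Or.inr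
      (by linarith [h.h0])).comp_stronglyMeasurable (hηm i hi)
  exact {
    mono := h.mono
    le := h.le
    hU := fun i hi => by
      have := (hηm i hi).const_mul lam⁻¹
      simpa only [div_eq_inv_mul] using this
    hw := fun i _ => stronglyMeasurable_condExp
    w_nonneg := fun i _ => hac.ae_le (SeqS.w_nonneg i)
    w_le := fun i hi => hac.ae_le (h.w_le hi)
    sum_w := hac.ae_le h.sumw
    sq_int := fun i hi => by
      change Integrable (fun ω => (η i ω / lam) ^ 2) Q
      simp only [e2]
      exact (ht.integrable_of hi (h.oneS hi hl hlg).c2.1).const_mul _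
    p_int := fun i hi => by
      change Integrable (fun ω => |η i ω / lam| ^ (2 + ρ)) Q
      simp only [ep]
      exact (ht.integrable_of hi (h.oneS hi hl hlg).c3.1).const_mul _
    h1 := fun i hi => by
      obtain ⟨c, d⟩ := (h.oneS hi hl hlg).c1
      simp only [div_eq_inv_mul]
      filter_upwards [be_ce_const (P := Q) (m := F i) lam⁻¹ (η i), ht.bayes hi (hηm i hi) c,
        hac.ae_le d] with ω a1 a2 a3
      rw [a1, a2, a3]; simp
    h2 := fun i hi => by
      obtain ⟨c, d⟩ := (h.oneS hi hl hlg).c2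
      change ∀ᵐ ω ∂Q, |(Q[fun ω => (η i ω / lam) ^ 2|F i]) ω - _| ≤ _
      simp only [e2]
      filter_upwards [be_ce_const (P := Q) (m := F i) (lam ^ 2)⁻¹ (fun ω => η i ω ^ 2),
        ht.bayes hi (hm2 i hi) c, hac.ae_le d,
        hac.ae_le (SeqS.W_eq (P := P) (F := F) (ξ := ξ) lam i)] with ω a1 a2 a3 a4
      rw [a1, a2]
      rw [a4] at a3
      have hl2 : 0 < lam ^ 2 := by positivity
      rw [inv_mul_eq_div, div_sub' hl2.ne', abs_div, abs_of_pos hl2, div_le_iff₀ hl2]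
      refine a3.trans (le_of_eq ?_)
      ring
    h3 := fun i hi => by
      obtain ⟨c, d⟩ := (h.oneS hi hl hlg).c3
      change ∀ᵐ ω ∂Q, (Q[fun ω => |η i ω / lam| ^ (2 + ρ)|F i]) ω ≤ _
      simp only [ep]
      filter_upwards [be_ce_const (P := Q) (m := F i) (lam ^ (2 + ρ))⁻¹
          (fun ω => |η i ω| ^ (2 + ρ)),
        ht.bayes hi (hmp i hi) c, hac.ae_le d,
        hac.ae_le (SeqS.W_eq (P := P) (F := F) (ξ := ξ) lam i)] with ω a1 a2 a3 a4
      rw [a1, a2]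
      rw [a4] at a3
      have hl2 : 0 < lam ^ (2 + ρ) := by positivity
      rw [inv_mul_eq_div, div_le_iff₀ hl2]
      refine a3.trans (le_of_eq ?_)
      rw [Real.mul_rpow hl.le hg.le, Real.rpow_add hl, Real.rpow_two]; ring
    ρ_pos := h.h0
    ρ_le := h.h1
    γ_pos := h.γ0
    ε_nonneg := by positivity
    ε_le := hε
    δ_nonneg := h.δ0
    C_nonneg := by norm_num }

end Seq

section Glue

set_option linter.unusedSectionVars false

variable {Ω : Type} [mΩ : MeasurableSpace Ω] {P : Measure Ω} [IsProbabilityMeasure P]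

lemma be_Icc_sum (n : ℕ) (f : ℕ → ℝ) :
    ∑ i ∈ Finset.Icc 1 n, f i = ∑ i ∈ Finset.range n, f (i + 1) := by
  rw [Finset.range_eq_Ico, Finset.sum_Ico_add' f 0 n 1]
  rfl

lemma be_Icc_prod (n : ℕ) (f : ℕ → ℝ) :
    ∏ i ∈ Finset.Icc 1 n, f i = ∏ i ∈ Finset.range n, f (i + 1) := by
  rw [Finset.range_eq_Ico, Finset.prod_Ico_add' f 0 n 1]
  rfl

lemma MDS.Bsq_pos (A : MDS Ω P) : 0 < A.Bsq := by
  refine Finset.sum_pos (fun i hi => ?_) ⟨1, Finset.mem_Icc.2 ⟨le_rfl, A.npos⟩⟩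
  obtain ⟨a, b⟩ := Finset.mem_Icc.1 hi
  exact A.var_pos i a b

lemma MDS.seqS (A : MDS Ω P) {ρ γ δ : ℝ} (h0 : 0 < ρ) (h1 : ρ ≤ 1) (hA1 : A.CondA1 δ)
    (hA4 : A.CondA4 ρ γ) : SeqS P A.n A.F (fun i => A.xi (i + 1)) ρ γ δ := by
  obtain ⟨d0, -, hd⟩ := hA1
  obtain ⟨g0, -, gi, hg⟩ := hA4
  have hB := A.Bsq_pos
  set B := Real.sqrt A.Bsq with hBdef
  have hB0 : 0 < B := Real.sqrt_pos.2 hB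
  have hBB : B ^ 2 = A.Bsq := Real.sq_sqrt hB.le
  have e1 : ∀ i ω, A.xi i ω = B⁻¹ * A.X i ω := by
    intro i ω; rw [MDS.xi, div_eq_inv_mul]
  have e2 : ∀ i ω, A.xi i ω ^ 2 = (B ^ 2)⁻¹ * A.X i ω ^ 2 := by
    intro i ω; rw [e1, mul_pow, inv_pow]
  have ep : ∀ i ω, |A.xi i ω| ^ (2 + ρ) = (B ^ (2 + ρ))⁻¹ * |A.X i ω| ^ (2 + ρ) := by
    intro i ω
    rw [e1, abs_mul, abs_of_pos (inv_pos.2 hB0), Real.mul_rpow (by positivity) (abs_nonneg _),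
      Real.inv_rpow hB0.le]
  have hW : ∀ i, P[fun ω => A.xi (i + 1) ω ^ 2|A.F i] =ᵐ[P]
      fun ω => (B ^ 2)⁻¹ * (P[fun ω => A.X (i + 1) ω ^ 2|A.F i]) ω := by
    intro i; simp only [e2]; exact be_ce_const _ _
  have hF : ∀ i, A.F (i + 1 - 1) = A.F i := fun i => by rw [Nat.add_sub_cancel]
  exact {
    mono := A.F_mono
    le := A.F_le
    hξ := fun i hi => by
      have := (A.meas (i + 1) (by omega) (by omega)).const_mul B⁻¹
      simpa only [← e1] using this
    x2 := fun i hi => by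
      simp only [e2]; exact (A.sq_int (i + 1) (by omega) (by omega)).const_mul _
    xp := fun i hi => by
      simp only [ep]; exact (gi (i + 1) (by omega) (by omega)).const_mul _
    mean := fun i hi => by
      have := A.mean_zero (i + 1) (by omega) (by omega)
      rw [hF] at this
      have e : A.xi (i + 1) = fun ω => B⁻¹ * A.X (i + 1) ω := funext (e1 _)
      simp only [e]
      filter_upwards [be_ce_const (P := P) (m := A.F i) B⁻¹ (A.X (i + 1)), this] with ω a b
      rw [a, b]; simp
    p3 := fun i hi => by
      have := hg (i + 1) (by omega) (by omega)
      rw [hF] at this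
      simp only [ep]
      filter_upwards [be_ce_const (P := P) (m := A.F i) (B ^ (2 + ρ))⁻¹
        (fun ω => |A.X (i + 1) ω| ^ (2 + ρ)), hW i, this] with ω a b c
      rw [a, b, inv_mul_le_iff₀ (by positivity)]
      refine c.trans (le_of_eq ?_)
      rw [Real.mul_rpow g0.le hB0.le, Real.rpow_add hB0, Real.rpow_two]
      field_simp
    sumw := by
      filter_upwards [hd, ae_all_iff.2 hW] with ω a b
      have e : ∑ i ∈ Finset.range A.n, (P[fun ω => A.xi (i + 1) ω ^ 2|A.F i]) ω =
          (B ^ 2)⁻¹ * A.CV ω := by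
        rw [MDS.CV, be_Icc_sum, Finset.mul_sum]
        refine Finset.sum_congr rfl fun i _ => ?_
        rw [b i, hF]
      rw [e, hBB, inv_mul_eq_div, div_sub_one hB.ne', abs_div, abs_of_pos hB, div_le_iff₀ hB]
      exact a
    h0 := h0
    h1 := h1
    γ0 := g0
    δ0 := d0 }

lemma MDS.zeta_eq (A : MDS Ω P) (lam : ℝ) (i : ℕ) (ω : Ω) :
    A.zetaFn lam i ω = zt (lam * A.xi i ω) := by
  rw [MDS.zetaFn, zt]; ring

lemma MDS.Pconj_eq (A : MDS Ω P) (lam : ℝ) :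
    A.Pconj lam = beQ P (fun i => osv (A.F i) P (fun ω => lam * A.xi (i + 1) ω)) A.n := by
  rw [MDS.Pconj, beQ]
  congr 1; funext ω; congr 1
  rw [MDS.Zmult, be_Icc_prod]
  simp only [MDS.zeta_eq, Nat.add_sub_cancel, osv, osM]

lemma MDS.Ynorm_eq (A : MDS Ω P) {lam : ℝ} (hl : 0 < lam) (ω : Ω) :
    A.Ynorm lam ω = beS (fun i ω => ose (A.F i) P (fun ω => lam * A.xi (i + 1) ω) ω / lam) A.n ω := by
  rw [MDS.Ynorm, if_neg hl.ne', be_Icc_sum, beS, Finset.sum_div]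
  simp only [MDS.bCoef, MDS.zeta_eq, Nat.add_sub_cancel, ose, osb, osM]

lemma MDS.Ynorm_zero (A : MDS Ω P) (ω : Ω) :
    A.Ynorm 0 ω = beS (fun i => A.xi (i + 1)) A.n ω := by
  rw [MDS.Ynorm, if_pos rfl, be_Icc_sum, beS]

lemma MDS.Pconj_zero (A : MDS Ω P) : A.Pconj 0 = P := by
  have : A.Zmult 0 = fun _ => 1 := by
    funext ω
    rw [MDS.Zmult]
    refine Finset.prod_eq_one fun i _ => ?_
    have : ∀ ω, A.zetaFn 0 i ω = 0 := fun ω => by rw [MDS.zetaFn]; ring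
    simp only [this, Real.exp_zero, condExp_const (A.F_le _), div_one]
  rw [MDS.Pconj, this]
  simp only [ENNReal.ofReal_one]
  exact withDensity_one

lemma be_final {ρ K g : ℝ} (h0 : 0 < ρ) (h1 : ρ ≤ 1) (hK : 0 < K) (A : MDS Ω P) {γ δ lam : ℝ}
    (H : ∀ {Q : Measure Ω} [IsProbabilityMeasure Q] {U w : ℕ → Ω → ℝ} {ε : ℝ},
      BESetup Q A.n A.F U w ρ γ ε δ 600000 →
      ∀ x, |Q.real {ω | beS U A.n ω ≤ x} - stdNormalCDF x| ≤ K * (g + ε + δ))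
    (hg : 0 ≤ g) (hA1 : A.CondA1 δ) (hA4 : A.CondA4 ρ γ) (hl : 0 ≤ lam) (hlg : lam * γ ≤ 1)
    (x : ℝ) :
    |(A.Pconj lam {ω | A.Ynorm lam ω ≤ x}).toReal - stdNormalCDF x| ≤
      2000 * (K + 1) * ((lam * γ) ^ ρ + g + δ) := by
  have hs := A.seqS h0 h1 hA1 hA4
  have hδ := hs.δ0
  have hγ := hs.γ0
  have hT : 0 ≤ (lam * γ) ^ ρ := by positivity
  have hKg : 0 ≤ K * g := by positivity
  have hKd : 0 ≤ K * δ := by positivity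
  have hKT : 0 ≤ K * (lam * γ) ^ ρ := by positivity
  change |(A.Pconj lam).real {ω | A.Ynorm lam ω ≤ x} - stdNormalCDF x| ≤ _
  rcases hl.eq_or_lt with hl | hl
  · subst hl
    rw [A.Pconj_zero]
    simp only [A.Ynorm_zero]
    refine (H hs.setup_zero x).trans ?_
    nlinarith
  · rw [A.Pconj_eq]
    have hp := (hs.tilt hl hlg).prob
    by_cases hε : 2000 * (lam * γ) ^ ρ ≤ 1
    · simp only [A.Ynorm_eq hl]
      refine (H (hs.setup_pos hl hlg hε) x).trans ?_
      nlinarith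
    · refine (be_dist_le_one _ x).trans ?_
      nlinarith

end Glue

/-- Proposition 3.1: Berry–Esseen bounds for the conjugate martingale
`Y_n(λ)/λ` under the conjugate measure `P_λ`, assuming (A1) and (A4);
part [i] is the case `ρ ∈ (0,1)` and part [ii] the case `ρ = 1`. -/
theorem berry_esseen_conjugate_martingale :
    (∀ ρ : ℝ, 0 < ρ → ρ < 1 →
      ∃ c : ℝ, 0 < c ∧
        ∀ (Ω : Type) [MeasurableSpace Ω] (P : Measure Ω), IsProbabilityMeasure P →
          ∀ (A : ℕ → MDS Ω P) (δ γ lam : ℕ → ℝ),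
            (∀ n, (A n).CondA1 (δ n)) →
            (∀ n, (A n).CondA4 ρ (γ n)) →
            (∀ n, 0 ≤ lam n) →
            Tendsto (fun n => lam n * γ n) atTop (nhds 0) →
            ∀ᶠ n in atTop, ∀ x : ℝ,
              |((A n).Pconj (lam n) {ω | (A n).Ynorm (lam n) ω ≤ x}).toReal -
                  stdNormalCDF x| ≤
                c * (lam n ^ ρ * γ n ^ ρ + γ n ^ ρ + δ n)) ∧
    (∃ c : ℝ, 0 < c ∧
        ∀ (Ω : Type) [MeasurableSpace Ω] (P : Measure Ω), IsProbabilityMeasure P →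
          ∀ (A : ℕ → MDS Ω P) (δ γ lam : ℕ → ℝ),
            (∀ n, (A n).CondA1 (δ n)) →
            (∀ n, (A n).CondA4 1 (γ n)) →
            (∀ n, 0 ≤ lam n) →
            Tendsto (fun n => lam n * γ n) atTop (nhds 0) →
            ∀ᶠ n in atTop, ∀ x : ℝ,
              |((A n).Pconj (lam n) {ω | (A n).Ynorm (lam n) ω ≤ x}).toReal -
                  stdNormalCDF x| ≤
                c * (lam n * γ n + γ n * |Real.log (γ n)| + δ n)) := by
  have ev : ∀ {γ lam : ℕ → ℝ}, Tendsto (fun n => lam n * γ n) atTop (nhds 0) →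
      ∀ᶠ n in atTop, lam n * γ n ≤ 1 := fun h => h.eventually (Iic_mem_nhds zero_lt_one)
  constructor
  · intro ρ h0 h1
    obtain ⟨K, hK, H⟩ := be_core_lt (C₀ := 600000) h0 h1 (by norm_num)
    refine ⟨2000 * (K + 1), by positivity, ?_⟩
    intro Ω _ P hP A δ γ lam hA1 hA4 hl ht
    filter_upwards [ev ht] with n hn x
    have hγ := (hA4 n).1
    have := be_final (g := γ n ^ ρ) h0 h1.le hK (A n) (fun hS => H (hA4 n).2.1 hS)
      (Real.rpow_nonneg hγ.le _) (hA1 n) (hA4 n) (hl n) hn x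
    rwa [Real.mul_rpow (hl n) hγ.le] at this
  · obtain ⟨K, hK, H⟩ := be_core_one (C₀ := 600000) (by norm_num)
    refine ⟨2000 * (K + 1), by positivity, ?_⟩
    intro Ω _ P hP A δ γ lam hA1 hA4 hl ht
    filter_upwards [ev ht] with n hn x
    have hγ := (hA4 n).1
    have := be_final (g := γ n * |Real.log (γ n)|) one_pos le_rfl hK (A n)
      (fun hS => H (hA4 n).2.1 hS) (by positivity) (hA1 n) (hA4 n) (hl n) hn x
    rwa [Real.rpow_one] at this
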